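/- For every δ with 0 < δ < 1/8 there exists n₀ such that for every integer n ≥ n₀ there exists a simple graph G on n vertices which is triangle-free (contains no clique of size 3) and whose independence number satisfies α(G) < (1+δ)·√((3/2)·n·log n). -/

import Mathlib

section BinomialSubset

open Finset

variable {E : Type*} [Fintype E] [DecidableEq E]

/-- The probability of the outcome `S` for a random subset of `E` that contains every element
independently with probability `p`. -/
noncomputable def bernWeight (p : ℝ) (S : Finset E) : ℝ := ∏ e, if e ∈ S then p else 1 - p

/-- The expectation of `f` over the `p`-random subset of `E`. -/
noncomputable def bernExp (p : ℝ) (f : Finset E → ℝ) : ℝ := ∑ S, bernWeight p S * f S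

open Classical in
/-- The probability of the event `P` for the `p`-random subset of `E`. -/
noncomputable def bernProb (p : ℝ) (P : Finset E → Prop) : ℝ :=
  bernExp p fun S => if P S then 1 else 0

theorem sum_prod_mem_ite (x y : E → ℝ) :
    ∑ S : Finset E, ∏ e, (if e ∈ S then x e else y e) = ∏ e, (x e + y e) := by
  rw [Finset.prod_add, ← Finset.powerset_univ]
  refine Finset.sum_congr rfl fun S _ => ?_
  rw [Finset.prod_ite]
  congr 1
  · congr 1; ext; simp
  · congr 1; ext; simp

theorem bernExp_prod (p : ℝ) (x y : E → ℝ) :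
    bernExp p (fun S => ∏ e, if e ∈ S then x e else y e) = ∏ e, (p * x e + (1 - p) * y e) := by
  rw [← sum_prod_mem_ite]
  refine Finset.sum_congr rfl fun S _ => ?_
  rw [bernWeight, ← Finset.prod_mul_distrib]
  refine Finset.prod_congr rfl fun e _ => ?_
  split_ifs <;> rfl

theorem bernWeight_nonneg {p : ℝ} (hp : 0 ≤ p) (hp1 : p ≤ 1) (S : Finset E) :
    0 ≤ bernWeight p S :=
  Finset.prod_nonneg fun e _ => by split_ifs <;> linarith

theorem bernExp_mono {p : ℝ} (hp : 0 ≤ p) (hp1 : p ≤ 1) {f g : Finset E → ℝ}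
    (h : ∀ S, f S ≤ g S) : bernExp p f ≤ bernExp p g :=
  Finset.sum_le_sum fun S _ => mul_le_mul_of_nonneg_left (h S) (bernWeight_nonneg hp hp1 S)

theorem bernExp_const (p c : ℝ) : bernExp p (fun _ : Finset E => c) = c := by
  have h := bernExp_prod (E := E) p (fun _ => 1) (fun _ => 1)
  simp only [ite_self, Finset.prod_const_one, mul_one, add_sub_cancel] at h
  rw [bernExp] at h ⊢
  rw [← Finset.sum_mul, show ∑ S : Finset E, bernWeight p S = 1 by simpa using h, one_mul]

theorem bernExp_nonneg {p : ℝ} (hp : 0 ≤ p) (hp1 : p ≤ 1) {f : Finset E → ℝ}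
    (h : ∀ S, 0 ≤ f S) : 0 ≤ bernExp p f :=
  Finset.sum_nonneg fun S _ => mul_nonneg (bernWeight_nonneg hp hp1 S) (h S)

theorem bernExp_add (p : ℝ) (f g : Finset E → ℝ) :
    bernExp p (fun S => f S + g S) = bernExp p f + bernExp p g := by
  simp [bernExp, mul_add, Finset.sum_add_distrib]

theorem bernExp_const_mul (p c : ℝ) (f : Finset E → ℝ) :
    bernExp p (fun S => c * f S) = c * bernExp p f := by
  simp only [bernExp, Finset.mul_sum]
  exact Finset.sum_congr rfl fun S _ => by ring

theorem bernExp_mul_const (p c : ℝ) (f : Finset E → ℝ) :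
    bernExp p (fun S => f S * c) = bernExp p f * c := by
  simp only [mul_comm _ c, bernExp_const_mul]

theorem bernExp_sum {ι : Type*} (p : ℝ) (s : Finset ι) (f : ι → Finset E → ℝ) :
    bernExp p (fun S => ∑ i ∈ s, f i S) = ∑ i ∈ s, bernExp p (f i) := by
  simp only [bernExp, Finset.mul_sum]
  exact Finset.sum_comm

theorem bernExp_subset_mul_pow (p c : ℝ) {T O : Finset E} (h : Disjoint T O) :
    bernExp p (fun S => (if T ⊆ S then 1 else 0) * c ^ (#(S ∩ O))) =
      p ^ #T * (1 - p + p * c) ^ #O := by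
  have key := bernExp_prod (E := E) p (fun e => if e ∈ O then c else 1)
    (fun e => if e ∈ T then 0 else 1)
  have h1 : ∀ S : Finset E, (∏ e, if e ∈ S then (if e ∈ O then c else 1)
      else (if e ∈ T then (0 : ℝ) else 1)) = (if T ⊆ S then 1 else 0) * c ^ (#(S ∩ O)) := by
    intro S
    have : ∀ e, (if e ∈ S then (if e ∈ O then c else 1) else (if e ∈ T then (0 : ℝ) else 1)) =
        (if e ∈ T → e ∈ S then 1 else 0) * (if e ∈ S ∩ O then c else 1) := by
      intro e
      by_cases h1 : e ∈ S <;> by_cases h2 : e ∈ T <;> by_cases h3 : e ∈ O <;> simp [h1, h2, h3]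
    rw [Finset.prod_congr rfl fun e _ => this e, Finset.prod_mul_distrib, Finset.prod_ite_mem,
      Finset.univ_inter, Finset.prod_const]
    congr 1
    rw [Finset.prod_ite_zero]
    simp [Finset.subset_iff]
  simp only [h1] at key
  rw [key]
  have h2 : ∀ e, p * (if e ∈ O then c else 1) + (1 - p) * (if e ∈ T then 0 else 1) =
      (if e ∈ T then p else 1) * (if e ∈ O then 1 - p + p * c else 1) := by
    intro e
    by_cases h2 : e ∈ T
    · have h3 : e ∉ O := Finset.disjoint_left.1 h h2
      simp [h2, h3]
    · by_cases h3 : e ∈ O <;> simp [h2, h3]; ring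
  rw [Finset.prod_congr rfl fun e _ => h2 e, Finset.prod_mul_distrib, Finset.prod_ite_mem,
    Finset.prod_ite_mem, Finset.univ_inter, Finset.univ_inter, Finset.prod_const, Finset.prod_const]

theorem bernExp_mul_of_disjoint (p : ℝ) (T : Finset E) {f g : Finset E → ℝ}
    (hf : ∀ S, f S = f (S ∩ T)) (hg : ∀ S, g S = g (S \ T)) :
    bernExp p (fun S => f S * g S) = bernExp p f * bernExp p g := by
  set w : Finset E → Finset E → ℝ := fun U S => ∏ e ∈ U, if e ∈ S then p else 1 - p with hw
  have hbw : ∀ S : Finset E, bernWeight p S = w T (S ∩ T) * w Tᶜ (S \ T) := by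
    intro S
    rw [bernWeight, ← Finset.prod_mul_prod_compl T]
    congr 1
    · exact Finset.prod_congr rfl fun e he => by simp [he]
    · exact Finset.prod_congr rfl fun e he => by simp [Finset.mem_compl.1 he]
  have hsum : ∀ F : Finset E → Finset E → ℝ,
      ∑ S : Finset E, F (S ∩ T) (S \ T) = ∑ A ∈ T.powerset, ∑ B ∈ Tᶜ.powerset, F A B := by
    intro F
    rw [← Finset.sum_product']
    refine Finset.sum_bij' (fun S _ => (S ∩ T, S \ T)) (fun q _ => q.1 ∪ q.2) ?_ ?_ ?_ ?_ ?_
    · intro S _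
      simp only [Finset.mem_product, Finset.mem_powerset]
      exact ⟨Finset.inter_subset_right, fun e he => by simp at he ⊢; exact he.2⟩
    · simp
    · intro S _; ext e; simp only [Finset.mem_union, Finset.mem_inter, Finset.mem_sdiff]; tauto
    · rintro ⟨A, B⟩ hq
      simp only [Finset.mem_product, Finset.mem_powerset] at hq
      obtain ⟨hA, hB⟩ := hq
      have hB' : ∀ e ∈ B, e ∉ T := fun e he => Finset.mem_compl.1 (hB he)
      ext e
      · simp only [Finset.mem_inter, Finset.mem_union]
        constructor
        · rintro ⟨h | h, h'⟩
          · exact h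
          · exact absurd h' (hB' e h)
        · exact fun h => ⟨Or.inl h, hA h⟩
      · simp only [Finset.mem_sdiff, Finset.mem_union]
        constructor
        · rintro ⟨h | h, h'⟩
          · exact absurd (hA h) h'
          · exact h
        · exact fun h => ⟨Or.inr h, hB' e h⟩
    · intro S _; rfl
  have e1 : ∀ F G : Finset E → ℝ, (∀ S, F S = F (S ∩ T)) → (∀ S, G S = G (S \ T)) →
      bernExp p (fun S => F S * G S) =
        (∑ A ∈ T.powerset, w T A * F A) * ∑ B ∈ Tᶜ.powerset, w Tᶜ B * G B := by
    intro F G hF hG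
    rw [Finset.sum_mul_sum, ← hsum fun A B => w T A * F A * (w Tᶜ B * G B)]
    refine Finset.sum_congr rfl fun S _ => ?_
    have h1 := hF S
    have h2 := hG S
    simp only [hbw, h1, h2]; ring
  have a1 := e1 f g hf hg
  have a2 := e1 f (fun _ => 1) hf (fun _ => rfl)
  have a3 := e1 (fun _ => 1) g (fun _ => rfl) hg
  have a4 := e1 (fun _ => 1) (fun _ => 1) (fun _ => rfl) (fun _ => rfl)
  simp only [mul_one, one_mul, bernExp_const] at a1 a2 a3 a4
  rw [a1, a2, a3, mul_mul_mul_comm, mul_comm _ (∑ B ∈ Tᶜ.powerset, w Tᶜ B * g B),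
    mul_comm (∑ A ∈ T.powerset, w T A * f A), mul_mul_mul_comm, mul_comm (∑ A ∈ T.powerset, w T A)]
  linear_combination (∑ A ∈ T.powerset, w T A * f A) * (∑ B ∈ Tᶜ.powerset, w Tᶜ B * g B) * a4

theorem bernProb_nonneg {p : ℝ} (hp : 0 ≤ p) (hp1 : p ≤ 1) (P : Finset E → Prop) :
    0 ≤ bernProb p P :=
  bernExp_nonneg hp hp1 fun S => by split_ifs <;> norm_num

theorem bernProb_le_bernExp {p : ℝ} (hp : 0 ≤ p) (hp1 : p ≤ 1) {P : Finset E → Prop}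
    {f : Finset E → ℝ} (hf : ∀ S, 0 ≤ f S) (h : ∀ S, P S → 1 ≤ f S) :
    bernProb p P ≤ bernExp p f :=
  bernExp_mono hp hp1 fun S => by
    split_ifs with hS
    · exact h S hS
    · exact hf S

theorem bernProb_exists_le {p : ℝ} (hp : 0 ≤ p) (hp1 : p ≤ 1) {ι : Type*} (s : Finset ι)
    (P : ι → Finset E → Prop) :
    bernProb p (fun S => ∃ i ∈ s, P i S) ≤ ∑ i ∈ s, bernProb p (P i) := by
  classical
  simp only [bernProb, ← bernExp_sum]
  refine bernExp_mono hp hp1 fun S => ?_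
  split_ifs with hS
  · obtain ⟨i, hi, hP⟩ := hS
    refine le_trans ?_ (Finset.single_le_sum (f := fun i => if P i S then (1 : ℝ) else 0)
      (fun j _ => by split_ifs <;> norm_num) hi)
    simp [hP]
  · exact Finset.sum_nonneg fun j _ => by split_ifs <;> norm_num

theorem bernProb_mono {p : ℝ} (hp : 0 ≤ p) (hp1 : p ≤ 1) {P Q : Finset E → Prop}
    (h : ∀ S, P S → Q S) : bernProb p P ≤ bernProb p Q := by
  classical
  exact bernExp_mono hp hp1 fun S => by
    by_cases hP : P S
    · simp [hP, h S hP]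
    · simp only [hP, if_false]; split_ifs <;> norm_num

theorem bernProb_subset (p : ℝ) (T : Finset E) : bernProb p (fun S => T ⊆ S) = p ^ #T := by
  have h := bernExp_subset_mul_pow (E := E) p 1 (Finset.disjoint_empty_right T)
  simp only [one_pow, mul_one, Finset.card_empty, pow_zero] at h
  rw [← h, bernProb]
  exact congrArg _ (funext fun S => by congr)

/-- Upper tail of the number of elements of `O` in the random set. -/
theorem bernProb_le_card_inter {p : ℝ} (hp : 0 ≤ p) (hp1 : p ≤ 1) {l : ℝ} (hl : 0 ≤ l)
    (O : Finset E) (d : ℝ) :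
    bernProb p (fun S => d ≤ (#(S ∩ O) : ℝ)) ≤
      Real.exp (-(l * d) + p * (Real.exp l - 1) * #O) := by
  have h := bernExp_subset_mul_pow (E := E) p (Real.exp l) (Finset.disjoint_empty_left O)
  simp only [Finset.empty_subset, if_true, one_mul, Finset.card_empty, pow_zero] at h
  calc bernProb p (fun S => d ≤ (#(S ∩ O) : ℝ))
      ≤ bernExp p (fun S => Real.exp (-(l * d)) * Real.exp l ^ #(S ∩ O)) := by
        refine bernProb_le_bernExp hp hp1 (fun S => by positivity) fun S hS => ?_
        rw [← Real.exp_nat_mul, ← Real.exp_add]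
        refine Real.one_le_exp ?_
        nlinarith [mul_le_mul_of_nonneg_left hS hl]
    _ = Real.exp (-(l * d)) * (1 - p + p * Real.exp l) ^ #O := by
        rw [bernExp_const_mul, h]
    _ ≤ Real.exp (-(l * d)) * Real.exp (p * (Real.exp l - 1)) ^ #O := by
        have h1 : 0 ≤ 1 - p + p * Real.exp l := by
          have := mul_nonneg hp (Real.exp_pos l).le
          linarith
        gcongr
        have := Real.add_one_le_exp (p * (Real.exp l - 1))
        linarith
    _ = _ := by
        rw [← Real.exp_nat_mul, ← Real.exp_add]; congr 1; ring

/-- Lower tail of the number of elements of `O` in the random set, jointly with the event that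
the random set contains a set `T` disjoint from `O`. -/
theorem bernProb_subset_and_card_inter_le {p : ℝ} (hp : 0 ≤ p) (hp1 : p ≤ 1) {l : ℝ} (hl : 0 ≤ l)
    {T O : Finset E} (hTO : Disjoint T O) (j : ℝ) :
    bernProb p (fun S => T ⊆ S ∧ (#(S ∩ O) : ℝ) ≤ j) ≤
      p ^ #T * Real.exp (l * j - p * (1 - Real.exp (-l)) * #O) := by
  have h := bernExp_subset_mul_pow (E := E) p (Real.exp (-l)) hTO
  calc bernProb p (fun S => T ⊆ S ∧ (#(S ∩ O) : ℝ) ≤ j)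
      ≤ bernExp p (fun S => Real.exp (l * j) *
          ((if T ⊆ S then 1 else 0) * Real.exp (-l) ^ #(S ∩ O))) := by
        refine bernProb_le_bernExp hp hp1 (fun S => by split_ifs <;> positivity) fun S hS => ?_
        rw [if_pos hS.1, one_mul, ← Real.exp_nat_mul, ← Real.exp_add]
        refine Real.one_le_exp ?_
        nlinarith [mul_le_mul_of_nonneg_left hS.2 hl]
    _ = Real.exp (l * j) * (p ^ #T * (1 - p + p * Real.exp (-l)) ^ #O) := by
        rw [bernExp_const_mul, h]
    _ ≤ Real.exp (l * j) * (p ^ #T * Real.exp (-(p * (1 - Real.exp (-l)))) ^ #O) := by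
        have h1 : 0 ≤ 1 - p + p * Real.exp (-l) := by
          have := mul_nonneg hp (Real.exp_pos (-l)).le
          linarith
        gcongr
        have := Real.add_one_le_exp (-(p * (1 - Real.exp (-l))))
        linarith
    _ = _ := by
        rw [← Real.exp_nat_mul, mul_left_comm, ← Real.exp_add]; congr 2; ring

end BinomialSubset

section PairProb

open Finset

variable {E : Type*} [Fintype E] [DecidableEq E]

/-- The probability of the event `P` for two independent `p`-random subsets of `E`. -/
noncomputable def pairProb (p : ℝ) (P : Finset E → Finset E → Prop) : ℝ :=
  bernExp p fun S => bernProb p fun S' => P S S'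

theorem pairProb_mono {p : ℝ} (hp : 0 ≤ p) (hp1 : p ≤ 1) {P Q : Finset E → Finset E → Prop}
    (h : ∀ S S', P S S' → Q S S') : pairProb p P ≤ pairProb p Q :=
  bernExp_mono hp hp1 fun S => bernProb_mono hp hp1 (h S)

theorem pairProb_swap (p : ℝ) (P : Finset E → Finset E → Prop) :
    pairProb p (fun S S' => P S' S) = pairProb p P := by
  simp only [pairProb, bernProb, bernExp, Finset.mul_sum]
  rw [Finset.sum_comm]
  exact Finset.sum_congr rfl fun S _ => Finset.sum_congr rfl fun S' _ => by ring

theorem pairProb_exists_le {p : ℝ} (hp : 0 ≤ p) (hp1 : p ≤ 1) {ι : Type*} (s : Finset ι)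
    (P : ι → Finset E → Finset E → Prop) :
    pairProb p (fun S S' => ∃ i ∈ s, P i S S') ≤ ∑ i ∈ s, pairProb p (P i) := by
  simp only [pairProb]
  rw [← bernExp_sum]
  exact bernExp_mono hp hp1 fun S => bernProb_exists_le hp hp1 s fun i S' => P i S S'

theorem bernProb_or_le {p : ℝ} (hp : 0 ≤ p) (hp1 : p ≤ 1) (P Q : Finset E → Prop) :
    bernProb p (fun S => P S ∨ Q S) ≤ bernProb p P + bernProb p Q := by
  simp only [bernProb, ← bernExp_add]
  refine bernExp_mono hp hp1 fun S => ?_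
  by_cases h1 : P S <;> by_cases h2 : Q S <;> simp [h1, h2]

theorem pairProb_or_le {p : ℝ} (hp : 0 ≤ p) (hp1 : p ≤ 1) (P Q : Finset E → Finset E → Prop) :
    pairProb p (fun S S' => P S S' ∨ Q S S') ≤ pairProb p P + pairProb p Q := by
  simp only [pairProb, ← bernExp_add]
  exact bernExp_mono hp hp1 fun S => bernProb_or_le hp hp1 _ _

theorem pairProb_and (p : ℝ) (P Q : Finset E → Prop) :
    pairProb p (fun S S' => P S ∧ Q S') = bernProb p P * bernProb p Q := by
  rw [pairProb]
  conv_rhs => rw [bernProb]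
  rw [← bernExp_mul_const]
  refine congrArg _ (funext fun S => ?_)
  by_cases h : P S
  · simp [h]
  · simp [h, bernProb, bernExp_const]

theorem pairProb_right_le {p c : ℝ} (hp : 0 ≤ p) (hp1 : p ≤ 1) {P : Finset E → Finset E → Prop}
    (h : ∀ S, bernProb p (P S) ≤ c) : pairProb p P ≤ c :=
  (bernExp_mono hp hp1 h).trans_eq (bernExp_const p c)

theorem pairProb_left_le {p c : ℝ} (hp : 0 ≤ p) (hp1 : p ≤ 1) {P : Finset E → Finset E → Prop}
    (h : ∀ S', bernProb p (fun S => P S S') ≤ c) : pairProb p P ≤ c := by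
  rw [← pairProb_swap]
  exact pairProb_right_le hp hp1 h

theorem exists_not_of_pairProb_lt_one {p : ℝ} {P : Finset E → Finset E → Prop}
    (h : pairProb p P < 1) : ∃ S S', ¬ P S S' := by
  by_contra! hc
  refine h.ne ?_
  have : P = fun _ _ => True := by ext; simp [hc]
  simp [this, pairProb, bernProb, bernExp_const]

end PairProb

section RandomMaps

open Finset

variable {V X : Type*} [Fintype V] [DecidableEq V] [Fintype X]

theorem sum_fun_update (v : V) (h : (V → X) → ℝ) :
    ∑ a : V → X, ∑ x, h (Function.update a v x) = Fintype.card X * ∑ a, h a := by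
  have hinv : Function.Involutive
      (fun q : (V → X) × X => (Function.update q.1 v q.2, q.1 v)) := by
    rintro ⟨a, x⟩; simp
  have := Equiv.sum_comp hinv.toPerm (fun q : (V → X) × X => h q.1)
  simp only [Function.Involutive.coe_toPerm, Fintype.sum_prod_type] at this
  rw [this]
  simp [Finset.mul_sum]

variable [DecidableEq X]

/-- If a set has size at most `k`, a random map rarely shrinks it by much. -/
theorem sum_pow_card_sub_card_image_le {c : ℝ} (hc : 1 ≤ c) {k : ℕ}
    (hck : c * k ≤ Fintype.card X) (I : Finset V) (hI : #I ≤ k) :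
    ∑ a : V → X, c ^ (#I - #(I.image a)) ≤
      2 ^ #I * (Fintype.card X : ℝ) ^ Fintype.card V := by
  induction I using Finset.induction_on with
  | empty => simp
  | insert v I hv ih =>
    have hI' : #I + 1 ≤ k := by rwa [card_insert_of_notMem hv] at hI
    specialize ih (by omega)
    rcases Nat.eq_zero_or_pos (Fintype.card X) with hX | hX
    · rw [hX] at hck
      have : (1 : ℝ) ≤ k := by exact_mod_cast (by omega : 1 ≤ k)
      push_cast at hck
      nlinarith
    have hX' : (0 : ℝ) < Fintype.card X := by exact_mod_cast hX
    refine le_of_mul_le_mul_left ?_ hX'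
    rw [← sum_fun_update v]
    have hstep : ∀ a : V → X, ∑ x, c ^ (#(insert v I) - #((insert v I).image
        (Function.update a v x))) ≤ c ^ (#I - #(I.image a)) * (2 * Fintype.card X) := by
      intro a
      have himg : ∀ x, I.image (Function.update a v x) = I.image a := fun x =>
        Finset.image_congr fun u hu => by
          have : u ≠ v := fun h => hv (h ▸ hu)
          simp [this]
      have hle : #(I.image a) ≤ #I := card_image_le
      have hterm : ∀ x, c ^ (#(insert v I) - #((insert v I).image (Function.update a v x))) ≤
          c ^ (#I - #(I.image a)) * ((if x ∈ I.image a then c else 0) + 1) := by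
        intro x
        rw [card_insert_of_notMem hv, image_insert, himg, Function.update_self]
        split_ifs with hx
        · rw [insert_eq_of_mem hx, Nat.sub_add_comm hle, pow_succ]
          have : 0 ≤ c ^ (#I - #(I.image a)) := by positivity
          nlinarith
        · rw [card_insert_of_notMem hx, Nat.add_sub_add_right]
          simp
      refine (sum_le_sum fun x _ => hterm x).trans ?_
      rw [← mul_sum, sum_add_distrib, sum_ite_mem, univ_inter, sum_const, nsmul_eq_mul]
      simp only [sum_const, card_univ, nsmul_eq_mul, mul_one]
      refine mul_le_mul_of_nonneg_left ?_ (by positivity)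
      have h1 : (#(I.image a) : ℝ) ≤ k := by exact_mod_cast (by omega : #(I.image a) ≤ k)
      nlinarith
    refine (sum_le_sum fun a _ => hstep a).trans ?_
    rw [← sum_mul, card_insert_of_notMem hv, pow_succ]
    nlinarith

theorem sum_exp_card_fiber (x : X) (μ : ℝ) :
    ∑ a : V → X, Real.exp (μ * #{v | a v = x}) =
      (Fintype.card X - 1 + Real.exp μ) ^ Fintype.card V := by
  have h := Finset.prod_univ_sum (fun _ : V => (univ : Finset X))
    (fun _ y => if y = x then Real.exp μ else 1)
  rw [Fintype.piFinset_univ] at h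
  have h1 : ∑ y : X, (if y = x then Real.exp μ else 1) = Fintype.card X - 1 + Real.exp μ := by
    rw [← Finset.add_sum_erase _ _ (mem_univ x), if_pos rfl,
      sum_congr rfl (fun y hy => if_neg (ne_of_mem_erase hy)), sum_const, card_erase_of_mem
      (mem_univ x), card_univ, nsmul_eq_mul, mul_one, Nat.cast_pred (Fintype.card_pos_iff.2 ⟨x⟩)]
    ring
  rw [h1, prod_const, card_univ] at h
  rw [h]
  refine sum_congr rfl fun a _ => ?_
  rw [prod_ite, prod_const, prod_const_one, mul_one, ← Real.exp_nat_mul, mul_comm]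

theorem card_large_fiber_le {μ : ℝ} (hμ : 0 ≤ μ) (F : ℝ) (x : X) :
    (#{a : V → X | F ≤ (#{v | a v = x} : ℝ)} : ℝ) ≤ (Fintype.card X : ℝ) ^ Fintype.card V *
      Real.exp (-(μ * F) + (Real.exp μ - 1) * Fintype.card V / Fintype.card X) := by
  have hX : (0 : ℝ) < Fintype.card X := by exact_mod_cast Fintype.card_pos_iff.2 ⟨x⟩
  have h1 : (#{a : V → X | F ≤ (#{v | a v = x} : ℝ)} : ℝ) * Real.exp (μ * F) ≤
      ∑ a : V → X, Real.exp (μ * #{v | a v = x}) := by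
    rw [← nsmul_eq_mul, ← sum_const]
    refine (sum_le_sum (g := fun a : V → X => Real.exp (μ * #{v | a v = x})) ?_).trans
      (sum_le_sum_of_subset_of_nonneg (filter_subset _ _) fun _ _ _ => by positivity)
    intro a ha
    exact Real.exp_le_exp.2 (mul_le_mul_of_nonneg_left (mem_filter.1 ha).2 hμ)
  rw [sum_exp_card_fiber] at h1
  have h2 : (Fintype.card X - 1 + Real.exp μ) ≤
      Fintype.card X * Real.exp ((Real.exp μ - 1) / Fintype.card X) := by
    have := Real.add_one_le_exp ((Real.exp μ - 1) / Fintype.card X)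
    calc (Fintype.card X - 1 + Real.exp μ) =
        Fintype.card X * ((Real.exp μ - 1) / Fintype.card X + 1) := by field_simp; ring
      _ ≤ _ := by gcongr
  have h3 : (0 : ℝ) ≤ Fintype.card X - 1 + Real.exp μ := by
    have : (1 : ℝ) ≤ Fintype.card X := by exact_mod_cast Fintype.card_pos_iff.2 ⟨x⟩
    linarith [Real.exp_pos μ]
  have h4 := pow_le_pow_left₀ h3 h2 (Fintype.card V)
  rw [mul_pow, ← Real.exp_nat_mul] at h4
  rw [Real.exp_add, Real.exp_neg, mul_left_comm, inv_mul_eq_div, le_div_iff₀ (Real.exp_pos _)]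
  refine (h1.trans h4).trans_eq ?_
  congr 2
  ring

/-- There are two maps from `V` to `X` with small fibres, for which the typical `k`-set is almost
injectively mapped. -/
theorem exists_maps {k : ℕ} (hk : 0 < k) (hkX : k ≤ Fintype.card X)
    (hkV : k ≤ Fintype.card V) {μ F : ℝ} (hμ : 0 ≤ μ)
    (hF : Fintype.card X * Real.exp (-(μ * F) + (Real.exp μ - 1) * Fintype.card V /
      Fintype.card X) ≤ 1 / 8) :
    ∃ a b : V → X, (∀ x, (#{v | a v = x} : ℝ) ≤ F) ∧ (∀ x, (#{v | b v = x} : ℝ) ≤ F) ∧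
      ∑ I ∈ powersetCard k (univ : Finset V), ((Fintype.card X : ℝ) / k) ^
        ((k - #(I.image a)) + (k - #(I.image b))) ≤
        2 * (4 ^ k * (Fintype.card V).choose k) := by
  set m : ℝ := (Fintype.card X : ℝ) with hm
  set n := Fintype.card V with hn
  have hk' : (0 : ℝ) < k := by exact_mod_cast hk
  have hkm : (k : ℝ) ≤ m := Nat.cast_le.2 hkX
  have hm0 : 0 < m := hk'.trans_le hkm
  have hc : 1 ≤ m / k := by
    rwa [one_le_div hk']
  have hsum : ∑ q : (V → X) × (V → X), ∑ I ∈ powersetCard k (univ : Finset V), (m / k) ^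
      ((k - #(I.image q.1)) + (k - #(I.image q.2))) ≤ (4 ^ k * n.choose k) * (m ^ n * m ^ n) := by
    rw [sum_comm]
    have : ∀ I ∈ powersetCard k (univ : Finset V), ∑ q : (V → X) × (V → X), (m / k) ^
        ((k - #(I.image q.1)) + (k - #(I.image q.2))) ≤ 4 ^ k * (m ^ n * m ^ n) := by
      intro I hI
      have hIk := (mem_powersetCard.1 hI).2
      have h := sum_pow_card_sub_card_image_le (X := X) hc (k := k)
        (by rw [div_mul_cancel₀ _ hk'.ne']) I hIk.le
      rw [hIk] at h
      simp only [pow_add, Fintype.sum_prod_type, ← sum_mul_sum]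
      have h0 : 0 ≤ ∑ a : V → X, (m / k) ^ (k - #(I.image a)) :=
        sum_nonneg fun _ _ => by positivity
      refine (mul_le_mul h h h0 (by positivity)).trans_eq ?_
      rw [show (4 : ℝ) = 2 * 2 by norm_num, mul_pow]; ring
    refine (sum_le_sum this).trans_eq ?_
    rw [sum_const, card_powersetCard, card_univ, nsmul_eq_mul]; ring
  set bad : Finset (V → X) := {a | ∃ x, F ≤ (#{v | a v = x} : ℝ)} with hbad
  have hbadcard : (#bad : ℝ) ≤ m ^ n / 8 := by
    have hsub : bad ⊆ univ.biUnion fun x : X => {a : V → X | F ≤ (#{v | a v = x} : ℝ)} := by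
      intro a ha
      simpa [hbad] using ha
    have h1 : (#bad : ℝ) ≤ ∑ x : X, (#{a : V → X | F ≤ (#{v | a v = x} : ℝ)} : ℝ) := by
      exact_mod_cast (card_le_card hsub).trans card_biUnion_le
    refine (h1.trans (sum_le_sum fun x _ => card_large_fiber_le hμ F x)).trans ?_
    rw [sum_const, card_univ, nsmul_eq_mul]
    have : 0 ≤ m ^ n := by positivity
    nlinarith
  have hgood : (7 / 8 * m ^ n : ℝ) ≤ #badᶜ := by
    rw [card_compl, Nat.cast_sub (card_le_univ _), Fintype.card_fun]
    push_cast
    linarith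
  have hP : 0 < m ^ n := by positivity
  by_contra! hcon
  have hlow : ∑ q ∈ badᶜ ×ˢ badᶜ, 2 * (4 ^ k * (n.choose k : ℝ)) ≤
      ∑ q : (V → X) × (V → X), ∑ I ∈ powersetCard k (univ : Finset V), (m / k) ^
      ((k - #(I.image q.1)) + (k - #(I.image q.2))) := by
    refine (sum_le_sum ?_).trans (sum_le_sum_of_subset_of_nonneg (subset_univ _)
      fun _ _ _ => sum_nonneg fun _ _ => by positivity)
    intro q hq
    simp only [mem_product, mem_compl, hbad, mem_filter_univ, not_exists, not_le] at hq
    exact (hcon q.1 q.2 (fun x => (hq.1 x).le) (fun x => (hq.2 x).le)).le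
  rw [sum_const, card_product, nsmul_eq_mul, Nat.cast_mul] at hlow
  have hN : (0 : ℝ) < 4 ^ k * n.choose k := by
    have : 0 < n.choose k := Nat.choose_pos hkV
    positivity
  have h2 : (7 / 8 * m ^ n) * (7 / 8 * m ^ n) ≤ (#badᶜ : ℝ) * #badᶜ :=
    mul_le_mul hgood hgood (by positivity) (by positivity)
  have h3 := hlow.trans hsum
  have h4 := mul_le_mul_of_nonneg_right h2 (by positivity : 0 ≤ 2 * (4 ^ k * (n.choose k : ℝ)))
  nlinarith [mul_pos hN (mul_pos hP hP)]

end RandomMaps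

section EdgeSets

open Finset

variable {X : Type*}

/-- Adjacency in the graph whose edges are the off-diagonal elements of `S`. -/
abbrev EdgeAdj (S : Finset (Sym2 X)) (x y : X) : Prop := x ≠ y ∧ s(x, y) ∈ S

theorem EdgeAdj.symm {S : Finset (Sym2 X)} {x y : X} (h : EdgeAdj S x y) : EdgeAdj S y x :=
  ⟨h.1.symm, Sym2.eq_swap (a := x) ▸ h.2⟩

/-- The edge set `S` spans no triangle. -/
def TriangleFreeEdges (S : Finset (Sym2 X)) : Prop :=
  ∀ x y z, ¬ (EdgeAdj S x y ∧ EdgeAdj S y z ∧ EdgeAdj S x z)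

variable {V : Type*}

/-- The union of the pull-backs of two graphs, where a pair is taken from one graph only if it
has no common neighbour in the other one. -/
def twoBite (a b : V → X) (S₁' S₁ S₂' S₂ : Finset (Sym2 X)) : SimpleGraph V where
  Adj u v :=
    (EdgeAdj S₁' (a u) (a v) ∧ ¬ ∃ z, EdgeAdj S₂ (b u) z ∧ EdgeAdj S₂ (b v) z) ∨
    (EdgeAdj S₂' (b u) (b v) ∧ ¬ ∃ z, EdgeAdj S₁ (a u) z ∧ EdgeAdj S₁ (a v) z)
  symm := ⟨fun u v h => by
    rcases h with ⟨h1, h2⟩ | ⟨h1, h2⟩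
    · exact Or.inl ⟨h1.symm, fun ⟨z, hz⟩ => h2 ⟨z, hz.2, hz.1⟩⟩
    · exact Or.inr ⟨h1.symm, fun ⟨z, hz⟩ => h2 ⟨z, hz.2, hz.1⟩⟩⟩
  loopless := ⟨fun u h => by rcases h with ⟨h1, _⟩ | ⟨h1, _⟩ <;> exact h1.1 rfl⟩

theorem twoBite_cliqueFree {a b : V → X} {S₁' S₁ S₂' S₂ : Finset (Sym2 X)} (h₁ : S₁' ⊆ S₁)
    (h₂ : S₂' ⊆ S₂) (ht₁ : TriangleFreeEdges S₁') (ht₂ : TriangleFreeEdges S₂') :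
    (twoBite a b S₁' S₁ S₂' S₂).CliqueFree 3 := by
  classical
  intro s hs
  obtain ⟨x, y, z, hxy, hxz, hyz, -⟩ := SimpleGraph.is3Clique_iff.1 hs
  have m1 : ∀ {x y}, EdgeAdj S₁' x y → EdgeAdj S₁ x y := fun h => ⟨h.1, h₁ h.2⟩
  have m2 : ∀ {x y}, EdgeAdj S₂' x y → EdgeAdj S₂ x y := fun h => ⟨h.1, h₂ h.2⟩
  rcases hxy with ⟨p1, q1⟩ | ⟨p1, q1⟩ <;> rcases hyz with ⟨p2, q2⟩ | ⟨p2, q2⟩ <;>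
    rcases hxz with ⟨p3, q3⟩ | ⟨p3, q3⟩
  · exact ht₁ _ _ _ ⟨p1, p2, p3⟩
  · exact q3 ⟨_, m1 p1, m1 p2.symm⟩
  · exact q2 ⟨_, m1 p1.symm, m1 p3.symm⟩
  · exact q1 ⟨_, m2 p3, m2 p2⟩
  · exact q1 ⟨_, m1 p3, m1 p2⟩
  · exact q2 ⟨_, m2 p1.symm, m2 p3.symm⟩
  · exact q3 ⟨_, m2 p1, m2 p2.symm⟩
  · exact ht₂ _ _ _ ⟨p1, p2, p3⟩

variable [DecidableEq X]

/-- The edge set of the triangle on `x`, `y`, `z`. -/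
def triangleEdges (x y z : X) : Finset (Sym2 X) := {s(x, y), s(y, z), s(x, z)}

theorem card_triangleEdges {x y z : X} (hxy : x ≠ y) (hyz : y ≠ z) (hxz : x ≠ z) :
    #(triangleEdges x y z) = 3 := by
  rw [triangleEdges, card_eq_three]
  refine ⟨_, _, _, ?_, ?_, ?_, rfl⟩ <;> simp <;> tauto

/-- Removing all edges of a maximal edge-disjoint family of triangles destroys all triangles. -/
theorem exists_triangle_packing [Fintype X] (S : Finset (Sym2 X)) :
    ∃ 𝒯 : Finset (Finset (Sym2 X)),
      (∀ t ∈ 𝒯, t ⊆ S ∧ ∃ x y z, x ≠ y ∧ y ≠ z ∧ x ≠ z ∧ t = triangleEdges x y z) ∧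
      (𝒯 : Set (Finset (Sym2 X))).PairwiseDisjoint id ∧
      TriangleFreeEdges (S \ 𝒯.biUnion id) := by
  classical
  let P : Finset (Finset (Sym2 X)) → Prop := fun 𝒯 =>
    (∀ t ∈ 𝒯, t ⊆ S ∧ ∃ x y z, x ≠ y ∧ y ≠ z ∧ x ≠ z ∧ t = triangleEdges x y z) ∧
      (𝒯 : Set (Finset (Sym2 X))).PairwiseDisjoint id
  obtain ⟨𝒯, h𝒯, hmax⟩ := Finset.exists_max_image
    (univ.filter P) card ⟨∅, by simp [P]⟩
  rw [mem_filter_univ] at h𝒯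
  refine ⟨𝒯, h𝒯.1, h𝒯.2, ?_⟩
  rintro x y z ⟨⟨hxy, hxy'⟩, ⟨hyz, hyz'⟩, hxz, hxz'⟩
  have hsub : triangleEdges x y z ⊆ S \ 𝒯.biUnion id := by
    intro e he
    simp only [triangleEdges, mem_insert, mem_singleton] at he
    rcases he with rfl | rfl | rfl <;> assumption
  have hne : triangleEdges x y z ∉ 𝒯 := by
    intro hmem
    exact (mem_sdiff.1 hxy').2 (mem_biUnion.2 ⟨_, hmem, by simp [triangleEdges]⟩)
  have hP : P (insert (triangleEdges x y z) 𝒯) := by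
    refine ⟨?_, ?_⟩
    · intro t ht
      rcases mem_insert.1 ht with rfl | ht
      · exact ⟨hsub.trans sdiff_subset, x, y, z, hxy, hyz, hxz, rfl⟩
      · exact h𝒯.1 t ht
    · rw [coe_insert]
      refine h𝒯.2.insert fun t ht _ => ?_
      refine disjoint_left.2 fun e he het => ?_
      exact (mem_sdiff.1 (hsub he)).2 (mem_biUnion.2 ⟨t, ht, het⟩)
  have := hmax _ (by simpa using hP)
  rw [card_insert_of_notMem hne] at this
  omega

/-- The triangles with an edge inside `A`. -/
def trianglesMeeting [Fintype X] (A : Finset X) : Finset (Finset (Sym2 X)) :=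
  ((A ×ˢ A ×ˢ univ).filter fun q : X × X × X =>
    q.1 ≠ q.2.1 ∧ q.2.1 ≠ q.2.2 ∧ q.1 ≠ q.2.2).image fun q => triangleEdges q.1 q.2.1 q.2.2

theorem card_of_mem_trianglesMeeting [Fintype X] {A : Finset X} {t : Finset (Sym2 X)}
    (ht : t ∈ trianglesMeeting A) : #t = 3 := by
  simp only [trianglesMeeting, mem_image, mem_filter] at ht
  obtain ⟨q, ⟨_, h1, h2, h3⟩, rfl⟩ := ht
  exact card_triangleEdges h1 h2 h3

theorem card_trianglesMeeting_le [Fintype X] (A : Finset X) :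
    #(trianglesMeeting A) ≤ #A ^ 2 * Fintype.card X := by
  refine card_image_le.trans ((card_filter_le _ _).trans ?_)
  rw [card_product, card_product, card_univ, ← mul_assoc, sq]

theorem triangleEdges_mem_trianglesMeeting [Fintype X] {A : Finset X} {x y z u v : X}
    (hxy : x ≠ y) (hyz : y ≠ z) (hxz : x ≠ z) (hu : u ∈ A) (hv : v ∈ A)
    (he : s(u, v) ∈ triangleEdges x y z) : triangleEdges x y z ∈ trianglesMeeting A := by
  have key : ∀ x' y' z' : X, x' ≠ y' → y' ≠ z' → x' ≠ z' → s(u, v) = s(x', y') →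
      triangleEdges x' y' z' ∈ trianglesMeeting A := by
    intro x' y' z' h1 h2 h3 h
    have hx : x' ∈ A ∧ y' ∈ A := by
      rcases Sym2.eq_iff.1 h with ⟨rfl, rfl⟩ | ⟨rfl, rfl⟩ <;> exact ⟨by assumption, by assumption⟩
    exact mem_image.2 ⟨(x', y', z'), by simp [hx, h1, h2, h3], rfl⟩
  simp only [triangleEdges, mem_insert, mem_singleton] at he
  rcases he with he | he | he
  · exact key x y z hxy hyz hxz he
  · have := key y z x hyz hxz.symm hxy.symm he
    convert this using 1
    ext e; simp only [triangleEdges, mem_insert, mem_singleton, Sym2.eq_swap (a := z) (b := x),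
      Sym2.eq_swap (a := y) (b := x)]; tauto
  · have := key x z y hxz hyz.symm hxy he
    convert this using 1
    ext e; simp only [triangleEdges, mem_insert, mem_singleton, Sym2.eq_swap (a := z) (b := y)]
    tauto

end EdgeSets

section Certificates

open Finset

variable {V X : Type*} [DecidableEq X]

/-- The number of vertices in `I` mapped by `b` to neighbours of `z`. -/
def nbrCount (S : Finset (Sym2 X)) (b : V → X) (I : Finset V) (z : X) : ℕ :=
  #{v ∈ I | EdgeAdj S (b v) z}

theorem card_filter_comp_le {f : V → X} {F : ℕ} (I : Finset V)
    (hF : ∀ x, #{v ∈ I | f v = x} ≤ F) (Y : Finset X) : #{v ∈ I | f v ∈ Y} ≤ F * #Y := by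
  have h : #{v ∈ I | f v ∈ Y} = ∑ y ∈ Y, #{v ∈ {v ∈ I | f v ∈ Y} | f v = y} :=
    card_eq_sum_card_fiberwise fun v hv => (mem_filter.1 hv).2
  rw [h, mul_comm, ← smul_eq_mul, ← sum_const]
  refine sum_le_sum fun y _ => le_trans (card_le_card ?_) (hF y)
  intro v hv
  simp only [mem_filter] at hv ⊢
  exact ⟨hv.1.1, hv.2⟩

variable [Fintype X]

/-- The pairs in `I` whose images under `b` have a common neighbour of low weight. -/
def lowPairs (S : Finset (Sym2 X)) (b : V → X) (I : Finset V) (Λ : ℕ) : Finset (V × V) :=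
  {q ∈ I ×ˢ I | ∃ z, nbrCount S b I z < Λ ∧ EdgeAdj S (b q.1) z ∧ EdgeAdj S (b q.2) z}

/-- An admissible labelling: the label `none` marks exceptional elements, `some none` elements
without neighbours in `Z`, and `some (some z)` elements whose only neighbour in `Z` is `z`. -/
structure IsLabelling (a : V → X) (I : Finset V) (Z : Finset X) (q D : ℕ)
    (φ : X → Option (Option X)) : Prop where
  range : ∀ x, φ x = none ∨
    (x ∈ I.image a ∧ (φ x = some none ∨ ∃ z ∈ Z, φ x = some (some z)))
  eq_none : ∀ x ∈ Z, φ x = none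
  card_none_le : #{v ∈ I | φ (a v) = none} ≤ q
  card_some_le : ∀ z, #{v ∈ I | φ (a v) = some (some z)} ≤ D

/-- The edges prescribed by a labelling. -/
def labelEdges (φ : X → Option (Option X)) : Finset (Sym2 X) :=
  (univ.filter fun q : X × X => φ q.1 = some (some q.2)).image fun q => s(q.1, q.2)

theorem exists_isLabelling {S : Finset (Sym2 X)} {a : V → X} {I : Finset V} {Z : Finset X}
    {F C d q D : ℕ} (hF : ∀ x, #{v ∈ I | a v = x} ≤ F)
    (hC : ∀ z z', z ≠ z' → #{x | EdgeAdj S x z ∧ EdgeAdj S x z'} ≤ C)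
    (hd : ∀ z, #{x | EdgeAdj S x z} ≤ d) (hq : F * (#Z + #Z ^ 2 * C) ≤ q) (hD : F * d ≤ D) :
    ∃ φ, IsLabelling a I Z q D φ ∧ labelEdges φ ⊆ S ∧
      ∀ x, φ x ≠ none → ∀ z ∈ Z, EdgeAdj S x z → φ x = some (some z) := by
  have hex : ∀ x, ∃ l : Option (Option X),
      (l = none ∧ (x ∉ I.image a ∨ x ∈ Z ∨
        ∃ z ∈ Z, ∃ z' ∈ Z, z ≠ z' ∧ EdgeAdj S x z ∧ EdgeAdj S x z')) ∨
      (x ∈ I.image a ∧ x ∉ Z ∧ l = some none ∧ ∀ z ∈ Z, ¬ EdgeAdj S x z) ∨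
      (x ∈ I.image a ∧ x ∉ Z ∧ ∃ z ∈ Z, l = some (some z) ∧ EdgeAdj S x z ∧
        ∀ z' ∈ Z, EdgeAdj S x z' → z' = z) := by
    intro x
    by_cases h1 : x ∉ I.image a
    · exact ⟨none, Or.inl ⟨rfl, Or.inl h1⟩⟩
    by_cases h2 : x ∈ Z
    · exact ⟨none, Or.inl ⟨rfl, Or.inr (Or.inl h2)⟩⟩
    rw [not_not] at h1
    by_cases h3 : ∀ z ∈ Z, ¬ EdgeAdj S x z
    · exact ⟨some none, Or.inr (Or.inl ⟨h1, h2, rfl, h3⟩)⟩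
    push Not at h3
    obtain ⟨z, hz, hxz⟩ := h3
    by_cases h4 : ∀ z' ∈ Z, EdgeAdj S x z' → z' = z
    · exact ⟨some (some z), Or.inr (Or.inr ⟨h1, h2, z, hz, rfl, hxz, h4⟩)⟩
    · push Not at h4
      obtain ⟨z', hz', hxz', hne⟩ := h4
      exact ⟨none, Or.inl ⟨rfl, Or.inr (Or.inr ⟨z, hz, z', hz', hne.symm, hxz, hxz'⟩)⟩⟩
  choose φ hφ using hex
  have hsome : ∀ x z, φ x = some (some z) → EdgeAdj S x z := by
    intro x z hx
    rcases hφ x with h | ⟨_, _, h, _⟩ | ⟨_, _, z', _, h, h', _⟩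
    · simp [hx] at h
    · simp [hx] at h
    · rw [hx] at h
      simp only [Option.some.injEq] at h
      exact h ▸ h'
  refine ⟨φ, ⟨?_, ?_, ?_, ?_⟩, ?_, ?_⟩
  · intro x
    rcases hφ x with h | ⟨h1, _, h, _⟩ | ⟨h1, _, z', h2, h, h', _⟩
    · exact Or.inl h.1
    · exact Or.inr ⟨h1, Or.inl h⟩
    · exact Or.inr ⟨h1, Or.inr ⟨z', h2, h⟩⟩
  · intro x hx
    rcases hφ x with h | ⟨_, h, _⟩ | ⟨_, h, _⟩
    · exact h.1
    · exact absurd hx h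
    · exact absurd hx h
  · set Y : Finset X := Z ∪ Z.offDiag.biUnion
      (fun q => {x | EdgeAdj S x q.1 ∧ EdgeAdj S x q.2}) with hY
    have hYc : #Y ≤ #Z + #Z ^ 2 * C := by
      refine (card_union_le _ _).trans (Nat.add_le_add_left ?_ _)
      refine (card_biUnion_le_card_mul _ _ C ?_).trans ?_
      · intro q hq
        exact hC _ _ (mem_offDiag.1 hq).2.2
      · refine Nat.mul_le_mul_right _ ?_
        rw [offDiag_card, sq]; exact Nat.sub_le _ _
    refine le_trans (card_le_card ?_) ((card_filter_comp_le I hF Y).trans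
      ((Nat.mul_le_mul_left _ hYc).trans hq))
    intro v hv
    rw [mem_filter] at hv ⊢
    refine ⟨hv.1, ?_⟩
    rcases hφ (a v) with h | ⟨_, _, h, _⟩ | ⟨_, _, z', _, h, h', _⟩
    · rcases h.2 with h | h | ⟨z, hz, z', hz', hne, h1, h2⟩
      · exact absurd (mem_image_of_mem a hv.1) h
      · exact mem_union_left _ h
      · refine mem_union_right _ (mem_biUnion.2 ⟨(z, z'), mem_offDiag.2 ⟨hz, hz', hne⟩, ?_⟩)
        simpa using ⟨h1, h2⟩
    · simp [hv.2] at h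
    · simp [hv.2] at h
  · intro z
    refine le_trans (card_le_card ?_) ((card_filter_comp_le I hF {x | EdgeAdj S x z}).trans
      ((Nat.mul_le_mul_left _ (hd z)).trans hD))
    intro v hv
    rw [mem_filter] at hv ⊢
    exact ⟨hv.1, by simpa using hsome _ _ hv.2⟩
  · intro e he
    simp only [labelEdges, mem_image, mem_filter_univ] at he
    obtain ⟨⟨x, z⟩, h, rfl⟩ := he
    exact (hsome x z h).2
  · intro x hx z hz hxz
    rcases hφ x with h | ⟨_, _, _, h⟩ | ⟨_, _, z', _, h, _, h'⟩
    · exact absurd h.1 hx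
    · exact absurd hxz (h z hz)
    · rw [h, h' z hz hxz]

/-- The vertices of `I₁` that are exceptional in neither labelling. -/
def regularPart (a b : V → X) (I₁ : Finset V) (φ₁ φ₂ : X → Option (Option X)) : Finset V :=
  {u ∈ I₁ | φ₁ (a u) ≠ none ∧ φ₂ (b u) ≠ none}

/-- The pairs of regular vertices without a common label under `φ₂`, as pairs in the image of
`a`. -/
def openPairs (a b : V → X) (I₁ : Finset V) (φ₁ φ₂ : X → Option (Option X)) : Finset (Sym2 X) :=
  ((regularPart a b I₁ φ₁ φ₂).offDiag.filter fun q =>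
    ¬ ∃ z, φ₂ (b q.1) = some (some z) ∧ φ₂ (b q.2) = some (some z)).image
    fun q => s(a q.1, a q.2)

theorem disjoint_labelEdges_openPairs {a b : V → X} {I I₁ : Finset V} {Z : Finset X} {q D : ℕ}
    {φ₁ φ₂ : X → Option (Option X)} (hφ : IsLabelling a I Z q D φ₁) :
    Disjoint (labelEdges φ₁) (openPairs a b I₁ φ₁ φ₂) := by
  rw [disjoint_left]
  intro e he ho
  simp only [labelEdges, openPairs, regularPart, mem_image, mem_filter, mem_univ, true_and,
    mem_offDiag] at he ho
  obtain ⟨⟨x, z⟩, hx, rfl⟩ := he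
  obtain ⟨⟨u, v⟩, ⟨⟨hu, hv, _⟩, _⟩, h⟩ := ho
  have hz : z ∈ Z := by
    rcases hφ.range x with h' | ⟨_, h' | ⟨z', hz', h'⟩⟩
    · simp [hx] at h'
    · simp [hx] at h'
    · rw [hx] at h'
      simp only [Option.some.injEq] at h'
      exact h' ▸ hz'
  have hz' := hφ.eq_none z hz
  rcases Sym2.eq_iff.1 h with ⟨_, h2⟩ | ⟨h1, _⟩
  · exact hv.2.1 (h2 ▸ hz')
  · exact hu.2.1 (h1 ▸ hz')

theorem card_labelEdges {a : V → X} {I : Finset V} {Z : Finset X} {q D : ℕ}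
    {φ : X → Option (Option X)} (hφ : IsLabelling a I Z q D φ) :
    #(labelEdges φ) = #{x ∈ I.image a | φ x ≠ none ∧ φ x ≠ some none} := by
  have hmem : ∀ x z, φ x = some (some z) → x ∈ I.image a ∧ z ∈ Z := by
    intro x z hx
    rcases hφ.range x with h' | ⟨h0, h' | ⟨z', hz', h'⟩⟩
    · simp [hx] at h'
    · simp [hx] at h'
    · rw [hx] at h'
      simp only [Option.some.injEq] at h'
      exact ⟨h0, h' ▸ hz'⟩
  have h1 : #(labelEdges φ) = #{q : X × X | φ q.1 = some (some q.2)} := by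
    refine card_image_of_injOn ?_
    rintro ⟨x, z⟩ hx ⟨x', z'⟩ hx' h
    simp only [coe_filter, mem_univ, true_and, Set.mem_ofPred_eq] at hx hx'
    rcases Sym2.eq_iff.1 h with ⟨h1, h2⟩ | ⟨h1, h2⟩
    · exact Prod.ext h1 h2
    · have h3 := hφ.eq_none z' (hmem _ _ hx').2
      have h1 : x = z' := h1
      rw [← h1, hx] at h3
      simp at h3
  rw [h1]
  refine card_bij (fun q _ => q.1) ?_ ?_ ?_
  · rintro ⟨x, z⟩ hx
    simp only [mem_filter, mem_univ, true_and] at hx ⊢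
    exact ⟨(hmem x z hx).1, by simp [hx], by simp [hx]⟩
  · rintro ⟨x, z⟩ hx ⟨x', z'⟩ hx' h
    simp only [mem_filter, mem_univ, true_and] at hx hx'
    have h : x = x' := h
    subst h
    rw [hx] at hx'
    simp only [Option.some.injEq] at hx'
    rw [hx']
  · intro x hx
    rw [mem_filter] at hx
    rcases hφx : φ x with _ | _ | z
    · simp [hφx] at hx
    · simp [hφx] at hx
    · exact ⟨(x, z), by simpa using hφx, rfl⟩

theorem card_regularPart_sq_le {a b : V → X} {I₁ : Finset V} {φ₁ φ₂ : X → Option (Option X)}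
    (ha : Set.InjOn a I₁) :
    #(regularPart a b I₁ φ₁ φ₂) ^ 2 ≤ 2 * #(openPairs a b I₁ φ₁ φ₂) +
      #(regularPart a b I₁ φ₁ φ₂) +
      ∑ z, #{u ∈ regularPart a b I₁ φ₁ φ₂ | φ₂ (b u) = some (some z)} ^ 2 := by
  classical
  set R := regularPart a b I₁ φ₁ φ₂ with hR
  have haR : Set.InjOn a R := ha.mono (coe_subset.2 (filter_subset _ _))
  have h1 : #(R.offDiag.filter fun q =>
      ¬ ∃ z, φ₂ (b q.1) = some (some z) ∧ φ₂ (b q.2) = some (some z)) ≤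
      2 * #(openPairs a b I₁ φ₁ φ₂) := by
    rw [openPairs, ← hR]
    refine card_le_mul_card_image _ 2 fun e he => ?_
    rw [mem_image] at he
    obtain ⟨⟨u, v⟩, huv, rfl⟩ := he
    rw [mem_filter, mem_offDiag] at huv
    refine (card_le_card (t := {(u, v), (v, u)}) ?_).trans card_le_two
    rintro ⟨u', v'⟩ h'
    simp only [mem_filter, mem_offDiag] at h'
    rw [mem_insert, mem_singleton]
    rcases Sym2.eq_iff.1 h'.2 with ⟨h3, h4⟩ | ⟨h3, h4⟩
    · exact Or.inl (Prod.ext (haR h'.1.1.1 huv.1.1 h3) (haR h'.1.1.2.1 huv.1.2.1 h4))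
    · exact Or.inr (Prod.ext (haR h'.1.1.1 huv.1.2.1 h3) (haR h'.1.1.2.1 huv.1.1 h4))
  have h2 : #(R.offDiag.filter fun q =>
      ∃ z, φ₂ (b q.1) = some (some z) ∧ φ₂ (b q.2) = some (some z)) ≤
      ∑ z, #{u ∈ R | φ₂ (b u) = some (some z)} ^ 2 := by
    refine (card_le_card (t := univ.biUnion fun z => {u ∈ R | φ₂ (b u) = some (some z)} ×ˢ
      {u ∈ R | φ₂ (b u) = some (some z)}) ?_).trans (card_biUnion_le.trans_eq ?_)
    · rintro ⟨u, v⟩ h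
      simp only [mem_filter, mem_offDiag] at h
      obtain ⟨⟨hu, hv, _⟩, z, h⟩ := h
      simp only [mem_biUnion, mem_univ, true_and, mem_product, mem_filter]
      exact ⟨z, ⟨hu, h.1⟩, hv, h.2⟩
    · exact sum_congr rfl fun z _ => by rw [card_product, sq]
  have h3 := card_filter_add_card_filter_not (s := R.offDiag) (fun q =>
      ∃ z, φ₂ (b q.1) = some (some z) ∧ φ₂ (b q.2) = some (some z))
  rw [offDiag_card] at h3
  rw [sq]
  omega

/-- If `I` is independent, then the open pairs are rarely edges. -/
theorem card_inter_openPairs_le {a b : V → X} {I I₁ : Finset V} {S₁ S₂ S₂' : Finset (Sym2 X)}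
    {𝒯 : Finset (Finset (Sym2 X))} {Z : Finset X} {Λ j' j₂ : ℕ} {φ₁ φ₂ : X → Option (Option X)}
    (hI : I₁ ⊆ I) (ha : Set.InjOn a I₁)
    (hind : ∀ u ∈ I, ∀ v ∈ I, u ≠ v →
      ¬ (twoBite a b (S₁ \ 𝒯.biUnion id) S₁ S₂' S₂).Adj u v)
    (h𝒯 : ∀ t ∈ 𝒯, ∃ x y z, x ≠ y ∧ y ≠ z ∧ x ≠ z ∧ t = triangleEdges x y z)
    (hj' : #{t ∈ 𝒯 | t ∈ trianglesMeeting (I.image a)} ≤ j')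
    (hj₂ : #(S₁ ∩ (lowPairs S₂ b I Λ).image fun q => s(a q.1, a q.2)) ≤ j₂)
    (hZ : ∀ z, Λ ≤ nbrCount S₂ b I z → z ∈ Z)
    (hφ₂ : ∀ x, φ₂ x ≠ none → ∀ z ∈ Z, EdgeAdj S₂ x z → φ₂ x = some (some z)) :
    #(S₁ ∩ openPairs a b I₁ φ₁ φ₂) ≤ 3 * j' + j₂ := by
  have hsub : S₁ ∩ openPairs a b I₁ φ₁ φ₂ ⊆
      ({t ∈ 𝒯 | t ∈ trianglesMeeting (I.image a)}).biUnion id ∪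
        (S₁ ∩ (lowPairs S₂ b I Λ).image fun q => s(a q.1, a q.2)) := by
    intro e he
    rw [mem_inter] at he
    obtain ⟨heS, he⟩ := he
    simp only [openPairs, regularPart, mem_image, mem_filter, mem_offDiag] at he
    obtain ⟨⟨u, v⟩, ⟨⟨⟨hu, _, hu2⟩, ⟨hv, _, hv2⟩, huv⟩, hlab⟩, rfl⟩ := he
    by_cases ht : ∃ t ∈ 𝒯, s(a u, a v) ∈ t
    · obtain ⟨t, ht, het⟩ := ht
      refine mem_union_left _ (mem_biUnion.2 ⟨t, mem_filter.2 ⟨ht, ?_⟩, het⟩)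
      obtain ⟨x, y, z, h1, h2, h3, rfl⟩ := h𝒯 t ht
      exact triangleEdges_mem_trianglesMeeting h1 h2 h3 (mem_image_of_mem a (hI hu))
        (mem_image_of_mem a (hI hv)) het
    · refine mem_union_right _ (mem_inter.2 ⟨heS, mem_image.2 ⟨(u, v), ?_, rfl⟩⟩)
      have hadj : EdgeAdj (S₁ \ 𝒯.biUnion id) (a u) (a v) := by
        refine ⟨fun h => huv (ha hu hv h), mem_sdiff.2 ⟨heS, fun h => ht ?_⟩⟩
        simpa using h
      have hno := hind u (hI hu) v (hI hv) huv
      have hz : ∃ z, EdgeAdj S₂ (b u) z ∧ EdgeAdj S₂ (b v) z := by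
        by_contra hc
        exact hno (Or.inl ⟨hadj, hc⟩)
      obtain ⟨z, hz1, hz2⟩ := hz
      refine mem_filter.2 ⟨mem_product.2 ⟨hI hu, hI hv⟩, z, ?_, hz1, hz2⟩
      by_contra hc
      have hzZ := hZ z (not_lt.1 hc)
      exact hlab ⟨z, hφ₂ _ hu2 z hzZ hz1, hφ₂ _ hv2 z hzZ hz2⟩
  refine (card_le_card hsub).trans ((card_union_le _ _).trans (Nat.add_le_add ?_ hj₂))
  refine (card_biUnion_le_card_mul _ _ 3 fun t ht => ?_).trans ?_
  · exact (card_of_mem_trianglesMeeting (mem_filter.1 ht).2).le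
  · rw [mul_comm]; exact Nat.mul_le_mul_left _ hj'

end Certificates

section LowPairs

open Finset

variable {V X : Type*} [DecidableEq X]

theorem sum_nbrCount (S : Finset (Sym2 X)) (b : V → X) (I : Finset V) (Y : Finset X) :
    ∑ z ∈ Y, nbrCount S b I z = ∑ v ∈ I, #{z ∈ Y | EdgeAdj S (b v) z} := by
  simp only [nbrCount, card_filter]
  exact sum_comm

/-- The pairs in `I` with different images under `b`, both adjacent to `z`. -/
def spreadPairs (S : Finset (Sym2 X)) (b : V → X) (I : Finset V) (z : X) : Finset (V × V) :=
  {q ∈ I ×ˢ I | b q.1 ≠ b q.2 ∧ EdgeAdj S (b q.1) z ∧ EdgeAdj S (b q.2) z}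

theorem card_edges_within_le (S : Finset (Sym2 X)) (B : Finset X) :
    #{q ∈ B ×ˢ B | EdgeAdj S q.1 q.2} ≤ 2 * #(S ∩ B.sym2) := by
  refine card_le_mul_card_image_of_maps_to (f := fun q => s(q.1, q.2)) ?_ 2 ?_
  · rintro ⟨x, y⟩ h
    simp only [mem_filter, mem_product] at h
    rw [mem_inter, mk_mem_sym2_iff]
    exact ⟨h.2.2, h.1⟩
  · intro e _
    induction e using Sym2.ind with
    | _ u v =>
      refine (card_le_card (t := {(u, v), (v, u)}) ?_).trans card_le_two
      rintro ⟨x, y⟩ h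
      rw [mem_insert, mem_singleton]
      rcases Sym2.eq_iff.1 (mem_filter.1 h).2 with ⟨h1, h2⟩ | ⟨h1, h2⟩
      · exact Or.inl (Prod.ext h1 h2)
      · exact Or.inr (Prod.ext h1 h2)

variable [Fintype X]

/-- Few elements can be adjacent to the images of many vertices of `I`. -/
theorem card_large_nbrCount_le {S : Finset (Sym2 X)} {b : V → X} {I : Finset V} {F C Λ ζ : ℕ}
    (hF : ∀ x, #{v ∈ I | b v = x} ≤ F)
    (hC : ∀ z z', z ≠ z' → #{x | EdgeAdj S x z ∧ EdgeAdj S x z'} ≤ C)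
    (hζ : #I + (ζ + 1) ^ 2 * (F * C) < (ζ + 1) * Λ) :
    #{z | Λ ≤ nbrCount S b I z} ≤ ζ := by
  by_contra! hc
  obtain ⟨Y, hY, hYc⟩ := exists_subset_card_eq (Nat.succ_le_of_lt hc)
  have h1 : (ζ + 1) * Λ ≤ ∑ z ∈ Y, nbrCount S b I z := by
    rw [← Nat.succ_eq_add_one, ← hYc, ← smul_eq_mul, ← sum_const]
    exact sum_le_sum fun z hz => (mem_filter.1 (hY hz)).2
  have h2 : ∑ v ∈ I, #{z ∈ Y | EdgeAdj S (b v) z} ≤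
      ∑ v ∈ I, (1 + #({z ∈ Y | EdgeAdj S (b v) z}).offDiag) := by
    refine sum_le_sum fun v _ => ?_
    rw [offDiag_card]
    set d := #{z ∈ Y | EdgeAdj S (b v) z}
    rcases Nat.lt_or_ge d 2 with h | h
    · omega
    · have : 2 * d ≤ d * d := Nat.mul_le_mul_right d h
      omega
  have h3 : ∑ v ∈ I, #({z ∈ Y | EdgeAdj S (b v) z}).offDiag =
      ∑ q ∈ Y.offDiag, #{v ∈ I | b v ∈ ({x | EdgeAdj S x q.1 ∧ EdgeAdj S x q.2} : Finset X)} := by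
    have : ∀ v ∈ I, ({z ∈ Y | EdgeAdj S (b v) z}).offDiag =
        Y.offDiag.filter fun q => EdgeAdj S (b v) q.1 ∧ EdgeAdj S (b v) q.2 := by
      intro v _
      ext ⟨z, z'⟩
      simp only [mem_offDiag, mem_filter]
      tauto
    rw [sum_congr rfl fun v hv => by rw [this v hv]]
    simp only [card_filter, mem_filter_univ]
    exact sum_comm
  have h4 : ∑ q ∈ Y.offDiag,
      #{v ∈ I | b v ∈ ({x | EdgeAdj S x q.1 ∧ EdgeAdj S x q.2} : Finset X)} ≤
      (ζ + 1) ^ 2 * (F * C) := by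
    refine (sum_le_card_nsmul _ _ (F * C) fun q hq => ?_).trans ?_
    · exact (card_filter_comp_le I hF _).trans
        (Nat.mul_le_mul_left _ (hC _ _ (mem_offDiag.1 hq).2.2))
    · rw [smul_eq_mul, offDiag_card, hYc, Nat.succ_eq_add_one, sq]
      exact Nat.mul_le_mul_right _ (Nat.sub_le _ _)
  rw [sum_nbrCount] at h1
  rw [sum_add_distrib, sum_const, smul_eq_mul, mul_one] at h2
  omega

theorem card_lowPairs_le {S : Finset (Sym2 X)} {b : V → X} {I : Finset V} {F Λ : ℕ}
    (hF : ∀ x, #{v ∈ I | b v = x} ≤ F) :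
    #(lowPairs S b I Λ) ≤ #I * F + Λ * (F * (2 * #(S ∩ (I.image b).sym2))) +
      ∑ z ∈ (I.image b)ᶜ, if nbrCount S b I z < Λ then #(spreadPairs S b I z) else 0 := by
  classical
  set B := I.image b with hB
  have hsub : lowPairs S b I Λ ⊆ ({q ∈ I ×ˢ I | b q.2 = b q.1} ∪
      ({z ∈ B | nbrCount S b I z < Λ}).biUnion fun z =>
        {v ∈ I | EdgeAdj S (b v) z} ×ˢ {v ∈ I | EdgeAdj S (b v) z}) ∪
      ({z ∈ Bᶜ | nbrCount S b I z < Λ}).biUnion fun z => spreadPairs S b I z := by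
    rintro ⟨u, v⟩ h
    simp only [lowPairs, mem_filter, mem_product] at h
    obtain ⟨⟨hu, hv⟩, z, hz, h1, h2⟩ := h
    by_cases hb : b v = b u
    · exact mem_union_left _ (mem_union_left _ (by simp [hu, hv, hb]))
    by_cases hzB : z ∈ B
    · refine mem_union_left _ (mem_union_right _ (mem_biUnion.2 ⟨z, by simp [hzB, hz], ?_⟩))
      simp only [mem_product, mem_filter]
      exact ⟨⟨hu, h1⟩, hv, h2⟩
    · refine mem_union_right _ (mem_biUnion.2 ⟨z, by simp [hzB, hz], ?_⟩)
      simp only [spreadPairs, mem_product, mem_filter]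
      exact ⟨⟨hu, hv⟩, Ne.symm hb, h1, h2⟩
  refine (card_le_card hsub).trans ((card_union_le _ _).trans (Nat.add_le_add
    ((card_union_le _ _).trans (Nat.add_le_add ?_ ?_)) ?_))
  · rw [card_filter, sum_product, ← smul_eq_mul, ← sum_const]
    refine sum_le_sum fun u _ => ?_
    rw [← card_filter]
    exact hF (b u)
  · refine card_biUnion_le.trans ?_
    have h1 : ∑ z ∈ B with nbrCount S b I z < Λ,
        #({v ∈ I | EdgeAdj S (b v) z} ×ˢ {v ∈ I | EdgeAdj S (b v) z}) ≤
        ∑ z ∈ B, Λ * nbrCount S b I z := by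
      refine (sum_le_sum fun z hz => ?_).trans (sum_le_sum_of_subset (filter_subset _ _))
      rw [card_product]
      exact Nat.mul_le_mul_right _ (mem_filter.1 hz).2.le
    refine h1.trans ?_
    rw [← mul_sum]
    refine Nat.mul_le_mul_left _ ?_
    refine le_trans ?_ (Nat.mul_le_mul_left F (card_edges_within_le S B))
    calc ∑ z ∈ B, nbrCount S b I z = ∑ v ∈ I, #{z ∈ B | EdgeAdj S (b v) z} := sum_nbrCount ..
      _ = ∑ c ∈ B, ∑ v ∈ I with b v = c, #{z ∈ B | EdgeAdj S (b v) z} :=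
          (sum_fiberwise_of_maps_to (fun v hv => mem_image_of_mem b hv) _).symm
      _ ≤ ∑ c ∈ B, F * #{z ∈ B | EdgeAdj S c z} := by
          refine sum_le_sum fun c _ => ?_
          rw [sum_congr rfl (g := fun _ => #{z ∈ B | EdgeAdj S c z}) fun v hv => by
            rw [(mem_filter.1 hv).2], sum_const, smul_eq_mul]
          exact Nat.mul_le_mul_right _ (hF c)
      _ = F * #{q ∈ B ×ˢ B | EdgeAdj S q.1 q.2} := by
          rw [← mul_sum]
          simp only [card_filter, sum_product]
  · refine card_biUnion_le.trans_eq ?_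
    rw [sum_filter]

end LowPairs

section Tails

open Finset

variable {X : Type*} [Fintype X] [DecidableEq X]

theorem bernProb_exists_large_codegree_le {p : ℝ} (hp : 0 ≤ p) (hp1 : p ≤ 1) (C : ℕ) :
    bernProb p (fun S : Finset (Sym2 X) =>
      ∃ z z', z ≠ z' ∧ C < #{x | EdgeAdj S x z ∧ EdgeAdj S x z'}) ≤
      (Fintype.card X : ℝ) ^ 2 * (Fintype.card X * p ^ 2) ^ (C + 1) := by
  set E : (X × X) × Finset X → Finset (Sym2 X) := fun q =>
    q.2.image (fun x => s(x, q.1.1)) ∪ q.2.image (fun x => s(x, q.1.2)) with hE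
  set s : Finset ((X × X) × Finset X) := ((univ : Finset X).offDiag ×ˢ
    powersetCard (C + 1) univ).filter fun q => q.1.1 ∉ q.2 ∧ q.1.2 ∉ q.2 with hs
  have hcard : ∀ q ∈ s, #(E q) = 2 * (C + 1) := by
    rintro ⟨⟨z, z'⟩, Y⟩ hq
    simp only [hs, mem_filter, mem_product, mem_offDiag, mem_powersetCard] at hq
    obtain ⟨⟨⟨_, _, hne⟩, _, hY⟩, hz, hz'⟩ := hq
    have hinj : ∀ w : X, Function.Injective fun x => s(x, w) := fun w x x' h => by
      rcases Sym2.eq_iff.1 h with ⟨h, _⟩ | ⟨h, h'⟩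
      · exact h
      · exact h.trans h'
    rw [hE, card_union_of_disjoint, card_image_of_injective _ (hinj _),
      card_image_of_injective _ (hinj _), hY, two_mul]
    rw [disjoint_left]
    intro e he he'
    simp only [mem_image] at he he'
    obtain ⟨x, hx, rfl⟩ := he
    obtain ⟨y, hy, h⟩ := he'
    rcases Sym2.eq_iff.1 h with ⟨_, h⟩ | ⟨h, _⟩
    · exact hne h.symm
    · exact hz (h ▸ hy)
  calc bernProb p (fun S : Finset (Sym2 X) =>
      ∃ z z', z ≠ z' ∧ C < #{x | EdgeAdj S x z ∧ EdgeAdj S x z'})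
      ≤ bernProb p (fun S => ∃ q ∈ s, E q ⊆ S) := by
        refine bernProb_mono hp hp1 ?_
        rintro S ⟨z, z', hne, hC⟩
        obtain ⟨Y, hY, hYc⟩ := exists_subset_card_eq (Nat.succ_le_of_lt hC)
        have hY' : ∀ x ∈ Y, EdgeAdj S x z ∧ EdgeAdj S x z' := fun x hx => by
          simpa using hY hx
        refine ⟨((z, z'), Y), ?_, ?_⟩
        · simp only [hs, mem_filter, mem_product, mem_offDiag, mem_powersetCard, mem_univ,
            true_and, subset_univ]
          exact ⟨⟨hne, hYc⟩, fun h => (hY' z h).1.1 rfl, fun h => (hY' z' h).2.1 rfl⟩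
        · refine union_subset ?_ ?_
          · intro e he
            obtain ⟨x, hx, rfl⟩ := mem_image.1 he
            exact (hY' x hx).1.2
          · intro e he
            obtain ⟨x, hx, rfl⟩ := mem_image.1 he
            exact (hY' x hx).2.2
    _ ≤ ∑ q ∈ s, bernProb p (fun S => E q ⊆ S) := bernProb_exists_le hp hp1 _ _
    _ = #s * p ^ (2 * (C + 1)) := by
        rw [sum_congr rfl fun q hq => by rw [bernProb_subset, hcard q hq], sum_const,
          nsmul_eq_mul]
    _ ≤ ((Fintype.card X : ℝ) ^ 2 * (Fintype.card X : ℝ) ^ (C + 1)) * p ^ (2 * (C + 1)) := by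
        refine mul_le_mul_of_nonneg_right ?_ (by positivity)
        have h1 : #s ≤ Fintype.card X ^ 2 * Fintype.card X ^ (C + 1) := by
          refine (card_filter_le _ _).trans ?_
          rw [card_product, offDiag_card, card_powersetCard, card_univ, sq]
          exact Nat.mul_le_mul (Nat.sub_le _ _) (Nat.choose_le_pow _ _)
        exact_mod_cast h1
    _ = _ := by rw [mul_pow, ← pow_mul]; ring

theorem bernProb_exists_large_degree_le {p : ℝ} (hp : 0 ≤ p) (hp1 : p ≤ 1) {l : ℝ} (hl : 0 ≤ l)
    (d : ℕ) :
    bernProb p (fun S : Finset (Sym2 X) => ∃ z, d < #{x | EdgeAdj S x z}) ≤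
      Fintype.card X * Real.exp (-(l * d) + p * (Real.exp l - 1) * Fintype.card X) := by
  set O : X → Finset (Sym2 X) := fun z => univ.image fun x => s(x, z) with hO
  have hOc : ∀ z, #(O z) ≤ Fintype.card X := fun z => card_image_le.trans_eq card_univ
  have hel : 0 ≤ Real.exp l - 1 := by linarith [Real.one_le_exp hl]
  calc bernProb p (fun S : Finset (Sym2 X) => ∃ z, d < #{x | EdgeAdj S x z})
      ≤ bernProb p (fun S => ∃ z ∈ univ, (d : ℝ) ≤ (#(S ∩ O z) : ℝ)) := by
        refine bernProb_mono hp hp1 ?_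
        rintro S ⟨z, hz⟩
        refine ⟨z, mem_univ z, ?_⟩
        have : #{x | EdgeAdj S x z} ≤ #(S ∩ O z) := by
          refine card_le_card_of_injOn (fun x => s(x, z)) ?_ ?_
          · intro x hx
            simp only [coe_filter, mem_univ, true_and, Set.mem_ofPred_eq] at hx
            simp [hO, hx.2]
          · intro x _ y _ h
            rcases Sym2.eq_iff.1 h with ⟨h, _⟩ | ⟨h, h'⟩
            · exact h
            · exact h.trans h'
        exact_mod_cast (hz.le.trans this)
    _ ≤ ∑ z, bernProb p (fun S => (d : ℝ) ≤ (#(S ∩ O z) : ℝ)) := bernProb_exists_le hp hp1 _ _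
    _ ≤ ∑ _z : X, Real.exp (-(l * d) + p * (Real.exp l - 1) * Fintype.card X) := by
        refine sum_le_sum fun z _ => (bernProb_le_card_inter hp hp1 hl (O z) d).trans ?_
        have : (#(O z) : ℝ) ≤ Fintype.card X := by exact_mod_cast hOc z
        gcongr
    _ = _ := by rw [sum_const, card_univ, nsmul_eq_mul]

theorem bernProb_exists_triangle_packing_le {p : ℝ} (hp : 0 ≤ p) (hp1 : p ≤ 1) (A : Finset X)
    (j : ℕ) :
    bernProb p (fun S : Finset (Sym2 X) => ∃ 𝒯 : Finset (Finset (Sym2 X)),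
      (∀ t ∈ 𝒯, t ⊆ S ∧ t ∈ trianglesMeeting A) ∧
      (𝒯 : Set (Finset (Sym2 X))).PairwiseDisjoint id ∧ j ≤ #𝒯) ≤
      ((#A ^ 2 * Fintype.card X).choose j : ℝ) * p ^ (3 * j) := by
  classical
  set s := (powersetCard j (trianglesMeeting A)).filter
    fun 𝒯 : Finset (Finset (Sym2 X)) =>
    (𝒯 : Set (Finset (Sym2 X))).PairwiseDisjoint id with hs
  calc _ ≤ bernProb p (fun S : Finset (Sym2 X) => ∃ 𝒯 ∈ s, 𝒯.biUnion id ⊆ S) := by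
        refine bernProb_mono hp hp1 ?_
        rintro S ⟨𝒯, h1, h2, h3⟩
        obtain ⟨𝒰, h𝒰, hc⟩ := exists_subset_card_eq h3
        refine ⟨𝒰, mem_filter.2 ⟨mem_powersetCard.2 ⟨fun t ht => (h1 t (h𝒰 ht)).2, hc⟩,
          h2.subset (coe_subset.2 h𝒰)⟩, biUnion_subset.2 fun t ht => (h1 t (h𝒰 ht)).1⟩
    _ ≤ ∑ 𝒯 ∈ s, bernProb p (fun S : Finset (Sym2 X) => 𝒯.biUnion id ⊆ S) :=
        bernProb_exists_le hp hp1 _ _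
    _ = #s * p ^ (3 * j) := by
        rw [← nsmul_eq_mul, ← sum_const]
        refine sum_congr rfl fun 𝒯 h𝒯 => ?_
        rw [mem_filter, mem_powersetCard] at h𝒯
        rw [bernProb_subset, card_biUnion fun t ht t' ht' hne => h𝒯.2 ht ht' hne]
        congr 1
        simp only [id]
        rw [sum_congr rfl fun t ht => card_of_mem_trianglesMeeting (h𝒯.1.1 ht), sum_const,
          h𝒯.1.2, smul_eq_mul, mul_comm]
    _ ≤ _ := by
        refine mul_le_mul_of_nonneg_right ?_ (by positivity)
        refine Nat.cast_le.2 ((card_filter_le _ _).trans ?_)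
        rw [card_powersetCard]
        exact Nat.choose_le_choose _ (card_trianglesMeeting_le A)

theorem bernProb_many_edges_within_le {p : ℝ} (hp : 0 ≤ p) (hp1 : p ≤ 1) {l : ℝ} (hl : 0 ≤ l)
    (B : Finset X) (J : ℕ) :
    bernProb p (fun S : Finset (Sym2 X) => J < #(S ∩ B.sym2)) ≤
      Real.exp (-(l * J) + p * (Real.exp l - 1) * (#B : ℝ) ^ 2) := by
  have hel : 0 ≤ Real.exp l - 1 := by linarith [Real.one_le_exp hl]
  calc _ ≤ bernProb p (fun S : Finset (Sym2 X) => (J : ℝ) ≤ (#(S ∩ B.sym2) : ℝ)) :=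
        bernProb_mono hp hp1 fun S h => by exact_mod_cast h.le
    _ ≤ _ := bernProb_le_card_inter hp hp1 hl _ _
    _ ≤ _ := by
        have : #B.sym2 ≤ #B ^ 2 := by
          rw [card_sym2, Nat.choose_two_right, Nat.add_sub_cancel]
          refine Nat.div_le_of_le_mul ?_
          nlinarith [Nat.le_mul_self #B]
        have : (#B.sym2 : ℝ) ≤ (#B : ℝ) ^ 2 := by exact_mod_cast this
        gcongr

theorem pairProb_many_edges_on_lowPairs_le {V : Type*} {p : ℝ} (hp : 0 ≤ p) (hp1 : p ≤ 1) {l : ℝ}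
    (hl : 0 ≤ l) (a b : V → X) (I : Finset V) (Λ M j : ℕ) :
    pairProb p (fun S₁ S₂ : Finset (Sym2 X) => #(lowPairs S₂ b I Λ) ≤ M ∧
      j < #(S₁ ∩ (lowPairs S₂ b I Λ).image fun q => s(a q.1, a q.2))) ≤
      Real.exp (-(l * j) + p * (Real.exp l - 1) * M) := by
  have hel : 0 ≤ Real.exp l - 1 := by linarith [Real.one_le_exp hl]
  refine pairProb_left_le hp hp1 fun S₂ => ?_
  by_cases hM : #(lowPairs S₂ b I Λ) ≤ M
  · have h1 : ((#((lowPairs S₂ b I Λ).image fun q => s(a q.1, a q.2)) : ℕ) : ℝ) ≤ M :=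
      Nat.cast_le.2 (card_image_le.trans hM)
    refine (bernProb_mono hp hp1 (Q := fun S => (j : ℝ) ≤
      (#(S ∩ (lowPairs S₂ b I Λ).image fun q => s(a q.1, a q.2)) : ℝ)) fun S h => ?_).trans
      ((bernProb_le_card_inter hp hp1 hl _ _).trans ?_)
    · exact_mod_cast h.2.le
    · gcongr
  · have : (fun S₁ : Finset (Sym2 X) => #(lowPairs S₂ b I Λ) ≤ M ∧
      j < #(S₁ ∩ (lowPairs S₂ b I Λ).image fun q => s(a q.1, a q.2))) = fun _ => False := by
      ext; simp [hM]
    rw [this]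
    simp only [bernProb, if_false, bernExp_const]
    positivity

end Tails

section LowSpread

open Finset

variable {V X : Type*} [DecidableEq X]

/-- The number of spread pairs at `z` if `z` has low weight. -/
def lowSpread (S : Finset (Sym2 X)) (b : V → X) (I : Finset V) (Λ : ℕ) (z : X) : ℕ :=
  if nbrCount S b I z < Λ then #(spreadPairs S b I z) else 0

theorem lowSpread_congr {S S' : Finset (Sym2 X)} {b : V → X} {I : Finset V} {Λ : ℕ} {z : X}
    (h : ∀ v ∈ I, (s(b v, z) ∈ S ↔ s(b v, z) ∈ S')) :
    lowSpread S b I Λ z = lowSpread S' b I Λ z := by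
  have h1 : nbrCount S b I z = nbrCount S' b I z := by
    refine congrArg card (filter_congr fun v hv => ?_)
    rw [EdgeAdj, EdgeAdj, h v hv]
  have h2 : spreadPairs S b I z = spreadPairs S' b I z := by
    refine filter_congr fun q hq => ?_
    rw [mem_product] at hq
    rw [EdgeAdj, EdgeAdj, EdgeAdj, EdgeAdj, h _ hq.1, h _ hq.2]
  rw [lowSpread, lowSpread, h1, h2]

theorem card_spreadPairs_le (S : Finset (Sym2 X)) (b : V → X) (I : Finset V) (z : X) :
    #(spreadPairs S b I z) ≤ nbrCount S b I z ^ 2 := by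
  rw [sq, nbrCount, ← card_product]
  refine card_le_card ?_
  intro q hq
  simp only [spreadPairs, mem_filter, mem_product] at hq ⊢
  tauto

theorem nbrCount_eq_sum {S : Finset (Sym2 X)} {b : V → X} {I : Finset V} {z : X}
    (hz : z ∉ I.image b) :
    nbrCount S b I z = ∑ e ∈ S, #{v ∈ I | s(b v, z) = e} := by
  have h : ({v ∈ I | EdgeAdj S (b v) z} : Finset V) = {v ∈ I | s(b v, z) ∈ S} := by
    refine filter_congr fun v hv => ⟨fun h => h.2, fun h => ⟨?_, h⟩⟩
    rintro rfl
    exact hz (mem_image_of_mem b hv)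
  have h' : #{v ∈ I | s(b v, z) ∈ S} =
      ∑ e ∈ S, #{v ∈ {v ∈ I | s(b v, z) ∈ S} | s(b v, z) = e} :=
    card_eq_sum_card_fiberwise fun v hv => (mem_filter.1 hv).2
  rw [nbrCount, h, h']
  refine sum_congr rfl fun e he => congrArg card ?_
  ext v
  simp only [mem_filter]
  constructor
  · rintro ⟨⟨h1, _⟩, h2⟩; exact ⟨h1, h2⟩
  · rintro ⟨h1, h2⟩; exact ⟨⟨h1, h2 ▸ he⟩, h2⟩

variable [Fintype X]

theorem bernExp_exp_nbrCount_le {p μ : ℝ} (hp : 0 ≤ p) (hp1 : p ≤ 1) (hμ : 0 ≤ μ) {F : ℕ}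
    (hμF : μ * F ≤ 1) {b : V → X} {I : Finset V} (hF : ∀ x, #{v ∈ I | b v = x} ≤ F) {z : X}
    (hz : z ∉ I.image b) {x y : X} (hxy : x ≠ y) :
    bernExp p (fun S => (if s(x, z) ∈ S ∧ s(y, z) ∈ S then 1 else 0) *
      Real.exp (μ * nbrCount S b I z)) ≤ (p * Real.exp 1) ^ 2 * Real.exp (2 * p * μ * #I) := by
  set ω : Sym2 X → ℕ := fun e => #{v ∈ I | s(b v, z) = e} with hω
  have hωF : ∀ e, ω e ≤ F := by
    intro e
    rcases (filter (fun v => s(b v, z) = e) I).eq_empty_or_nonempty with h | ⟨v, hv⟩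
    · simp [hω, h]
    · refine (card_le_card ?_).trans (hF (b v))
      intro u hu
      simp only [mem_filter] at hu hv ⊢
      refine ⟨hu.1, ?_⟩
      rcases Sym2.eq_iff.1 (hu.2.trans hv.2.symm) with ⟨h, _⟩ | ⟨h, h'⟩
      · exact h
      · exact h.trans h'
  have hωsum : ∑ e, ω e = #I := (card_eq_sum_card_fiberwise fun v _ => mem_univ _).symm
  set P : Finset (Sym2 X) := {s(x, z), s(y, z)} with hP
  have hPc : #P = 2 := by
    rw [hP, card_pair]
    intro h
    rcases Sym2.eq_iff.1 h with ⟨h, _⟩ | ⟨h, h'⟩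
    · exact hxy h
    · exact hxy (h.trans h')
  have h1 : ∀ S : Finset (Sym2 X), (if s(x, z) ∈ S ∧ s(y, z) ∈ S then 1 else 0) *
      Real.exp (μ * nbrCount S b I z) =
      ∏ e, if e ∈ S then Real.exp (μ * ω e) else (if e ∈ P then 0 else 1) := by
    intro S
    rw [nbrCount_eq_sum hz, Nat.cast_sum, mul_sum, Real.exp_sum]
    have : ∀ e, (if e ∈ S then Real.exp (μ * ω e) else (if e ∈ P then 0 else 1)) =
        (if e ∈ P → e ∈ S then 1 else 0) * (if e ∈ S then Real.exp (μ * ω e) else 1) := by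
      intro e
      by_cases h1 : e ∈ S <;> by_cases h2 : e ∈ P <;> simp [h1, h2]
    rw [prod_congr rfl fun e _ => this e, prod_mul_distrib, prod_ite_mem, univ_inter]
    congr 1
    rw [prod_ite_zero]
    simp [hP]
  simp only [h1]
  rw [bernExp_prod]
  have hexp : ∀ t : ℝ, 0 ≤ t → t ≤ 1 → Real.exp t ≤ 1 + 2 * t := by
    intro t ht ht1
    have := Real.exp_bound' ht ht1 (n := 2) (by norm_num)
    norm_num [Finset.sum_range_succ] at this
    nlinarith
  have h2 : ∀ e, p * Real.exp (μ * ω e) + (1 - p) * (if e ∈ P then 0 else 1) ≤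
      (if e ∈ P then p * Real.exp 1 else 1) * Real.exp (2 * p * μ * ω e) := by
    intro e
    have ht0 : 0 ≤ μ * ω e := by positivity
    have ht1 : μ * ω e ≤ 1 :=
      (mul_le_mul_of_nonneg_left (Nat.cast_le.2 (hωF e)) hμ).trans hμF
    split_ifs with he
    · have h3 : Real.exp (μ * ω e) ≤ Real.exp 1 := Real.exp_le_exp.2 ht1
      have h4 : 1 ≤ Real.exp (2 * p * μ * ω e) := Real.one_le_exp (by positivity)
      rw [mul_zero, add_zero]
      calc p * Real.exp (μ * ω e) ≤ p * Real.exp 1 := by gcongr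
        _ ≤ _ := le_mul_of_one_le_right (by positivity) h4
    · have h3 := hexp _ ht0 ht1
      have h4 := Real.add_one_le_exp (2 * p * μ * ω e)
      nlinarith [mul_le_mul_of_nonneg_left h3 hp]
  refine (prod_le_prod (fun e _ => ?_) fun e _ => h2 e).trans_eq ?_
  · have := Real.exp_pos (μ * ω e)
    split_ifs
    · positivity
    · nlinarith [mul_nonneg hp this.le]
  · rw [prod_mul_distrib, prod_ite_mem, univ_inter, prod_const, hPc, ← Real.exp_sum, ← mul_sum,
      ← Nat.cast_sum, hωsum]

theorem bernExp_exp_lowSpread_le {p μ l : ℝ} (hp : 0 ≤ p) (hp1 : p ≤ 1) (hl : 0 ≤ l) {F Λ : ℕ}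
    (hlΛ : l * Λ ≤ μ) (hμF : μ * F ≤ 1) {b : V → X} {I : Finset V}
    (hF : ∀ x, #{v ∈ I | b v = x} ≤ F) {z : X} (hz : z ∉ I.image b) :
    bernExp p (fun S => Real.exp (l * lowSpread S b I Λ z)) ≤
      Real.exp (l * (#I ^ 2 * ((p * Real.exp 1) ^ 2 * Real.exp (2 * p * μ * #I)))) := by
  have hμ : 0 ≤ μ := le_trans (by positivity) hlΛ
  set W : Finset (V × V) := {q ∈ I ×ˢ I | b q.1 ≠ b q.2} with hW
  have hWc : #W ≤ #I ^ 2 := by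
    refine (card_filter_le _ _).trans_eq ?_
    rw [card_product, sq]
  have hpt : ∀ S : Finset (Sym2 X), Real.exp (l * lowSpread S b I Λ z) ≤
      1 + l * ∑ q ∈ W, (if s(b q.1, z) ∈ S ∧ s(b q.2, z) ∈ S then 1 else 0) *
        Real.exp (μ * nbrCount S b I z) := by
    intro S
    rw [← sum_mul, ← mul_assoc]
    have hsum : (#(spreadPairs S b I z) : ℝ) ≤
        ∑ q ∈ W, if s(b q.1, z) ∈ S ∧ s(b q.2, z) ∈ S then 1 else 0 := by
      rw [sum_boole]
      refine Nat.cast_le.2 (card_le_card ?_)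
      intro q hq
      simp only [spreadPairs, hW, mem_filter, mem_product] at hq ⊢
      exact ⟨⟨hq.1, hq.2.1⟩, hq.2.2.1.2, hq.2.2.2.2⟩
    have hs0 : (0 : ℝ) ≤ ∑ q ∈ W, if s(b q.1, z) ∈ S ∧ s(b q.2, z) ∈ S then 1 else 0 :=
      le_trans (by positivity) hsum
    rw [lowSpread]
    split_ifs with hlow
    · set q : ℝ := (#(spreadPairs S b I z) : ℝ) with hq
      have hq1 : l * q ≤ μ * nbrCount S b I z := by
        have h1 : q ≤ (nbrCount S b I z : ℝ) ^ 2 := by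
          rw [hq]; exact_mod_cast card_spreadPairs_le S b I z
        have h2 : (nbrCount S b I z : ℝ) ≤ Λ := Nat.cast_le.2 hlow.le
        have h3 : (0 : ℝ) ≤ nbrCount S b I z := Nat.cast_nonneg _
        calc l * q ≤ l * (Λ * nbrCount S b I z) := by
              refine mul_le_mul_of_nonneg_left (h1.trans ?_) hl
              rw [sq]; gcongr
          _ = l * Λ * nbrCount S b I z := by ring
          _ ≤ _ := by gcongr
      have hq0 : 0 ≤ l * q := by positivity
      have h1 : Real.exp (l * q) ≤ 1 + l * q * Real.exp (l * q) := by
        have := Real.add_one_le_exp (-(l * q))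
        have h2 : Real.exp (-(l * q)) * Real.exp (l * q) = 1 := by
          rw [← Real.exp_add]; simp
        nlinarith [Real.exp_pos (l * q)]
      refine h1.trans (add_le_add_right ?_ _)
      exact mul_le_mul (mul_le_mul_of_nonneg_left hsum hl) (Real.exp_le_exp.2 hq1)
        (Real.exp_pos _).le (by positivity)
    · simp only [Nat.cast_zero, mul_zero, Real.exp_zero]
      have := mul_nonneg (mul_nonneg hl hs0) (Real.exp_pos (μ * nbrCount S b I z)).le
      linarith
  refine (bernExp_mono hp hp1 hpt).trans ?_
  rw [bernExp_add, bernExp_const, bernExp_const_mul, bernExp_sum]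
  have hsum : ∑ q ∈ W, bernExp p (fun S => (if s(b q.1, z) ∈ S ∧ s(b q.2, z) ∈ S then 1 else 0) *
        Real.exp (μ * nbrCount S b I z)) ≤
      #I ^ 2 * ((p * Real.exp 1) ^ 2 * Real.exp (2 * p * μ * #I)) := by
    refine (sum_le_card_nsmul _ _ _ fun q hq =>
      bernExp_exp_nbrCount_le hp hp1 hμ hμF hF hz (mem_filter.1 hq).2).trans ?_
    rw [nsmul_eq_mul]
    refine mul_le_mul_of_nonneg_right ?_ (by positivity)
    exact_mod_cast hWc
  have h1 := mul_le_mul_of_nonneg_left hsum hl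
  have h2 := Real.add_one_le_exp
    (l * (#I ^ 2 * ((p * Real.exp 1) ^ 2 * Real.exp (2 * p * μ * #I))))
  linarith

theorem bernExp_prod_lowSpread (p : ℝ) (g : ℕ → ℝ) (b : V → X) (I : Finset V) (Λ : ℕ)
    (Y : Finset X) (hY : ∀ z ∈ Y, z ∉ I.image b) :
    bernExp p (fun S => ∏ z ∈ Y, g (lowSpread S b I Λ z)) =
      ∏ z ∈ Y, bernExp p (fun S => g (lowSpread S b I Λ z)) := by
  induction Y using Finset.induction_on with
  | empty => simp [bernExp_const]
  | insert z Y hz ih =>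
    rw [prod_insert hz, ← ih fun z hz => hY z (mem_insert_of_mem hz)]
    simp only [prod_insert hz]
    refine bernExp_mul_of_disjoint p (I.image fun v => s(b v, z)) (fun S => ?_) fun S => ?_
    · refine congrArg g (lowSpread_congr fun v hv => ?_)
      rw [mem_inter, and_iff_left (mem_image_of_mem _ hv)]
    · refine prod_congr rfl fun z' hz' => congrArg g (lowSpread_congr fun v hv => ?_)
      rw [mem_sdiff, and_iff_left]
      rw [mem_image]
      rintro ⟨u, hu, h⟩
      rcases Sym2.eq_iff.1 h with ⟨_, h⟩ | ⟨h, _⟩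
      · exact hz (h ▸ hz')
      · exact hY z' (mem_insert_of_mem hz') (h ▸ mem_image_of_mem b hu)

theorem bernProb_large_sum_lowSpread_le {p μ l : ℝ} (hp : 0 ≤ p) (hp1 : p ≤ 1) (hl : 0 ≤ l)
    {F Λ : ℕ} (hlΛ : l * Λ ≤ μ) (hμF : μ * F ≤ 1) {b : V → X} {I : Finset V}
    (hF : ∀ x, #{v ∈ I | b v = x} ≤ F) (M : ℕ) :
    bernProb p (fun S => M < ∑ z ∈ (I.image b)ᶜ, lowSpread S b I Λ z) ≤
      Real.exp (-(l * M) + l * (Fintype.card X *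
        (#I ^ 2 * ((p * Real.exp 1) ^ 2 * Real.exp (2 * p * μ * #I))))) := by
  calc _ ≤ bernExp p (fun S => Real.exp (-(l * M)) *
        ∏ z ∈ (I.image b)ᶜ, Real.exp (l * lowSpread S b I Λ z)) := by
        refine bernProb_le_bernExp hp hp1
          (fun S => mul_nonneg (Real.exp_pos _).le (prod_nonneg fun _ _ => (Real.exp_pos _).le))
          fun S hS => ?_
        rw [← Real.exp_sum, ← Real.exp_add, ← mul_sum, ← Nat.cast_sum]
        have : (M : ℝ) ≤ ((∑ z ∈ (I.image b)ᶜ, lowSpread S b I Λ z : ℕ) : ℝ) :=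
          Nat.cast_le.2 hS.le
        refine Real.one_le_exp ?_
        nlinarith [mul_le_mul_of_nonneg_left this hl]
    _ = Real.exp (-(l * M)) *
        ∏ z ∈ (I.image b)ᶜ, bernExp p (fun S => Real.exp (l * lowSpread S b I Λ z)) := by
        rw [bernExp_const_mul]
        congr 1
        exact bernExp_prod_lowSpread p (fun t => Real.exp (l * t)) b I Λ _
          fun z hz => mem_compl.1 hz
    _ ≤ Real.exp (-(l * M)) * ∏ _z ∈ (I.image b)ᶜ,
        Real.exp (l * (#I ^ 2 * ((p * Real.exp 1) ^ 2 * Real.exp (2 * p * μ * #I)))) := by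
        refine mul_le_mul_of_nonneg_left (prod_le_prod (fun z _ =>
          bernExp_nonneg hp hp1 fun _ => (Real.exp_pos _).le) fun z hz => ?_) (Real.exp_pos _).le
        exact bernExp_exp_lowSpread_le hp hp1 hl hlΛ hμF hF (mem_compl.1 hz)
    _ ≤ _ := by
        rw [prod_const, ← Real.exp_nat_mul, ← Real.exp_add]
        refine Real.exp_le_exp.2 (add_le_add_right ?_ _)
        rw [mul_left_comm]
        refine mul_le_mul_of_nonneg_left (mul_le_mul_of_nonneg_right ?_ (by positivity)) hl
        exact Nat.cast_le.2 (card_le_univ _)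

end LowSpread

section CertificateBounds

open Finset

/-- The optimization behind the two-colour trade-off: `u`, `v` are the proportions of unlabelled
vertices and `x`, `y` those of labelled ones. -/
theorem two_colour_tradeoff {u v x y x₁ y₁ r₁ r₂ q₁ q₂ : ℝ} (hu : 0 ≤ u) (hv : 0 ≤ v)
    (huy : u + y ≤ 1) (hvx : v + x ≤ 1) (hur : u ≤ r₁) (hvr : v ≤ r₂)
    (hx₁ : 0 ≤ x₁) (hy₁ : 0 ≤ y₁) (hxr : x₁ ≤ r₁) (hyr : y₁ ≤ r₂) (hx : x₁ ≤ x) (hy : y₁ ≤ y)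
    (hq₁ : q₁ ≤ x₁ ^ 2) (hq₂ : q₂ ≤ y₁ ^ 2) (hq₁' : q₁ ≤ 0.42 * x₁) (hq₂' : q₂ ≤ 0.42 * y₁) :
    u + v - 1 + 0.02 ≤ 1.17 * ((r₁ ^ 2 - q₁) + (r₂ ^ 2 - q₂)) / 2 := by
  have h1 : u ^ 2 ≤ r₁ ^ 2 := by gcongr
  have h2 : v ^ 2 ≤ r₂ ^ 2 := by gcongr
  have h3 : x₁ ^ 2 ≤ r₁ ^ 2 := by gcongr
  have h4 : y₁ ^ 2 ≤ r₂ ^ 2 := by gcongr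
  have h5 : x₁ ^ 2 ≤ (1 - v) ^ 2 := pow_le_pow_left₀ hx₁ (by linarith) 2
  have h6 : y₁ ^ 2 ≤ (1 - u) ^ 2 := pow_le_pow_left₀ hy₁ (by linarith) 2
  rcases le_total (u + v) 0.98 with h | h
  · linarith
  rcases le_total 1.12 (u + v) with h' | h'
  · have h7 : (1 - v) ^ 2 = 1 - 2 * v + v ^ 2 := by ring
    have h8 : (1 - u) ^ 2 = 1 - 2 * u + u ^ 2 := by ring
    linarith
  · have h9 : (u + v) ^ 2 / 2 ≤ u ^ 2 + v ^ 2 := by linarith [sq_nonneg (u - v), sq_nonneg (u + v),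
      (by ring : (u + v) ^ 2 = u ^ 2 + v ^ 2 + 2 * u * v),
      (by ring : (u - v) ^ 2 = u ^ 2 + v ^ 2 - 2 * u * v)]
    have h10 : 0 ≤ (1.12 - (u + v)) * (1.12 - (u + v)) := mul_self_nonneg _
    have h11 : (1.12 - (u + v)) * (1.12 - (u + v)) = 1.2544 - 2.24 * (u + v) + (u + v) ^ 2 := by
      ring
    linarith

variable {V X : Type*} [DecidableEq X] [Fintype X]

theorem exists_unlabelled_count {a b : V → X} {I I₁ : Finset V} {Z₁ Z₂ : Finset X} {q D : ℕ}
    {φ₁ φ₂ : X → Option (Option X)} (hI : I₁ ⊆ I) (ha : Set.InjOn a I₁)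
    (him : I₁.image a = I.image a)
    (hφ₁ : IsLabelling a I Z₁ q D φ₁) (hφ₂ : IsLabelling b I Z₂ q D φ₂) :
    ∃ u : ℕ, u ≤ #(regularPart a b I₁ φ₁ φ₂) ∧
      u + #{v ∈ I | ∃ z, φ₁ (a v) = some (some z)} ≤ #I ∧
      #(I.image a) ≤ #(labelEdges φ₁) + u + 2 * q := by
  classical
  have hinj : ∀ (P : X → Prop) [DecidablePred P], #{x ∈ I.image a | P x} = #{v ∈ I₁ | P (a v)} := by
    intro P _
    rw [← him, filter_image, card_image_of_injOn]
    exact ha.mono (coe_subset.2 (filter_subset _ _))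
  have hA : #(I.image a) = #I₁ := by rw [← him, card_image_of_injOn ha]
  have hf : #{v ∈ I₁ | φ₁ (a v) = some none} ≤ #(regularPart a b I₁ φ₁ φ₂) + q := by
    refine le_trans (card_le_card (t := regularPart a b I₁ φ₁ φ₂ ∪ {v ∈ I | φ₂ (b v) = none}) ?_)
      ((card_union_le _ _).trans (Nat.add_le_add_left hφ₂.card_none_le _))
    intro v hv
    rw [mem_filter] at hv
    rw [mem_union, regularPart, mem_filter, mem_filter]
    by_cases h : φ₂ (b v) = none
    · exact Or.inr ⟨hI hv.1, h⟩
    · exact Or.inl ⟨hv.1, by simp [hv.2], h⟩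
  refine ⟨min #{v ∈ I₁ | φ₁ (a v) = some none} #(regularPart a b I₁ φ₁ φ₂), min_le_right _ _,
    ?_, ?_⟩
  · refine (Nat.add_le_add_right (min_le_left _ _) _).trans ?_
    rw [← card_union_of_disjoint]
    · refine card_le_card (union_subset ((filter_subset _ _).trans hI) (filter_subset _ _))
    · rw [disjoint_left]
      intro v h1 h2
      obtain ⟨_, z, hz⟩ := mem_filter.1 h2
      rw [(mem_filter.1 h1).2] at hz
      simp at hz
  · rw [card_labelEdges hφ₁, hinj, hA]
    have hq : #{v ∈ I₁ | φ₁ (a v) = none} ≤ q :=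
      (card_le_card (filter_subset_filter _ hI)).trans hφ₁.card_none_le
    have h1 := card_filter_add_card_filter_not (s := I₁) (fun v => φ₁ (a v) = none)
    have h2 := card_filter_add_card_filter_not (s := {v ∈ I₁ | ¬ φ₁ (a v) = none})
      (fun v => φ₁ (a v) = some none)
    rw [filter_filter, filter_filter] at h2
    have h3 : #{v ∈ I₁ | ¬ φ₁ (a v) = none ∧ φ₁ (a v) = some none} ≤
        #{v ∈ I₁ | φ₁ (a v) = some none} :=
      card_le_card (monotone_filter_right _ fun v _ h => h.2)
    simp only [ne_eq]
    omega

theorem exists_labelled_count {a b : V → X} {I I₁ : Finset V} {Z₂ : Finset X} {q D : ℕ}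
    {φ₁ φ₂ : X → Option (Option X)} (hI : I₁ ⊆ I) (ha : Set.InjOn a I₁)
    (hφ₂ : IsLabelling b I Z₂ q D φ₂) :
    ∃ x₁ Q : ℕ, #(regularPart a b I₁ φ₁ φ₂) ^ 2 ≤
        2 * #(openPairs a b I₁ φ₁ φ₂) + #(regularPart a b I₁ φ₁ φ₂) + Q ∧
      Q ≤ x₁ ^ 2 ∧ Q ≤ D * x₁ ∧ x₁ ≤ #(regularPart a b I₁ φ₁ φ₂) ∧
      x₁ ≤ #{v ∈ I | ∃ z, φ₂ (b v) = some (some z)} := by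
  classical
  set R := regularPart a b I₁ φ₁ φ₂ with hR
  have hRI : R ⊆ I := (filter_subset _ _).trans hI
  have hsum : ∑ z, #{u ∈ R | φ₂ (b u) = some (some z)} =
      #{u ∈ R | ∃ z, φ₂ (b u) = some (some z)} := by
    rw [← card_biUnion]
    · congr 1
      ext u
      simp
    · intro z _ z' _ hne
      rw [Function.onFun, disjoint_left]
      intro u h1 h2
      have h3 := (mem_filter.1 h1).2.symm.trans (mem_filter.1 h2).2
      simp only [Option.some.injEq] at h3
      exact hne h3
  refine ⟨∑ z, #{u ∈ R | φ₂ (b u) = some (some z)}, _, card_regularPart_sq_le ha, ?_, ?_, ?_, ?_⟩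
  · rw [sq (∑ z, _), sum_mul]
    refine sum_le_sum fun z _ => ?_
    rw [sq]
    exact Nat.mul_le_mul_left _
      (single_le_sum (f := fun z => #{u ∈ R | φ₂ (b u) = some (some z)})
        (fun _ _ => Nat.zero_le _) (mem_univ z))
  · rw [mul_sum]
    refine sum_le_sum fun z _ => ?_
    rw [sq]
    exact Nat.mul_le_mul_right _
      ((card_le_card (filter_subset_filter _ hRI)).trans (hφ₂.card_some_le z))
  · rw [hsum]
    exact card_le_card (filter_subset _ _)
  · rw [hsum]
    exact card_le_card (filter_subset_filter _ hRI)

/-- The weight of a pair of labellings. -/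
theorem certificate_weight_le {a b : V → X} {I I₁ I₂ : Finset V} {Z₁ Z₂ : Finset X} {q D j : ℕ}
    {φ₁ φ₂ : X → Option (Option X)} (hI₁ : I₁ ⊆ I) (ha : Set.InjOn a I₁)
    (him₁ : I₁.image a = I.image a) (hI₂ : I₂ ⊆ I) (hb : Set.InjOn b I₂)
    (him₂ : I₂.image b = I.image b)
    (hφ₁ : IsLabelling a I Z₁ q D φ₁) (hφ₂ : IsLabelling b I Z₂ q D φ₂)
    {p c l h L B ρ : ℝ} (hI : 0 < #I) (hp : 0 ≤ p) (hph : p ≤ Real.exp (-h)) (hh : 0 ≤ h)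
    (hhL : h ≤ L / 2) (hρ : Real.exp h ≤ ρ) (hc : 0 ≤ c) (hpc : 0.585 * L / #I ≤ p * c)
    (hD : (D : ℝ) ≤ 0.42 * #I)
    (hB : B + 2 * (l * j) + 4 * (q * h) + (L / 2 - h) * (2 * #I) + p * c * #I ≤
      L / 2 * (1.02 * #I)) :
    (p ^ #(labelEdges φ₁) * Real.exp (l * j - p * c * #(openPairs a b I₁ φ₁ φ₂))) *
      (p ^ #(labelEdges φ₂) * Real.exp (l * j - p * c * #(openPairs b a I₂ φ₂ φ₁))) ≤
      ρ ^ ((#I - #(I.image a)) + (#I - #(I.image b))) * Real.exp (-B) := by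
  obtain ⟨u, hu1, hu2, hu3⟩ := exists_unlabelled_count hI₁ ha him₁ hφ₁ hφ₂
  obtain ⟨v, hv1, hv2, hv3⟩ := exists_unlabelled_count hI₂ hb him₂ hφ₂ hφ₁
  obtain ⟨x₁, Q₁, hx1, hx2, hx3, hx4, hx5⟩ := exists_labelled_count (φ₁ := φ₁) hI₁ ha hφ₂
  obtain ⟨y₁, Q₂, hy1, hy2, hy3, hy4, hy5⟩ := exists_labelled_count (φ₁ := φ₂) hI₂ hb hφ₁
  have hR₁ : #(regularPart a b I₁ φ₁ φ₂) ≤ #I :=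
    (card_le_card (filter_subset _ _)).trans (card_le_card hI₁)
  have hR₂ : #(regularPart b a I₂ φ₂ φ₁) ≤ #I :=
    (card_le_card (filter_subset _ _)).trans (card_le_card hI₂)
  have hr : #(I.image a) ≤ #I := card_image_le
  have ht : #(I.image b) ≤ #I := card_image_le
  generalize #(regularPart a b I₁ φ₁ φ₂) = R₁ at *
  generalize #(regularPart b a I₂ φ₂ φ₁) = R₂ at *
  generalize #(openPairs a b I₁ φ₁ φ₂) = N₁ at *
  generalize #(openPairs b a I₂ φ₂ φ₁) = N₂ at *
  generalize #(labelEdges φ₁) = T₁ at *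
  generalize #(labelEdges φ₂) = T₂ at *
  generalize #(I.image a) = r at *
  generalize #(I.image b) = t at *
  generalize #{v ∈ I | ∃ z, φ₁ (a v) = some (some z)} = y at *
  generalize #{v ∈ I | ∃ z, φ₂ (b v) = some (some z)} = x at *
  generalize #I = k at *
  have hk : (0 : ℝ) < k := by exact_mod_cast hI
  rify at *
  have hpow : ∀ T : ℕ, p ^ T ≤ Real.exp (-(h * T)) := fun T => by
    refine (pow_le_pow_left₀ hp hph T).trans_eq ?_
    rw [← Real.exp_nat_mul]; ring_nf
  have hρpow : Real.exp (h * (2 * k - r - t)) ≤ ρ ^ ((k - r) + (k - t)) := by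
    refine le_trans (le_of_eq ?_) (pow_le_pow_left₀ (Real.exp_nonneg _) hρ _)
    rw [← Real.exp_nat_mul]
    push_cast [Nat.cast_sub (by exact_mod_cast hr : r ≤ k), Nat.cast_sub
      (by exact_mod_cast ht : t ≤ k)]
    ring_nf
  have key := two_colour_tradeoff (u := u / k) (v := v / k) (x := x / k) (y := y / k)
    (x₁ := x₁ / k) (y₁ := y₁ / k) (r₁ := R₁ / k) (r₂ := R₂ / k) (q₁ := Q₁ / k ^ 2)
    (q₂ := Q₂ / k ^ 2) (by positivity) (by positivity)
    (by rw [← add_div]; exact div_le_one_of_le₀ hu2 hk.le)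
    (by rw [← add_div]; exact div_le_one_of_le₀ hv2 hk.le) (by gcongr) (by gcongr)
    (by positivity) (by positivity) (by gcongr) (by gcongr) (by gcongr) (by gcongr)
    (by rw [div_pow]; gcongr) (by rw [div_pow]; gcongr)
    (by rw [div_le_iff₀ (by positivity)]
        have : 0.42 * ((x₁ : ℝ) / k) * k ^ 2 = 0.42 * k * x₁ := by field_simp
        rw [this]; exact hx3.trans (by gcongr))
    (by rw [div_le_iff₀ (by positivity)]
        have : 0.42 * ((y₁ : ℝ) / k) * k ^ 2 = 0.42 * k * y₁ := by field_simp
        rw [this]; exact hy3.trans (by gcongr))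
  have hP₁ : 0 ≤ (R₁ : ℝ) ^ 2 - Q₁ := by
    have : (x₁ : ℝ) ^ 2 ≤ R₁ ^ 2 := by gcongr
    linarith
  have hP₂ : 0 ≤ (R₂ : ℝ) ^ 2 - Q₂ := by
    have : (y₁ : ℝ) ^ 2 ≤ R₂ ^ 2 := by gcongr
    linarith
  have key' : L / 2 * (u + v - 0.98 * k) ≤
      p * c * (((R₁ : ℝ) ^ 2 - Q₁ + (R₂ ^ 2 - Q₂)) / 2) := by
    refine le_trans ?_ (mul_le_mul_of_nonneg_right hpc (by positivity))
    have h1 : (u + v - 0.98 * k : ℝ) = k * ((u : ℝ) / k + v / k - 1 + 0.02) := by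
      field_simp; ring
    have h2 : 0.585 * L / k * (((R₁ : ℝ) ^ 2 - Q₁ + (R₂ ^ 2 - Q₂)) / 2) = L / 2 * (k * (1.17 *
      (((R₁ : ℝ) / k) ^ 2 - Q₁ / k ^ 2 + ((R₂ / k) ^ 2 - Q₂ / k ^ 2)) / 2)) := by
      field_simp; ring
    rw [h1, h2]
    have hL : 0 ≤ L / 2 := hh.trans hhL
    gcongr
  have hpc0 : 0 ≤ p * c := mul_nonneg hp hc
  have hN : p * c * (((R₁ : ℝ) ^ 2 - Q₁ + (R₂ ^ 2 - Q₂)) / 2) ≤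
      p * c * N₁ + p * c * N₂ + p * c * k := by
    rw [← mul_add, ← mul_add]
    refine mul_le_mul_of_nonneg_left ?_ hpc0
    linarith
  calc _ ≤ (Real.exp (-(h * T₁)) * Real.exp (l * j - p * c * N₁)) *
        (Real.exp (-(h * T₂)) * Real.exp (l * j - p * c * N₂)) := by
        gcongr
        · exact hpow _
        · exact hpow _
    _ = Real.exp (-(h * T₁) + (l * j - p * c * N₁) + (-(h * T₂) + (l * j - p * c * N₂))) := by
        rw [Real.exp_add, Real.exp_add, Real.exp_add]
    _ ≤ Real.exp (h * (2 * k - r - t) + -B) := by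
        refine Real.exp_le_exp.2 ?_
        have h1 : h * (r - u - 2 * q) ≤ h * T₁ := mul_le_mul_of_nonneg_left (by linarith) hh
        have h2 : h * (t - v - 2 * q) ≤ h * T₂ := mul_le_mul_of_nonneg_left (by linarith) hh
        have h3 : 0 ≤ (L / 2 - h) * (u + v) :=
          mul_nonneg (by linarith) (by positivity)
        linarith
    _ ≤ _ := by
        rw [Real.exp_add]
        gcongr

end CertificateBounds

section SecondExposure

open Finset

variable {V X : Type*} [DecidableEq X] [Fintype X]

/-- A labelled configuration that an independent set forces to appear. -/
def HasCertificate (a b : V → X) (I I₁ I₂ : Finset V) (ζ q D j : ℕ) (S₁ S₂ : Finset (Sym2 X)) :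
    Prop :=
  ∃ Z₁ Z₂ φ₁ φ₂, #Z₁ = ζ ∧ #Z₂ = ζ ∧ IsLabelling a I Z₁ q D φ₁ ∧ IsLabelling b I Z₂ q D φ₂ ∧
    (labelEdges φ₁ ⊆ S₁ ∧ #(S₁ ∩ openPairs a b I₁ φ₁ φ₂) ≤ j) ∧
    (labelEdges φ₂ ⊆ S₂ ∧ #(S₂ ∩ openPairs b a I₂ φ₂ φ₁) ≤ j)

/-- The unlikely events concerning a single vertex set `I`. -/
def IsAtypical (a b : V → X) (I : Finset V) (Λ j' J M₀ M j₂ : ℕ) (S₁ S₂ : Finset (Sym2 X)) :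
    Prop :=
  (∃ 𝒯 : Finset (Finset (Sym2 X)), (∀ t ∈ 𝒯, t ⊆ S₁ ∧ t ∈ trianglesMeeting (I.image a)) ∧
    (𝒯 : Set (Finset (Sym2 X))).PairwiseDisjoint id ∧ j' + 1 ≤ #𝒯) ∨
  J < #(S₂ ∩ (I.image b).sym2) ∨
  M₀ < ∑ z ∈ (I.image b)ᶜ, lowSpread S₂ b I Λ z ∨
  (#(lowPairs S₂ b I Λ) ≤ M ∧
    j₂ < #(S₁ ∩ (lowPairs S₂ b I Λ).image fun q => s(a q.1, a q.2)))

/-- The candidates for labellings with respect to a set of `ζ` centres. -/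
def labellingCandidates (A : Finset X) (ζ : ℕ) :
    Finset ((_ : Finset X) × (X → Option (Option X))) :=
  (powersetCard ζ univ).sigma fun Z => Fintype.piFinset fun x =>
    if x ∈ A then insert none (insert (some none) (Z.image fun z => some (some z))) else {none}

theorem card_labellingCandidates_le (A : Finset X) (ζ : ℕ) :
    #(labellingCandidates A ζ) ≤ Fintype.card X ^ ζ * (ζ + 2) ^ #A := by
  rw [labellingCandidates, card_sigma]
  refine (sum_le_card_nsmul _ _ ((ζ + 2) ^ #A) fun Z hZ => ?_).trans ?_
  · rw [Fintype.card_piFinset]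
    calc _ ≤ ∏ x, if x ∈ A then ζ + 2 else 1 := by
          refine prod_le_prod' fun x _ => ?_
          split_ifs
          · refine (card_insert_le _ _).trans (Nat.succ_le_succ ((card_insert_le _ _).trans
              (Nat.succ_le_succ (card_image_le.trans_eq (mem_powersetCard.1 hZ).2))))
          · simp
      _ = _ := by simp [prod_ite_mem]
  · rw [smul_eq_mul, card_powersetCard, card_univ]
    exact Nat.mul_le_mul_right _ (Nat.choose_le_pow _ _)

theorem IsLabelling.mem_labellingCandidates {a : V → X} {I : Finset V} {Z : Finset X} {q D : ℕ}
    {φ : X → Option (Option X)} (hφ : IsLabelling a I Z q D φ) :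
    (⟨Z, φ⟩ : (_ : Finset X) × (X → Option (Option X))) ∈
      labellingCandidates (I.image a) #Z := by
  rw [labellingCandidates, mem_sigma]
  refine ⟨mem_powersetCard.2 ⟨subset_univ _, rfl⟩, Fintype.mem_piFinset.2 fun x => ?_⟩
  rcases hφ.range x with h | ⟨h0, h | ⟨z, hz, h⟩⟩
  · split_ifs <;> simp [h]
  · rw [if_pos h0]; simp [h]
  · rw [if_pos h0]; simp [h, hz]

theorem pairProb_hasCertificate_le {a b : V → X} {I I₁ I₂ : Finset V} {ζ q D j : ℕ}
    (hI₁ : I₁ ⊆ I) (ha : Set.InjOn a I₁) (him₁ : I₁.image a = I.image a) (hI₂ : I₂ ⊆ I)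
    (hb : Set.InjOn b I₂) (him₂ : I₂.image b = I.image b)
    {p l h L B ρ : ℝ} (hI : 0 < #I) (hp : 0 ≤ p) (hp1 : p ≤ 1) (hl : 0 ≤ l)
    (hph : p ≤ Real.exp (-h)) (hh : 0 ≤ h)
    (hhL : h ≤ L / 2) (hρ : Real.exp h ≤ ρ)
    (hpc : 0.585 * L / #I ≤ p * (1 - Real.exp (-l)))
    (hD : (D : ℝ) ≤ 0.42 * #I)
    (hB : B + 2 * (l * j) + 4 * (q * h) + (L / 2 - h) * (2 * #I) +
      p * (1 - Real.exp (-l)) * #I ≤ L / 2 * (1.02 * #I)) :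
    pairProb p (HasCertificate a b I I₁ I₂ ζ q D j) ≤
      ((Fintype.card X : ℝ) ^ ζ * (ζ + 2) ^ #I) ^ 2 *
        (ρ ^ ((#I - #(I.image a)) + (#I - #(I.image b))) * Real.exp (-B)) := by
  classical
  have hc : 0 ≤ 1 - Real.exp (-l) := by
    have := Real.exp_le_one_iff.2 (neg_nonpos.2 hl)
    linarith
  have hρ0 : 0 ≤ ρ := (Real.exp_nonneg _).trans hρ
  set s := (labellingCandidates (I.image a) ζ ×ˢ labellingCandidates (I.image b) ζ).filter
    fun c => IsLabelling a I c.1.1 q D c.1.2 ∧ IsLabelling b I c.2.1 q D c.2.2 with hs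
  calc _ ≤ pairProb p (fun S₁ S₂ => ∃ c ∈ s,
        (labelEdges c.1.2 ⊆ S₁ ∧ (#(S₁ ∩ openPairs a b I₁ c.1.2 c.2.2) : ℝ) ≤ j) ∧
        (labelEdges c.2.2 ⊆ S₂ ∧ (#(S₂ ∩ openPairs b a I₂ c.2.2 c.1.2) : ℝ) ≤ j)) := by
        refine pairProb_mono hp hp1 ?_
        rintro S₁ S₂ ⟨Z₁, Z₂, φ₁, φ₂, rfl, h2, h3, h4, ⟨h5, h6⟩, h7, h8⟩
        refine ⟨(⟨Z₁, φ₁⟩, ⟨Z₂, φ₂⟩), mem_filter.2 ⟨mem_product.2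
          ⟨h3.mem_labellingCandidates, h2 ▸ h4.mem_labellingCandidates⟩, h3, h4⟩,
          ⟨h5, by exact_mod_cast h6⟩, h7, by exact_mod_cast h8⟩
    _ ≤ ∑ c ∈ s, _ := pairProb_exists_le hp hp1 s _
    _ ≤ ∑ c ∈ s, ρ ^ ((#I - #(I.image a)) + (#I - #(I.image b))) * Real.exp (-B) := by
        refine sum_le_sum fun c hc' => ?_
        obtain ⟨h1, h2⟩ := (mem_filter.1 hc').2
        rw [pairProb_and p (fun S₁ => labelEdges c.1.2 ⊆ S₁ ∧
          (#(S₁ ∩ openPairs a b I₁ c.1.2 c.2.2) : ℝ) ≤ j) (fun S₂ => labelEdges c.2.2 ⊆ S₂ ∧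
          (#(S₂ ∩ openPairs b a I₂ c.2.2 c.1.2) : ℝ) ≤ j)]
        refine le_trans (mul_le_mul
          (bernProb_subset_and_card_inter_le hp hp1 hl (disjoint_labelEdges_openPairs h1) _)
          (bernProb_subset_and_card_inter_le hp hp1 hl (disjoint_labelEdges_openPairs h2) _)
          (bernProb_nonneg hp hp1 _) (by positivity)) ?_
        exact certificate_weight_le hI₁ ha him₁ hI₂ hb him₂ h1 h2 hI hp hph hh hhL hρ hc hpc hD hB
    _ ≤ _ := by
        rw [sum_const, nsmul_eq_mul]
        refine mul_le_mul_of_nonneg_right ?_ (by positivity)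
        have hcard : ∀ f : V → X, (#(labellingCandidates (I.image f) ζ) : ℝ) ≤
            (Fintype.card X : ℝ) ^ ζ * (ζ + 2) ^ #I := by
          intro f
          have h1 : #(labellingCandidates (I.image f) ζ) ≤ Fintype.card X ^ ζ * (ζ + 2) ^ #I :=
            (card_labellingCandidates_le _ _).trans (Nat.mul_le_mul_left _
              (Nat.pow_le_pow_right (by omega) card_image_le))
          exact_mod_cast h1
        calc (#s : ℝ) ≤ #(labellingCandidates (I.image a) ζ) *
              #(labellingCandidates (I.image b) ζ) := by
              exact_mod_cast (card_filter_le _ _).trans_eq (card_product _ _)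
          _ ≤ _ := by
              rw [sq]
              exact mul_le_mul (hcard a) (hcard b) (by positivity) (by positivity)

theorem pairProb_isAtypical_le {a b : V → X} {I : Finset V} {F Λ j' J M₀ M j₂ : ℕ}
    (hF : ∀ x, #{v ∈ I | b v = x} ≤ F) {p μ l₀ l₂ l₃ : ℝ} (hp : 0 ≤ p) (hp1 : p ≤ 1)
    (hl₀ : 0 ≤ l₀) (hl₂ : 0 ≤ l₂) (hl₃ : 0 ≤ l₃) (hlΛ : l₀ * Λ ≤ μ) (hμF : μ * F ≤ 1) :
    pairProb p (IsAtypical a b I Λ j' J M₀ M j₂) ≤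
      ((#I ^ 2 * Fintype.card X).choose (j' + 1) : ℝ) * p ^ (3 * (j' + 1)) +
      (Real.exp (-(l₂ * J) + p * (Real.exp l₂ - 1) * (#I : ℝ) ^ 2) +
      (Real.exp (-(l₀ * M₀) + l₀ * (Fintype.card X *
        (#I ^ 2 * ((p * Real.exp 1) ^ 2 * Real.exp (2 * p * μ * #I))))) +
      Real.exp (-(l₃ * j₂) + p * (Real.exp l₃ - 1) * M))) := by
  unfold IsAtypical
  refine (pairProb_or_le hp hp1 _ _).trans (add_le_add ?_
    ((pairProb_or_le hp hp1 _ _).trans (add_le_add ?_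
    ((pairProb_or_le hp hp1 _ _).trans (add_le_add ?_ ?_)))))
  · refine pairProb_left_le hp hp1 fun _ =>
      (bernProb_exists_triangle_packing_le hp hp1 _ _).trans ?_
    gcongr
    exact card_image_le
  · refine pairProb_right_le hp hp1 fun _ => (bernProb_many_edges_within_le hp hp1 hl₂ _ _).trans ?_
    have hel : 0 ≤ Real.exp l₂ - 1 := by linarith [Real.one_le_exp hl₂]
    gcongr
    exact card_image_le
  · exact pairProb_right_le hp hp1 fun _ =>
      bernProb_large_sum_lowSpread_le hp hp1 hl₀ hlΛ hμF hF M₀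
  · exact pairProb_many_edges_on_lowPairs_le hp hp1 hl₃ a b I Λ M j₂

theorem card_inter_openPairs_le_of_not_isAtypical {a b : V → X} {I I₁ : Finset V}
    {S₁ S₂ S₂' : Finset (Sym2 X)} {𝒯 : Finset (Finset (Sym2 X))} {Z : Finset X}
    {F Λ j' J M₀ M j₂ : ℕ} {φ₁ φ₂ : X → Option (Option X)}
    (hF : ∀ x, #{v ∈ I | b v = x} ≤ F) (hI : I₁ ⊆ I) (ha : Set.InjOn a I₁)
    (hind : ∀ u ∈ I, ∀ v ∈ I, u ≠ v →
      ¬ (twoBite a b (S₁ \ 𝒯.biUnion id) S₁ S₂' S₂).Adj u v)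
    (h𝒯 : ∀ t ∈ 𝒯, t ⊆ S₁ ∧ ∃ x y z, x ≠ y ∧ y ≠ z ∧ x ≠ z ∧ t = triangleEdges x y z)
    (h𝒯' : (𝒯 : Set (Finset (Sym2 X))).PairwiseDisjoint id)
    (hM : #I * F + Λ * (F * (2 * J)) + M₀ ≤ M)
    (htyp : ¬ IsAtypical a b I Λ j' J M₀ M j₂ S₁ S₂)
    (hZ : ∀ z, Λ ≤ nbrCount S₂ b I z → z ∈ Z)
    (hφ₂ : ∀ x, φ₂ x ≠ none → ∀ z ∈ Z, EdgeAdj S₂ x z → φ₂ x = some (some z)) :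
    #(S₁ ∩ openPairs a b I₁ φ₁ φ₂) ≤ 3 * j' + j₂ := by
  simp only [IsAtypical, not_or] at htyp
  obtain ⟨h1, h2, h3, h4⟩ := htyp
  refine card_inter_openPairs_le hI ha hind (fun t ht => (h𝒯 t ht).2) ?_ ?_ hZ hφ₂
  · by_contra! hc
    exact h1 ⟨_, fun t ht => ⟨(h𝒯 t (mem_filter.1 ht).1).1, (mem_filter.1 ht).2⟩,
      h𝒯'.subset (coe_subset.2 (filter_subset _ _)), hc⟩
  · by_contra! hc
    refine h4 ⟨(card_lowPairs_le hF).trans (le_trans ?_ hM), hc⟩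
    have h3' : ∑ z ∈ (I.image b)ᶜ, (if nbrCount S₂ b I z < Λ then #(spreadPairs S₂ b I z) else 0)
      ≤ M₀ := not_lt.1 h3
    gcongr
    exact not_lt.1 h2

theorem exists_centres {S : Finset (Sym2 X)} {b : V → X} {I : Finset V} {F C Λ ζ : ℕ}
    (hF : ∀ x, #{v ∈ I | b v = x} ≤ F)
    (hC : ∀ z z', z ≠ z' → #{x | EdgeAdj S x z ∧ EdgeAdj S x z'} ≤ C)
    (hζ : #I + (ζ + 1) ^ 2 * (F * C) < (ζ + 1) * Λ) (hζX : ζ ≤ Fintype.card X) :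
    ∃ Z : Finset X, #Z = ζ ∧ ∀ z, Λ ≤ nbrCount S b I z → z ∈ Z := by
  obtain ⟨Z, hZ, -, hZc⟩ := exists_subsuperset_card_eq (subset_univ _)
    (card_large_nbrCount_le hF hC hζ) (by rwa [card_univ])
  exact ⟨Z, hZc, fun z hz => hZ (by simpa using hz)⟩

end SecondExposure

section Combination

open Finset

variable {V X : Type*}

theorem twoBite_adj_comm {a b : V → X} {S₁' S₁ S₂' S₂ : Finset (Sym2 X)} {u v : V} :
    (twoBite b a S₂' S₂ S₁' S₁).Adj u v ↔ (twoBite a b S₁' S₁ S₂' S₂).Adj u v :=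
  or_comm

variable [DecidableEq X]

theorem exists_injOn_subset_image_eq (f : V → X) (I : Finset V) :
    ∃ I₁ ⊆ I, Set.InjOn f I₁ ∧ I₁.image f = I.image f := by
  obtain ⟨u, hu, hf, h⟩ := exists_subset_injOn_image_eq_of_surjOn (f := f) I (I.image f)
    (by rw [coe_image]; exact Set.surjOn_image _ _)
  exact ⟨u, by exact_mod_cast hu, hf, h⟩

variable [Fintype X]

/-- An independent set in the two-bite graph yields a certificate, unless something atypical
happens. -/
theorem hasCertificate_of_independent {a b : V → X} {I I₁ I₂ : Finset V}
    {S₁ S₂ : Finset (Sym2 X)} {𝒯₁ 𝒯₂ : Finset (Finset (Sym2 X))}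
    {F C d ζ q D Λ j' J M₀ M j₂ : ℕ}
    (hFa : ∀ x, #{v ∈ I | a v = x} ≤ F) (hFb : ∀ x, #{v ∈ I | b v = x} ≤ F)
    (hI₁ : I₁ ⊆ I) (ha : Set.InjOn a I₁) (hI₂ : I₂ ⊆ I) (hb : Set.InjOn b I₂)
    (hind : ∀ u ∈ I, ∀ v ∈ I, u ≠ v →
      ¬ (twoBite a b (S₁ \ 𝒯₁.biUnion id) S₁ (S₂ \ 𝒯₂.biUnion id) S₂).Adj u v)
    (h𝒯₁ : ∀ t ∈ 𝒯₁, t ⊆ S₁ ∧ ∃ x y z, x ≠ y ∧ y ≠ z ∧ x ≠ z ∧ t = triangleEdges x y z)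
    (h𝒯₁' : (𝒯₁ : Set (Finset (Sym2 X))).PairwiseDisjoint id)
    (h𝒯₂ : ∀ t ∈ 𝒯₂, t ⊆ S₂ ∧ ∃ x y z, x ≠ y ∧ y ≠ z ∧ x ≠ z ∧ t = triangleEdges x y z)
    (h𝒯₂' : (𝒯₂ : Set (Finset (Sym2 X))).PairwiseDisjoint id)
    (hM : #I * F + Λ * (F * (2 * J)) + M₀ ≤ M)
    (hζ : #I + (ζ + 1) ^ 2 * (F * C) < (ζ + 1) * Λ) (hζX : ζ ≤ Fintype.card X)
    (hq : F * (ζ + ζ ^ 2 * C) ≤ q) (hD : F * d ≤ D)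
    (hC₁ : ∀ z z', z ≠ z' → #{x | EdgeAdj S₁ x z ∧ EdgeAdj S₁ x z'} ≤ C)
    (hC₂ : ∀ z z', z ≠ z' → #{x | EdgeAdj S₂ x z ∧ EdgeAdj S₂ x z'} ≤ C)
    (hd₁ : ∀ z, #{x | EdgeAdj S₁ x z} ≤ d) (hd₂ : ∀ z, #{x | EdgeAdj S₂ x z} ≤ d)
    (ht₁ : ¬ IsAtypical a b I Λ j' J M₀ M j₂ S₁ S₂)
    (ht₂ : ¬ IsAtypical b a I Λ j' J M₀ M j₂ S₂ S₁) :
    HasCertificate a b I I₁ I₂ ζ q D (3 * j' + j₂) S₁ S₂ := by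
  obtain ⟨Z₁, hZ₁, hZ₁'⟩ := exists_centres hFa hC₁ hζ hζX
  obtain ⟨Z₂, hZ₂, hZ₂'⟩ := exists_centres hFb hC₂ hζ hζX
  obtain ⟨φ₁, hφ₁, hE₁, hφ₁'⟩ := exists_isLabelling (Z := Z₁) (q := q) hFa hC₁ hd₁
    (by rwa [hZ₁]) hD
  obtain ⟨φ₂, hφ₂, hE₂, hφ₂'⟩ := exists_isLabelling (Z := Z₂) (q := q) hFb hC₂ hd₂
    (by rwa [hZ₂]) hD
  refine ⟨Z₁, Z₂, φ₁, φ₂, hZ₁, hZ₂, hφ₁, hφ₂, ⟨hE₁, ?_⟩, hE₂, ?_⟩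
  · exact card_inter_openPairs_le_of_not_isAtypical hFb hI₁ ha hind h𝒯₁ h𝒯₁' hM ht₁ hZ₂' hφ₂'
  · exact card_inter_openPairs_le_of_not_isAtypical hFa hI₂ hb
      (fun u hu v hv huv h => hind u hu v hv huv (twoBite_adj_comm.1 h)) h𝒯₂ h𝒯₂' hM ht₂ hZ₁' hφ₁'

theorem exists_cliqueFree_of_maps [Fintype V] {a b : V → X} {k F C d ζ q D Λ j' J M₀ M j₂ : ℕ}
    {p l h L B W μ l₀ l₁ l₂ l₃ : ℝ} (hk : 0 < k)
    (hFa : ∀ x, #{v | a v = x} ≤ F) (hFb : ∀ x, #{v | b v = x} ≤ F)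
    (hW : ∑ I ∈ powersetCard k (univ : Finset V), ((Fintype.card X : ℝ) / k) ^
        ((k - #(I.image a)) + (k - #(I.image b))) ≤ W)
    (hM : k * F + Λ * (F * (2 * J)) + M₀ ≤ M)
    (hζ : k + (ζ + 1) ^ 2 * (F * C) < (ζ + 1) * Λ) (hζX : ζ ≤ Fintype.card X)
    (hq : F * (ζ + ζ ^ 2 * C) ≤ q) (hD : F * d ≤ D) (hD' : (D : ℝ) ≤ 0.42 * k)
    (hp : 0 ≤ p) (hp1 : p ≤ 1) (hl : 0 ≤ l) (hl₀ : 0 ≤ l₀) (hl₁ : 0 ≤ l₁) (hl₂ : 0 ≤ l₂)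
    (hl₃ : 0 ≤ l₃) (hlΛ : l₀ * Λ ≤ μ) (hμF : μ * F ≤ 1)
    (hph : p ≤ Real.exp (-h)) (hh : 0 ≤ h) (hhL : h ≤ L / 2)
    (hρ : Real.exp h ≤ (Fintype.card X : ℝ) / k)
    (hpc : 0.585 * L / k ≤ p * (1 - Real.exp (-l)))
    (hB : B + 2 * (l * ↑(3 * j' + j₂)) + 4 * (q * h) + (L / 2 - h) * (2 * k) +
      p * (1 - Real.exp (-l)) * k ≤ L / 2 * (1.02 * k))
    (hmain : ((Fintype.card X : ℝ) ^ ζ * (ζ + 2) ^ k) ^ 2 * (W * Real.exp (-B)) ≤ 1 / 4)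
    (hcod : (Fintype.card X : ℝ) ^ 2 * (Fintype.card X * p ^ 2) ^ (C + 1) ≤ 1 / 16)
    (hdeg : Fintype.card X * Real.exp (-(l₁ * d) + p * (Real.exp l₁ - 1) * Fintype.card X) ≤
      1 / 16)
    (hpack : ((Fintype.card V).choose k : ℝ) *
      (((k ^ 2 * Fintype.card X).choose (j' + 1) : ℝ) * p ^ (3 * (j' + 1))) ≤ 1 / 32)
    (hedge : ((Fintype.card V).choose k : ℝ) *
      Real.exp (-(l₂ * J) + p * (Real.exp l₂ - 1) * (k : ℝ) ^ 2) ≤ 1 / 32)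
    (hspread : ((Fintype.card V).choose k : ℝ) *
      Real.exp (-(l₀ * M₀) + l₀ * (Fintype.card X *
        (k ^ 2 * ((p * Real.exp 1) ^ 2 * Real.exp (2 * p * μ * k))))) ≤ 1 / 32)
    (hlow : ((Fintype.card V).choose k : ℝ) *
      Real.exp (-(l₃ * j₂) + p * (Real.exp l₃ - 1) * M) ≤ 1 / 32) :
    ∃ G : SimpleGraph V, G.CliqueFree 3 ∧
      ∀ I : Finset V, #I = k → ¬ ∀ u ∈ I, ∀ v ∈ I, u ≠ v → ¬ G.Adj u v := by
  choose σ hσ hσi hσim using exists_injOn_subset_image_eq (V := V) (X := X)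
  have hFI : ∀ {f : V → X}, (∀ x, #{v | f v = x} ≤ F) → ∀ (I : Finset V) x,
      #{v ∈ I | f v = x} ≤ F := fun hf I x =>
    (card_le_card (filter_subset_filter _ (subset_univ I))).trans (hf x)
  set PI := powersetCard k (univ : Finset V) with hPI
  have hPIc : (#PI : ℝ) = ((Fintype.card V).choose k : ℝ) := by
    rw [hPI, card_powersetCard, card_univ]
  have hatyp : ∀ a b : V → X, (∀ x, #{v | b v = x} ≤ F) →
      pairProb p (fun S₁ S₂ => ∃ I ∈ PI, IsAtypical a b I Λ j' J M₀ M j₂ S₁ S₂) ≤ 1 / 8 := by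
    intro a b hFb
    calc _ ≤ ∑ I ∈ PI, pairProb p (IsAtypical a b I Λ j' J M₀ M j₂) :=
          pairProb_exists_le hp hp1 _ _
      _ ≤ ∑ I ∈ PI, (((k ^ 2 * Fintype.card X).choose (j' + 1) : ℝ) * p ^ (3 * (j' + 1)) +
          (Real.exp (-(l₂ * J) + p * (Real.exp l₂ - 1) * (k : ℝ) ^ 2) +
          (Real.exp (-(l₀ * M₀) + l₀ * (Fintype.card X *
            (k ^ 2 * ((p * Real.exp 1) ^ 2 * Real.exp (2 * p * μ * k))))) +
          Real.exp (-(l₃ * j₂) + p * (Real.exp l₃ - 1) * M)))) :=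
          sum_le_sum fun I hI => (mem_powersetCard.1 hI).2 ▸
            pairProb_isAtypical_le (hFI hFb I) hp hp1 hl₀ hl₂ hl₃ hlΛ hμF
      _ ≤ 1 / 8 := by
          rw [sum_const, nsmul_eq_mul, hPIc]
          linarith
  have hcert : pairProb p (fun S₁ S₂ => ∃ I ∈ PI,
      HasCertificate a b I (σ a I) (σ b I) ζ q D (3 * j' + j₂) S₁ S₂) ≤ 1 / 4 := by
    calc _ ≤ ∑ I ∈ PI, pairProb p
          (HasCertificate a b I (σ a I) (σ b I) ζ q D (3 * j' + j₂)) :=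
          pairProb_exists_le hp hp1 _ _
      _ ≤ ∑ I ∈ PI, ((Fintype.card X : ℝ) ^ ζ * (ζ + 2) ^ k) ^ 2 *
          (((Fintype.card X : ℝ) / k) ^ ((k - #(I.image a)) + (k - #(I.image b))) *
            Real.exp (-B)) := by
          refine sum_le_sum fun I hI => ?_
          obtain rfl := (mem_powersetCard.1 hI).2
          exact pairProb_hasCertificate_le (hσ a I) (hσi a I) (hσim a I) (hσ b I) (hσi b I)
            (hσim b I) hk hp hp1 hl hph hh hhL hρ hpc hD' hB
      _ = ((Fintype.card X : ℝ) ^ ζ * (ζ + 2) ^ k) ^ 2 *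
          ((∑ I ∈ PI, ((Fintype.card X : ℝ) / k) ^
            ((k - #(I.image a)) + (k - #(I.image b)))) * Real.exp (-B)) := by
          rw [← mul_sum, sum_mul]
      _ ≤ _ := le_trans (by gcongr) hmain
  set Irr : Finset (Sym2 X) → Prop := fun S =>
    (∃ z z', z ≠ z' ∧ C < #{x | EdgeAdj S x z ∧ EdgeAdj S x z'}) ∨
      ∃ z, d < #{x | EdgeAdj S x z} with hIrr
  have hirr : bernProb p Irr ≤ 1 / 8 := by
    refine (bernProb_or_le hp hp1 _ _).trans ?_
    linarith [bernProb_exists_large_codegree_le (X := X) hp hp1 C,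
      bernProb_exists_large_degree_le (X := X) hp hp1 hl₁ d]
  have htotal : pairProb p (fun S₁ S₂ =>
      (∃ I ∈ PI, HasCertificate a b I (σ a I) (σ b I) ζ q D (3 * j' + j₂) S₁ S₂) ∨
      (∃ I ∈ PI, IsAtypical a b I Λ j' J M₀ M j₂ S₁ S₂) ∨
      (∃ I ∈ PI, IsAtypical b a I Λ j' J M₀ M j₂ S₂ S₁) ∨ Irr S₁ ∨ Irr S₂) < 1 := by
    have h1 := pairProb_or_le hp hp1
      (fun S₁ S₂ => ∃ I ∈ PI, HasCertificate a b I (σ a I) (σ b I) ζ q D (3 * j' + j₂) S₁ S₂)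
      (fun S₁ S₂ => (∃ I ∈ PI, IsAtypical a b I Λ j' J M₀ M j₂ S₁ S₂) ∨
        (∃ I ∈ PI, IsAtypical b a I Λ j' J M₀ M j₂ S₂ S₁) ∨ Irr S₁ ∨ Irr S₂)
    have h2 := pairProb_or_le hp hp1
      (fun S₁ S₂ => ∃ I ∈ PI, IsAtypical a b I Λ j' J M₀ M j₂ S₁ S₂)
      (fun S₁ S₂ => (∃ I ∈ PI, IsAtypical b a I Λ j' J M₀ M j₂ S₂ S₁) ∨ Irr S₁ ∨ Irr S₂)
    have h3 := pairProb_or_le hp hp1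
      (fun S₁ S₂ => ∃ I ∈ PI, IsAtypical b a I Λ j' J M₀ M j₂ S₂ S₁)
      (fun S₁ S₂ => Irr S₁ ∨ Irr S₂)
    have h4 := pairProb_or_le hp hp1 (fun S₁ _ => Irr S₁) (fun _ S₂ => Irr S₂)
    have h5 : pairProb p (fun S₁ _ => Irr S₁) ≤ 1 / 8 := pairProb_left_le hp hp1 fun _ => hirr
    have h6 : pairProb p (fun _ S₂ => Irr S₂) ≤ 1 / 8 := pairProb_right_le hp hp1 fun _ => hirr
    have h7 := pairProb_swap p (fun S₁ S₂ => ∃ I ∈ PI, IsAtypical b a I Λ j' J M₀ M j₂ S₁ S₂)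
    linarith [hatyp a b hFb, hatyp b a hFa]
  obtain ⟨S₁, S₂, hS⟩ := exists_not_of_pairProb_lt_one htotal
  simp only [hIrr, not_or] at hS
  obtain ⟨h1, h2, h3, ⟨h4, h5⟩, h6, h7⟩ := hS
  push Not at h4 h5 h6 h7
  obtain ⟨𝒯₁, h𝒯₁, h𝒯₁', hf₁⟩ := exists_triangle_packing S₁
  obtain ⟨𝒯₂, h𝒯₂, h𝒯₂', hf₂⟩ := exists_triangle_packing S₂
  refine ⟨twoBite a b (S₁ \ 𝒯₁.biUnion id) S₁ (S₂ \ 𝒯₂.biUnion id) S₂,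
    twoBite_cliqueFree sdiff_subset sdiff_subset hf₁ hf₂, fun I hI hind => ?_⟩
  have hIP : I ∈ PI := mem_powersetCard.2 ⟨subset_univ _, hI⟩
  refine h1 ⟨I, hIP, hasCertificate_of_independent (hFI hFa I) (hFI hFb I) (hσ a I) (hσi a I)
    (hσ b I) (hσi b I) hind h𝒯₁ h𝒯₁' h𝒯₂ h𝒯₂' (by rwa [hI]) (by rwa [hI]) hζX hq hD h4 h6 h5 h7
    (fun h => h2 ⟨I, hIP, h⟩) (fun h => h3 ⟨I, hIP, h⟩)⟩

end Combination

section Regime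

open Finset

theorem exp_le_of_le_neg {x y : ℝ} (hxy : x ≤ -y) (hy : 31 ≤ y) : Real.exp x ≤ 1 / 32 := by
  refine (Real.exp_le_exp.2 hxy).trans ?_
  rw [Real.exp_neg, ← one_div]
  refine one_div_le_one_div_of_le (by norm_num) ?_
  linarith [Real.add_one_le_exp y]

theorem exp_two_hundredths_sub_one_le : Real.exp 0.02 - 1 ≤ 0.02021 := by
  have h := Real.exp_bound' (x := 0.02) (by norm_num) (by norm_num) (n := 3) (by norm_num)
  norm_num [sum_range_succ, Nat.factorial] at h
  norm_num
  linarith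

/-- The range of the parameters: `n` vertices, `k` the size of the independent sets to be avoided
and `m` the number of vertices of the two random graphs, where `N = n ^ (1 / 4000)`. -/
structure AsymptoticRegime (K : ℝ) (n k m : ℕ) (L N : ℝ) : Prop where
  exp_L : Real.exp L = n
  exp_N : Real.exp (L / 4000) = N
  le_L : K ≤ L
  le_N : K * L ^ 2 ≤ N
  le_k : K * N ^ 10 ≤ k
  le_sq_k : 1.5 * n * L ≤ (k : ℝ) ^ 2
  sq_k_le : (k : ℝ) ^ 2 ≤ 1.6 * n * L
  le_m : n ≤ m * N
  m_le : m * N ≤ 1.001 * n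

namespace AsymptoticRegime

variable {K L N p : ℝ} {n k m : ℕ}

theorem L_ge (hR : AsymptoticRegime K n k m L N) (hK : 10 ^ 10 ≤ K) : 10 ^ 10 ≤ L :=
  hK.trans hR.le_L

theorem L_le_N (hR : AsymptoticRegime K n k m L N) (hK : 10 ^ 10 ≤ K) : 10 ^ 10 * L ≤ N := by
  have h1 := hR.L_ge hK
  have h2 : 10 ^ 10 * L ≤ K * L ^ 2 := by nlinarith
  exact h2.trans hR.le_N

theorem N_ge (hR : AsymptoticRegime K n k m L N) (hK : 10 ^ 10 ≤ K) : 10 ^ 20 ≤ N := by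
  linarith [hR.L_ge hK, hR.L_le_N hK]

theorem pow_N_le (hR : AsymptoticRegime K n k m L N) (hK : 10 ^ 10 ≤ K) :
    10 ^ 10 * N ^ 10 ≤ k := by
  have h1 := hR.N_ge hK
  refine le_trans ?_ hR.le_k
  gcongr

theorem k_ge (hR : AsymptoticRegime K n k m L N) (hK : 10 ^ 10 ≤ K) : 10 ^ 10 ≤ (k : ℝ) := by
  have h1 := hR.N_ge hK
  have h2 : 1 ≤ N ^ 10 := one_le_pow₀ (by linarith)
  linarith [hR.pow_N_le hK]

theorem n_pos (hR : AsymptoticRegime K n k m L N) : (0 : ℝ) < n :=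
  hR.exp_L ▸ Real.exp_pos L

theorem pow_N_mul_k_le (hR : AsymptoticRegime K n k m L N) (hK : 10 ^ 10 ≤ K) :
    N ^ 9 * k ≤ n := by
  have hL := hR.L_ge hK
  have hN := hR.N_ge hK
  have hLN := hR.L_le_N hK
  have hk := hR.k_ge hK
  have h1 : 10 ^ 10 * N ^ 10 * k ≤ 1.6 * n * L := by
    refine le_trans ?_ hR.sq_k_le
    rw [sq]
    exact mul_le_mul_of_nonneg_right (hR.pow_N_le hK) (by linarith)
  have h2 : (n : ℝ) * L ≤ n * N := mul_le_mul_of_nonneg_left (by linarith) hR.n_pos.le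
  have h3 : N * (N ^ 9 * k) ≤ N * n := by
    have : N * (N ^ 9 * k) = N ^ 10 * k := by ring
    have h0 : 0 ≤ N ^ 10 * k := by positivity
    nlinarith
  exact le_of_mul_le_mul_left h3 (by linarith)

theorem pow_N_mul_k_le_m (hR : AsymptoticRegime K n k m L N) (hK : 10 ^ 10 ≤ K) :
    N ^ 8 * k ≤ m := by
  have hN := hR.N_ge hK
  have h := (hR.pow_N_mul_k_le hK).trans hR.le_m
  refine le_of_mul_le_mul_left ?_ (show 0 < N by linarith)
  linarith [(by ring : N * (N ^ 8 * k) = N ^ 9 * k)]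

theorem k_le_m (hR : AsymptoticRegime K n k m L N) (hK : 10 ^ 10 ≤ K) : (k : ℝ) ≤ m := by
  have hN := hR.N_ge hK
  refine le_trans ?_ (hR.pow_N_mul_k_le_m hK)
  exact le_mul_of_one_le_left (by positivity) (one_le_pow₀ (by linarith))

theorem k_le_n (hR : AsymptoticRegime K n k m L N) (hK : 10 ^ 10 ≤ K) : (k : ℝ) ≤ n := by
  have hN := hR.N_ge hK
  refine le_trans ?_ (hR.pow_N_mul_k_le hK)
  exact le_mul_of_one_le_left (by positivity) (one_le_pow₀ (by linarith))

theorem m_le_n (hR : AsymptoticRegime K n k m L N) (hK : 10 ^ 10 ≤ K) : (m : ℝ) ≤ n := by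
  have hN := hR.N_ge hK
  have h1 : (m : ℝ) * 2 ≤ m * N := by gcongr; linarith
  linarith [hR.m_le, hR.n_pos]

theorem exp_half_sq (hR : AsymptoticRegime K n k m L N) : Real.exp (L / 2) ^ 2 = n := by
  rw [← Real.exp_nat_mul, ← hR.exp_L]; congr 1; push_cast; ring

theorem exp_half_le (hR : AsymptoticRegime K n k m L N) (hK : 10 ^ 10 ≤ K) :
    Real.exp (L / 2) ≤ k := by
  have hL := hR.L_ge hK
  refine (sq_le_sq₀ (Real.exp_nonneg _) (by positivity)).1 ?_
  rw [hR.exp_half_sq]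
  refine le_trans ?_ hR.le_sq_k
  nlinarith [hR.n_pos]

theorem p_nonneg (hR : AsymptoticRegime K n k m L N) (hK : 10 ^ 10 ≤ K) (hp : p = 0.6 * L / k) :
    0 ≤ p := by
  have hL := hR.L_ge hK
  rw [hp]
  exact div_nonneg (by linarith) (by positivity)

theorem p_mul_k (hR : AsymptoticRegime K n k m L N) (hK : 10 ^ 10 ≤ K) (hp : p = 0.6 * L / k) :
    p * k = 0.6 * L := by
  have hk := hR.k_ge hK
  rw [hp, div_mul_cancel₀]
  linarith

theorem p_le_one (hR : AsymptoticRegime K n k m L N) (hK : 10 ^ 10 ≤ K) (hp : p = 0.6 * L / k) :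
    p ≤ 1 := by
  have hN := hR.N_ge hK
  have hLN := hR.L_le_N hK
  have hk := hR.pow_N_le hK
  have hL := hR.L_ge hK
  rw [hp]
  refine div_le_one_of_le₀ ?_ (by positivity)
  have h2 : N ≤ N ^ 10 := le_self_pow₀ (by linarith) (by norm_num)
  linarith

/-- The expected codegree is small. -/
theorem m_mul_p_sq_le (hR : AsymptoticRegime K n k m L N) (hK : 10 ^ 10 ≤ K)
    (hp : p = 0.6 * L / k) : m * p ^ 2 * N ≤ 0.25 * L := by
  have hL := hR.L_ge hK
  have hk := hR.k_ge hK
  have hk2 : (0 : ℝ) < (k : ℝ) ^ 2 := by positivity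
  have h1 : m * p ^ 2 * N = 0.36 * L * (m * N) * L / k ^ 2 := by
    rw [hp]; field_simp; norm_num; ring
  rw [h1, div_le_iff₀ hk2]
  have h2 : 0.36 * L * (m * N) * L ≤ 0.36 * L * (1.001 * n) * L := by
    have := hR.m_le
    gcongr
  have h3 := mul_le_mul_of_nonneg_left hR.le_sq_k (show 0 ≤ 0.25 * L by linarith)
  have h4 : 0 ≤ L * n * L := by have := hR.n_pos; positivity
  linarith

theorem choose_le (hR : AsymptoticRegime K n k m L N) (hK : 10 ^ 10 ≤ K) :
    (n.choose k : ℝ) ≤ Real.exp (k * (1 + L / 2)) := by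
  have hk := hR.k_ge hK
  have hk0 : (0 : ℝ) < k := by linarith
  have h1 : (n : ℝ) / k ≤ Real.exp (L / 2) := by
    rw [div_le_iff₀ hk0, ← hR.exp_half_sq, sq]
    gcongr
    exact hR.exp_half_le hK
  calc (n.choose k : ℝ) ≤ n ^ k / k.factorial := Nat.choose_le_pow_div k n
    _ = (n / k : ℝ) ^ k * ((k : ℝ) ^ k / k.factorial) := by
        rw [div_pow]; field_simp
    _ ≤ Real.exp (L / 2) ^ k * Real.exp k := by
        gcongr
        exact Real.pow_div_factorial_le_exp _ hk0.le _
    _ = _ := by rw [← Real.exp_nat_mul, ← Real.exp_add]; ring_nf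

theorem choose_mul_le (hR : AsymptoticRegime K n k m L N) (hK : 10 ^ 10 ≤ K) {x E : ℝ}
    (hx : x ≤ Real.exp E) (hE : E ≤ -(2 * (k * L))) : (n.choose k : ℝ) * x ≤ 1 / 32 := by
  have hL := hR.L_ge hK
  have hk := hR.k_ge hK
  have hkL : 10 ^ 10 ≤ k * L := by nlinarith
  calc (n.choose k : ℝ) * x ≤ Real.exp (k * (1 + L / 2)) * Real.exp E := by
        exact (mul_le_mul_of_nonneg_left hx (Nat.cast_nonneg _)).trans
          (mul_le_mul_of_nonneg_right (hR.choose_le hK) (Real.exp_nonneg _))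
    _ ≤ Real.exp (-(k * L)) := by
        rw [← Real.exp_add]
        refine Real.exp_le_exp.2 ?_
        nlinarith
    _ ≤ 1 / 32 := by
        exact exp_le_of_le_neg le_rfl (by linarith)

end AsymptoticRegime

end Regime

section Estimates

open Finset

namespace AsymptoticRegime

variable {K L N p ε : ℝ} {n k m F C d ζ q Λ j' j₂ J M₀ M : ℕ}

theorem m_le_exp (hR : AsymptoticRegime K n k m L N) (hK : 10 ^ 10 ≤ K) :
    (m : ℝ) ≤ Real.exp L := hR.exp_L ▸ hR.m_le_n hK

theorem m_pos (hR : AsymptoticRegime K n k m L N) (hK : 10 ^ 10 ≤ K) : (0 : ℝ) < m := by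
  linarith [hR.k_ge hK, hR.k_le_m hK]

theorem fibre_tail_le (hR : AsymptoticRegime K n k m L N) (hK : 10 ^ 10 ≤ K)
    (hF : 1.015 * N ≤ F) :
    m * Real.exp (-(0.02 * (F : ℝ)) + (Real.exp 0.02 - 1) * n / m) ≤ 1 / 8 := by
  have hL := hR.L_ge hK
  have hLN := hR.L_le_N hK
  have hm := hR.m_pos hK
  have h1 : (Real.exp 0.02 - 1) * n / m ≤ 0.02021 * N := by
    rw [div_le_iff₀ hm, mul_assoc, mul_comm N]
    exact mul_le_mul exp_two_hundredths_sub_one_le hR.le_m (by positivity) (by norm_num)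
  calc _ ≤ Real.exp L * Real.exp (-(0.02 * (F : ℝ)) + (Real.exp 0.02 - 1) * n / m) := by
        gcongr; exact hR.m_le_exp hK
    _ = Real.exp (L + (-(0.02 * (F : ℝ)) + (Real.exp 0.02 - 1) * n / m)) :=
        (Real.exp_add _ _).symm
    _ ≤ 1 / 32 := exp_le_of_le_neg (y := L) (by linarith) (by linarith)
    _ ≤ 1 / 8 := by norm_num

theorem le_m_mul_p (hR : AsymptoticRegime K n k m L N) (hK : 10 ^ 10 ≤ K)
    (hp : p = 0.6 * L / k) : 10 ^ 10 * L ≤ m * p := by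
  have hL := hR.L_ge hK
  have hN := hR.N_ge hK
  have h1 := mul_le_mul_of_nonneg_right (hR.pow_N_mul_k_le_m hK) (hR.p_nonneg hK hp)
  have h2 : N ^ 8 * k * p = N ^ 8 * (0.6 * L) := by rw [← hR.p_mul_k hK hp]; ring
  have h3 : N ≤ N ^ 8 := le_self_pow₀ (by linarith) (by norm_num)
  have h4 : 10 ^ 20 * (0.6 * L) ≤ N ^ 8 * (0.6 * L) := by gcongr; linarith
  linarith

theorem degree_tail_le (hR : AsymptoticRegime K n k m L N) (hK : 10 ^ 10 ≤ K)
    (hp : p = 0.6 * L / k) (hd : 1.015 * (m * p) ≤ d) :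
    m * Real.exp (-(0.02 * (d : ℝ)) + p * (Real.exp 0.02 - 1) * m) ≤ 1 / 16 := by
  have hL := hR.L_ge hK
  have hmp := hR.le_m_mul_p hK hp
  have h1 : p * (Real.exp 0.02 - 1) * m ≤ 0.02021 * (m * p) := by
    have := mul_le_mul_of_nonneg_right exp_two_hundredths_sub_one_le
      (show 0 ≤ m * p by linarith)
    linarith
  calc _ ≤ Real.exp L * Real.exp (-(0.02 * (d : ℝ)) + p * (Real.exp 0.02 - 1) * m) := by
        gcongr; exact hR.m_le_exp hK
    _ = Real.exp (L + (-(0.02 * (d : ℝ)) + p * (Real.exp 0.02 - 1) * m)) :=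
        (Real.exp_add _ _).symm
    _ ≤ 1 / 32 := exp_le_of_le_neg (y := L) (by linarith) (by linarith)
    _ ≤ 1 / 16 := by norm_num

theorem fibre_mul_degree_le (hR : AsymptoticRegime K n k m L N) (hK : 10 ^ 10 ≤ K)
    (hp : p = 0.6 * L / k) (hF : F ≤ 1.02 * N) (hd : d ≤ 1.02 * (m * p)) :
    (F : ℝ) * d ≤ 0.42 * k := by
  have hL := hR.L_ge hK
  have hN := hR.N_ge hK
  have hk := hR.k_ge hK
  have hmp := hR.le_m_mul_p hK hp
  have hp0 := hR.p_nonneg hK hp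
  have h1 : (n : ℝ) * p ≤ 0.4 * k := by
    have h0 : (n : ℝ) * p = 0.6 * L * n / k := by rw [hp]; ring
    rw [h0, div_le_iff₀ (by linarith)]
    linarith [hR.le_sq_k, sq (k : ℝ)]
  calc (F : ℝ) * d ≤ 1.02 * N * (1.02 * (m * p)) := by gcongr
    _ = 1.0404 * ((m * N) * p) := by ring
    _ ≤ 1.0404 * ((1.001 * n) * p) := by
        have := hR.m_le
        gcongr
    _ ≤ _ := by linarith

theorem exp_eighth_sq (hR : AsymptoticRegime K n k m L N) : Real.exp (L / 8000) ^ 2 = N := by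
  rw [← Real.exp_nat_mul, ← hR.exp_N]; congr 1; push_cast; ring

theorem L_le_exp_eighth (hR : AsymptoticRegime K n k m L N) (hK : 10 ^ 10 ≤ K) :
    10 ^ 5 * L ≤ Real.exp (L / 8000) := by
  have hL := hR.L_ge hK
  refine (sq_le_sq₀ (by positivity) (Real.exp_nonneg _)).1 ?_
  rw [hR.exp_eighth_sq]
  refine le_trans ?_ hR.le_N
  rw [mul_pow]
  norm_num
  gcongr
  linarith

theorem codegree_tail_le (hR : AsymptoticRegime K n k m L N) (hK : 10 ^ 10 ≤ K)
    (hp : p = 0.6 * L / k) (hC : C + 1 = 24000) :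
    (m : ℝ) ^ 2 * (m * p ^ 2) ^ (C + 1) ≤ 1 / 16 := by
  have hL := hR.L_ge hK
  have hN := hR.N_ge hK
  have h1 : m * p ^ 2 ≤ Real.exp (-(L / 8000)) := by
    have h2 := hR.m_mul_p_sq_le hK hp
    have h3 := hR.L_le_exp_eighth hK
    have h4 : Real.exp (-(L / 8000)) * N = Real.exp (L / 8000) := by
      rw [← hR.exp_N, ← Real.exp_add]; congr 1; ring
    refine le_of_mul_le_mul_right (a := N) ?_ (by linarith)
    rw [h4]
    linarith
  calc (m : ℝ) ^ 2 * (m * p ^ 2) ^ (C + 1)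
      ≤ Real.exp L ^ 2 * Real.exp (-(L / 8000)) ^ (C + 1) := by
        gcongr
        exact hR.m_le_exp hK
    _ = Real.exp (2 * L + ((C + 1 : ℕ) : ℝ) * (-(L / 8000))) := by
        rw [← Real.exp_nat_mul, ← Real.exp_nat_mul, ← Real.exp_add]; norm_num
    _ ≤ 1 / 32 := by
        refine exp_le_of_le_neg (y := L) ?_ (by linarith)
        rw [hC]
        push_cast
        linarith
    _ ≤ _ := by norm_num

theorem packing_tail_le (hR : AsymptoticRegime K n k m L N) (hK : 10 ^ 10 ≤ K)
    (hp : p = 0.6 * L / k) (hj : k * L / 10 ^ 5 ≤ ((j' + 1 : ℕ) : ℝ)) :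
    (n.choose k : ℝ) *
      (((k ^ 2 * m).choose (j' + 1) : ℝ) * p ^ (3 * (j' + 1))) ≤ 1 / 32 := by
  have hL := hR.L_ge hK
  have hN := hR.N_ge hK
  have hk := hR.k_ge hK
  have hp0 := hR.p_nonneg hK hp
  have hk0 : (0 : ℝ) < k := by linarith
  generalize j' + 1 = s at *
  have hs0 : (0 : ℝ) < s := lt_of_lt_of_le (by positivity) hj
  have h1 : (k : ℝ) ^ 2 * m * p ^ 3 * Real.exp 1 / s ≤ Real.exp (-(L / 8000)) := by
    have h4 : Real.exp (-(L / 8000)) * N = Real.exp (L / 8000) := by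
      rw [← hR.exp_N, ← Real.exp_add]; congr 1; ring
    have he : Real.exp 1 ≤ 3 := by linarith [Real.exp_one_lt_d9]
    have h5 : (k : ℝ) ^ 2 * m * p ^ 3 * Real.exp 1 * N ≤ 0.45 * (k * L) * L := by
      have h6 : (k : ℝ) ^ 2 * m * p ^ 3 * Real.exp 1 * N =
          k * (p * k) * (m * p ^ 2 * N) * Real.exp 1 := by ring
      rw [h6, hR.p_mul_k hK hp]
      have h7 : k * (0.6 * L) * (m * p ^ 2 * N) * Real.exp 1 ≤
          k * (0.6 * L) * (0.25 * L) * 3 := by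
        have := hR.m_mul_p_sq_le hK hp
        gcongr
      linarith
    rw [div_le_iff₀ hs0]
    refine le_of_mul_le_mul_right (a := N) ?_ (by linarith)
    calc _ ≤ 0.45 * (k * L) * L := h5
      _ ≤ (k * L / 10 ^ 5) * (10 ^ 5 * L) := by
          have : 0 ≤ (k : ℝ) * L * L := by positivity
          linarith
      _ ≤ s * Real.exp (L / 8000) := by
          have := hR.L_le_exp_eighth hK
          gcongr
      _ = _ := by rw [← h4]; ring
  refine hR.choose_mul_le hK (E := s * (-(L / 8000))) ?_ ?_
  · calc ((k ^ 2 * m).choose s : ℝ) * p ^ (3 * s)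
        ≤ ((k ^ 2 * m : ℕ) : ℝ) ^ s / s.factorial * p ^ (3 * s) := by
          gcongr
          exact Nat.choose_le_pow_div _ _
      _ = ((k : ℝ) ^ 2 * m * p ^ 3 / s) ^ s * ((s : ℝ) ^ s / s.factorial) := by
          rw [pow_mul, div_pow, mul_pow _ (p ^ 3)]
          push_cast
          field_simp
      _ ≤ ((k : ℝ) ^ 2 * m * p ^ 3 / s) ^ s * Real.exp s := by
          gcongr
          exact Real.pow_div_factorial_le_exp _ hs0.le _
      _ = ((k : ℝ) ^ 2 * m * p ^ 3 * Real.exp 1 / s) ^ s := by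
          have h2 : Real.exp s = Real.exp 1 ^ s := by rw [← Real.exp_nat_mul, mul_one]
          rw [h2, ← mul_pow]
          congr 1
          ring
      _ ≤ Real.exp (-(L / 8000)) ^ s := by gcongr
      _ = _ := by rw [← Real.exp_nat_mul]
  · have h2 : k * L / 10 ^ 5 * (L / 8000) ≤ s * (L / 8000) := by gcongr
    have h3 : k * L / 10 ^ 5 * (16 * 10 ^ 8 / 8000) ≤ k * L / 10 ^ 5 * (L / 8000) := by
      gcongr; linarith
    linarith

theorem edges_tail_le (hR : AsymptoticRegime K n k m L N) (hK : 10 ^ 10 ≤ K)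
    (hp : p = 0.6 * L / k) (hJ : 10 * (k * L) ≤ J) :
    (n.choose k : ℝ) * Real.exp (-(1 * (J : ℝ)) + p * (Real.exp 1 - 1) * (k : ℝ) ^ 2) ≤
      1 / 32 := by
  have hL := hR.L_ge hK
  refine hR.choose_mul_le hK le_rfl ?_
  have h1 : p * (Real.exp 1 - 1) * (k : ℝ) ^ 2 = (p * k) * k * (Real.exp 1 - 1) := by ring
  rw [h1, hR.p_mul_k hK hp]
  have h2 : 0.6 * L * k * (Real.exp 1 - 1) ≤ 0.6 * L * k * 2 := by
    gcongr
    linarith [Real.exp_one_lt_d9]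
  have h3 : 0 ≤ k * L := by positivity
  linarith

theorem le_eps_mul_N (hR : AsymptoticRegime K n k m L N) (hK : 10 ^ 10 ≤ K) (hε : 0 < ε)
    (hKε : 10 ^ 10 ≤ K * ε) : 10 ^ 10 * L ≤ ε * N := by
  have hL := hR.L_ge hK
  have h1 := mul_le_mul_of_nonneg_left hR.le_N hε.le
  have h2 : 10 ^ 10 * L ^ 2 ≤ K * ε * L ^ 2 := by gcongr
  have h3 : L ≤ L ^ 2 := le_self_pow₀ (by linarith) (by norm_num)
  linarith

theorem spread_tail_le (hR : AsymptoticRegime K n k m L N) (hK : 10 ^ 10 ≤ K)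
    (hp : p = 0.6 * L / k) (hε : 0 < ε) (hKε : 10 ^ 10 ≤ K * ε) (hF : 1.015 * N ≤ F)
    (hF' : F ≤ 1.02 * N) (hΛ : 0 < Λ) (hΛ' : Λ * N ^ 2 ≤ 2 * k) (hM : ε * k ^ 2 ≤ M₀) :
    (n.choose k : ℝ) * Real.exp (-(1 / (F * Λ : ℝ) * M₀) + 1 / (F * Λ : ℝ) *
      (m * (k ^ 2 * ((p * Real.exp 1) ^ 2 * Real.exp (2 * p * (1 / F) * k))))) ≤ 1 / 32 := by
  have hL := hR.L_ge hK
  have hN := hR.N_ge hK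
  have hk := hR.k_ge hK
  have hLN := hR.L_le_N hK
  have hp0 := hR.p_nonneg hK hp
  have hεN := hR.le_eps_mul_N hK hε hKε
  have hF0 : (0 : ℝ) < F := by linarith
  have hΛ0 : (0 : ℝ) < Λ := by exact_mod_cast hΛ
  have hk0 : (0 : ℝ) < k := by linarith
  have hN0 : 0 < N := by linarith
  have he : Real.exp 1 ≤ 3 := by linarith [Real.exp_one_lt_d9]
  refine hR.choose_mul_le hK le_rfl ?_
  have h1 : Real.exp (2 * p * (1 / F) * k) ≤ 3 := by
    refine le_trans (Real.exp_le_exp.2 ?_) he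
    have : 2 * p * (1 / F) * k = 2 * (p * k) / F := by ring
    rw [this, hR.p_mul_k hK hp]
    refine div_le_one_of_le₀ ?_ hF0.le
    linarith
  have h2 : m * (k ^ 2 * ((p * Real.exp 1) ^ 2 * Real.exp (2 * p * (1 / F) * k))) ≤
      ε * k ^ 2 / 2 := by
    calc _ ≤ m * ((k : ℝ) ^ 2 * ((p * 3) ^ 2 * 3)) := by gcongr
      _ = (m * p ^ 2) * (27 * (k : ℝ) ^ 2) := by ring
      _ ≤ (ε / 54) * (27 * (k : ℝ) ^ 2) := by
          refine mul_le_mul_of_nonneg_right ?_ (by positivity)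
          refine le_of_mul_le_mul_right (a := N) ?_ hN0
          linarith [hR.m_mul_p_sq_le hK hp]
      _ = _ := by ring
  have h3 : 1 / (F * Λ : ℝ) * (m * (k ^ 2 * ((p * Real.exp 1) ^ 2 *
      Real.exp (2 * p * (1 / F) * k)))) ≤ 1 / (F * Λ : ℝ) * (ε * k ^ 2 / 2) := by gcongr
  have h4 : 1 / (F * Λ : ℝ) * (ε * k ^ 2) ≤ 1 / (F * Λ : ℝ) * M₀ := by gcongr
  have h5 : 2 * (k * L) ≤ 1 / (F * Λ : ℝ) * (ε * k ^ 2 / 2) := by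
    rw [one_div, inv_mul_eq_div, le_div_iff₀ (by positivity)]
    have h6 : (F : ℝ) * Λ * N ≤ 1.02 * (2 * k) := by
      calc (F : ℝ) * Λ * N ≤ 1.02 * N * Λ * N := by gcongr
        _ = 1.02 * (Λ * N ^ 2) := by ring
        _ ≤ _ := by gcongr
    refine le_of_mul_le_mul_right (a := N) ?_ hN0
    calc 2 * (k * L) * (F * Λ) * N = 2 * (k * L) * (F * Λ * N) := by ring
      _ ≤ 2 * (k * L) * (1.02 * (2 * k)) := by gcongr
      _ = k ^ 2 / 2 * (8.16 * L) := by ring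
      _ ≤ k ^ 2 / 2 * (ε * N) :=
          mul_le_mul_of_nonneg_left (by linarith) (by positivity)
      _ = _ := by ring
  have h6 : 1 / (F * Λ : ℝ) * (ε * k ^ 2 / 2) = 1 / (F * Λ : ℝ) * (ε * k ^ 2) / 2 := by ring
  linarith

theorem low_tail_le (hR : AsymptoticRegime K n k m L N) (hK : 10 ^ 10 ≤ K)
    (hp : p = 0.6 * L / k) (hε : Real.exp 20000 * ε = 1 / 4) (hj : k * L / 8000 ≤ j₂)
    (hM : M ≤ 2.1 * (ε * k ^ 2)) :
    (n.choose k : ℝ) * Real.exp (-(20000 * (j₂ : ℝ)) + p * (Real.exp 20000 - 1) * M) ≤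
      1 / 32 := by
  have hL := hR.L_ge hK
  have hp0 := hR.p_nonneg hK hp
  refine hR.choose_mul_le hK le_rfl ?_
  have h1 : p * (Real.exp 20000 - 1) * M ≤ p * Real.exp 20000 * (2.1 * (ε * k ^ 2)) := by
    gcongr
    linarith
  have h2 : p * Real.exp 20000 * (2.1 * (ε * k ^ 2)) =
      2.1 * (p * k) * k * (Real.exp 20000 * ε) := by ring
  rw [hε, hR.p_mul_k hK hp] at h2
  have h3 : 0 ≤ k * L := by positivity
  linarith

theorem low_pairs_bound (hR : AsymptoticRegime K n k m L N) (hK : 10 ^ 10 ≤ K) (hε : 0 < ε)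
    (hKε : 10 ^ 10 ≤ K * ε) (hF' : F ≤ 1.02 * N) (hΛ' : Λ * N ^ 2 ≤ 2 * k)
    (hJ : J ≤ 11 * (k * L)) (hM₀ : M₀ ≤ ε * k ^ 2 + 1) (hM : 2 * (ε * k ^ 2) ≤ M) :
    k * F + Λ * (F * (2 * J)) + M₀ ≤ M := by
  have hL := hR.L_ge hK
  have hN := hR.N_ge hK
  have hk := hR.k_ge hK
  have hεN := hR.le_eps_mul_N hK hε hKε
  have hN0 : 0 < N := by linarith
  have h1 : 10 ^ 10 * N ≤ ε * k := by
    have h2 := mul_le_mul_of_nonneg_left hR.le_k hε.le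
    have h3 : 10 ^ 10 * N ^ 10 ≤ K * ε * N ^ 10 := by gcongr
    have h4 : N ≤ N ^ 10 := le_self_pow₀ (by linarith) (by norm_num)
    linarith
  have h2 : (k : ℝ) * F ≤ 0.1 * (ε * k ^ 2) := by
    have h3 : (k : ℝ) * (10 ^ 10 * N) ≤ k * (ε * k) := by gcongr
    have h4 : (k : ℝ) * F ≤ k * (1.02 * N) := by gcongr
    have h5 : 0 ≤ k * N := by positivity
    linarith [(by ring : (k : ℝ) * (ε * k) = ε * k ^ 2)]
  have h3 : (Λ : ℝ) * (F * (2 * J)) ≤ 0.1 * (ε * k ^ 2) := by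
    refine le_of_mul_le_mul_right (a := N) ?_ hN0
    calc (Λ : ℝ) * (F * (2 * J)) * N ≤ Λ * (1.02 * N * (2 * (11 * (k * L)))) * N := by gcongr
      _ = (Λ * N ^ 2) * (22.44 * (k * L)) := by ring
      _ ≤ 2 * k * (22.44 * (k * L)) := by gcongr
      _ = k ^ 2 * (44.88 * L) := by ring
      _ ≤ k ^ 2 * (0.1 * (ε * N)) :=
          mul_le_mul_of_nonneg_left (by linarith) (by positivity)
      _ = _ := by ring
  have h4 : 10 ≤ ε * k ^ 2 := by
    have h5 : 10 * (1 : ℝ) ≤ (ε * k) * k := by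
      refine mul_le_mul ?_ (by linarith) (by norm_num) (by positivity)
      linarith
    linarith [(by ring : ε * k * k = ε * k ^ 2)]
  have h5 : (k : ℝ) * F + Λ * (F * (2 * J)) + M₀ ≤ M := by linarith
  exact_mod_cast h5

theorem centres_bound (hR : AsymptoticRegime K n k m L N) (hK : 10 ^ 10 ≤ K)
    (hC : C ≤ 24000) (hF' : F ≤ 1.02 * N) (hζ : 2 * N ^ 2 ≤ ζ) (hζ' : ζ ≤ 2 * N ^ 2 + 1)
    (hΛ : k ≤ Λ * N ^ 2) : k + (ζ + 1) ^ 2 * (F * C) < (ζ + 1) * Λ := by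
  have hN := hR.N_ge hK
  have hk := hR.k_ge hK
  have hkN := hR.pow_N_le hK
  have hN0 : 0 < N := by linarith
  have hC' : (C : ℝ) ≤ 24000 := by exact_mod_cast hC
  have hN2 : 2 ≤ N ^ 2 := by nlinarith
  have h1 : ((ζ : ℝ) + 1) ^ 2 * (F * C) ≤ (3 * N ^ 2) ^ 2 * (1.02 * N * 24000) := by
    gcongr
    linarith
  have h2 : (3 * N ^ 2) ^ 2 * (1.02 * N * 24000) = 220320 * N ^ 5 := by ring
  have h3 : N ^ 5 ≤ N ^ 10 := pow_le_pow_right₀ (by linarith) (by norm_num)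
  have h4 : 2 * (k : ℝ) ≤ (ζ + 1) * Λ := by
    calc 2 * (k : ℝ) ≤ 2 * (Λ * N ^ 2) := by gcongr
      _ = 2 * N ^ 2 * Λ := by ring
      _ ≤ _ := by gcongr; linarith
  have h5 : (k : ℝ) + (ζ + 1) ^ 2 * (F * C) < (ζ + 1) * Λ := by
    have h6 : 0 < N ^ 10 := by positivity
    linarith
  exact_mod_cast h5

theorem exceptional_bound (hR : AsymptoticRegime K n k m L N) (hK : 10 ^ 10 ≤ K)
    (hC : C ≤ 24000) (hF' : F ≤ 1.02 * N) (hζ' : ζ ≤ 2 * N ^ 2 + 1) :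
    (F : ℝ) * (ζ + ζ ^ 2 * C) ≤ k / 10 ^ 4 := by
  have hN := hR.N_ge hK
  have hkN := hR.pow_N_le hK
  have hN0 : 0 < N := by linarith
  have hC' : (C : ℝ) ≤ 24000 := by exact_mod_cast hC
  have hN2 : 1 ≤ N ^ 2 := one_le_pow₀ (by linarith)
  have hζ'' : (ζ : ℝ) ≤ 3 * N ^ 2 := by linarith
  have h1 : (F : ℝ) * (ζ + ζ ^ 2 * C) ≤ 1.02 * N * (3 * N ^ 2 + (3 * N ^ 2) ^ 2 * 24000) := by
    gcongr
  have h2 : 1.02 * N * (3 * N ^ 2 + (3 * N ^ 2) ^ 2 * 24000) = 3.06 * N ^ 3 + 220320 * N ^ 5 := by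
    ring
  have h3 : N ^ 5 ≤ N ^ 10 := pow_le_pow_right₀ (by linarith) (by norm_num)
  have h4 : N ^ 3 ≤ N ^ 10 := pow_le_pow_right₀ (by linarith) (by norm_num)
  have h5 : 0 < N ^ 10 := by positivity
  linarith

theorem exponent_bound (hR : AsymptoticRegime K n k m L N) (hK : 10 ^ 10 ≤ K)
    (hp : p = 0.6 * L / k) (hj : j' ≤ k * L / 10 ^ 5) (hj₂ : j₂ ≤ k * L / 8000 + 1)
    (hq : q ≤ (k : ℝ) / 10 ^ 4) :
    0.505 * (k * L) + 2 * (4 * ((3 * j' + j₂ : ℕ) : ℝ)) + 4 * (q * (L / 2 - L / 2000)) +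
      (L / 2 - (L / 2 - L / 2000)) * (2 * k) + p * (1 - Real.exp (-4)) * k ≤
      L / 2 * (1.02 * k) := by
  have hL := hR.L_ge hK
  have hk := hR.k_ge hK
  have h1 : p * (1 - Real.exp (-4)) * k ≤ p * k * 1 := by
    have h0 := hR.p_nonneg hK hp
    have : p * (1 - Real.exp (-4)) * k = p * k * (1 - Real.exp (-4)) := by ring
    rw [this]
    gcongr
    linarith [Real.exp_pos (-4)]
  rw [hR.p_mul_k hK hp] at h1
  have h2 : (q : ℝ) * (L / 2 - L / 2000) ≤ k / 10 ^ 4 * (L / 2) := by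
    have : 0 ≤ L / 2 - L / 2000 := by linarith
    gcongr
    linarith
  have h3 : 10 ^ 10 * L ≤ k * L := by gcongr
  push_cast
  linarith

theorem main_term_le (hR : AsymptoticRegime K n k m L N) (hK : 10 ^ 10 ≤ K)
    (hζ' : ζ ≤ 2 * N ^ 2 + 1) :
    ((m : ℝ) ^ ζ * (ζ + 2) ^ k) ^ 2 *
      (2 * (4 ^ k * (n.choose k : ℝ)) * Real.exp (-(0.505 * (k * L)))) ≤ 1 / 4 := by
  have hL := hR.L_ge hK
  have hN := hR.N_ge hK
  have hk := hR.k_ge hK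
  have hkN := hR.pow_N_le hK
  have hN0 : 0 < N := by linarith
  have hN2 : 2 ≤ N ^ 2 := by nlinarith
  have h1 : (ζ : ℝ) + 2 ≤ Real.exp (3 * (L / 4000)) := by
    have : Real.exp (3 * (L / 4000)) = N ^ 3 := by
      rw [← hR.exp_N, ← Real.exp_nat_mul]; norm_num
    rw [this]
    nlinarith
  have h4 : (4 : ℝ) ≤ Real.exp 2 := by
    have h5 : Real.exp 2 = Real.exp 1 * Real.exp 1 := by rw [← Real.exp_add]; norm_num
    rw [h5]
    nlinarith [Real.exp_one_gt_d9]
  have h2 : (2 : ℝ) ≤ Real.exp 1 := by linarith [Real.exp_one_gt_d9]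
  calc _ ≤ (Real.exp L ^ ζ * Real.exp (3 * (L / 4000)) ^ k) ^ 2 *
        (Real.exp 1 * (Real.exp 2 ^ k * Real.exp (k * (1 + L / 2))) *
          Real.exp (-(0.505 * (k * L)))) := by
        gcongr
        · exact hR.m_le_exp hK
        · exact hR.choose_le hK
    _ = Real.exp (2 * (ζ * L + k * (3 * (L / 4000))) + (1 + (k * 2 + k * (1 + L / 2)) +
          -(0.505 * (k * L)))) := by
        simp only [← Real.exp_nat_mul, ← Real.exp_add]
        norm_num
    _ ≤ 1 / 32 := by
        have h5 : N ^ 2 ≤ N ^ 10 := pow_le_pow_right₀ (by linarith) (by norm_num)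
        have h6 : (ζ : ℝ) * L ≤ k / 10 ^ 4 * L := by gcongr; linarith
        have h7 : (10 : ℝ) ^ 10 * k ≤ L * k := by gcongr
        refine exp_le_of_le_neg (y := 0.001 * (k * L)) ?_ ?_ <;> linarith
    _ ≤ _ := by norm_num

theorem p_le_exp (hR : AsymptoticRegime K n k m L N) (hK : 10 ^ 10 ≤ K)
    (hp : p = 0.6 * L / k) : p ≤ Real.exp (-(L / 2 - L / 2000)) := by
  have hL := hR.L_ge hK
  have hLN := hR.L_le_N hK
  have hk := hR.k_ge hK
  have h1 : p ≤ 0.6 * L / Real.exp (L / 2) := by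
    rw [hp]
    have := hR.exp_half_le hK
    gcongr
  refine h1.trans ?_
  have h2 : Real.exp (-(L / 2 - L / 2000)) = N ^ 2 / Real.exp (L / 2) := by
    rw [← hR.exp_N, ← Real.exp_nat_mul, ← Real.exp_sub]; congr 1; push_cast; ring
  rw [h2]
  gcongr
  nlinarith

theorem exp_le_m_div_k (hR : AsymptoticRegime K n k m L N) (hK : 10 ^ 10 ≤ K) :
    Real.exp (L / 2 - L / 2000) ≤ m / k := by
  have hL := hR.L_ge hK
  have hLN := hR.L_le_N hK
  have hN := hR.N_ge hK
  have hk := hR.k_ge hK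
  have hN0 : 0 < N := by linarith
  have h1 : (k : ℝ) ≤ Real.exp (L / 2) * N := by
    refine (sq_le_sq₀ (by positivity) (by positivity)).1 (hR.sq_k_le.trans ?_)
    rw [mul_pow, hR.exp_half_sq, mul_comm 1.6, mul_assoc]
    gcongr
    nlinarith
  have h2 : Real.exp (L / 2 - L / 2000) * N ^ 2 = Real.exp (L / 2) := by
    rw [← hR.exp_N, ← Real.exp_nat_mul, ← Real.exp_add]; congr 1; push_cast; ring
  rw [le_div_iff₀ (by linarith)]
  refine le_of_mul_le_mul_right (a := N) ?_ hN0
  calc Real.exp (L / 2 - L / 2000) * k * N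
      ≤ Real.exp (L / 2 - L / 2000) * (Real.exp (L / 2) * N) * N := by gcongr
    _ = (Real.exp (L / 2 - L / 2000) * N ^ 2) * Real.exp (L / 2) := by ring
    _ = n := by rw [h2, ← sq, hR.exp_half_sq]
    _ ≤ _ := hR.le_m

theorem p_mul_const_ge (hR : AsymptoticRegime K n k m L N) (hK : 10 ^ 10 ≤ K)
    (hp : p = 0.6 * L / k) : 0.585 * L / k ≤ p * (1 - Real.exp (-4)) := by
  have hL := hR.L_ge hK
  have h1 : Real.exp (-4) ≤ 0.025 := by
    have h2 : (40 : ℝ) ≤ Real.exp 4 := by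
      have h3 : Real.exp 4 = Real.exp 1 ^ 4 := by rw [← Real.exp_nat_mul]; norm_num
      rw [h3]
      calc (40 : ℝ) ≤ 2.7 ^ 4 := by norm_num
        _ ≤ _ := by gcongr; linarith [Real.exp_one_gt_d9]
    rw [Real.exp_neg]
    refine (inv_anti₀ (by norm_num) h2).trans (by norm_num)
  have h2 : 0.585 * L / k = p * 0.975 := by rw [hp]; ring
  rw [h2]
  have := hR.p_nonneg hK hp
  gcongr
  linarith

end AsymptoticRegime

end Estimates

section Conclusion

open Finset

theorem AsymptoticRegime.eventually {K : ℝ} (hK : 1000 ≤ K) : ∀ᶠ n : ℕ in Filter.atTop,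
    AsymptoticRegime K n ⌈Real.sqrt (3 / 2 * n * Real.log n)⌉₊
      ⌈n / Real.exp (Real.log n / 4000)⌉₊ (Real.log n) (Real.exp (Real.log n / 4000)) := by
  have hlog : Filter.Tendsto (fun n : ℕ => Real.log n) Filter.atTop Filter.atTop :=
    Real.tendsto_log_atTop.comp tendsto_natCast_atTop_atTop
  have hexp := ((Real.tendsto_exp_div_pow_atTop 2).comp
    (hlog.atTop_div_const (show (0 : ℝ) < 4000 by norm_num))).eventually_ge_atTop (K * 4000 ^ 2)
  filter_upwards [hlog.eventually_ge_atTop K, hexp, Filter.eventually_gt_atTop 0]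
    with n hL hN hn
  have hn0 : (0 : ℝ) < n := by exact_mod_cast hn
  have hexpL := Real.exp_log hn0
  simp only [Function.comp_apply] at hN
  generalize Real.log n = L at hL hN hexpL ⊢
  have hL0 : 0 < L := by linarith
  have hKN : K * L ^ 2 ≤ Real.exp (L / 4000) := by
    rw [le_div_iff₀ (by positivity)] at hN
    linarith [(by ring : K * 4000 ^ 2 * (L / 4000) ^ 2 = K * L ^ 2)]
  have hexpN : ∀ i : ℕ, Real.exp (L / 4000) ^ i = Real.exp (i * (L / 4000)) := fun i =>
    (Real.exp_nat_mul _ _).symm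
  have hhalf : Real.exp (L / 2) ^ 2 = n := by
    rw [← Real.exp_nat_mul, ← hexpL]; congr 1; push_cast; ring
  have hK_le : K ≤ Real.exp (L / 4000) := le_trans (by nlinarith) hKN
  have hsq : Real.sqrt (3 / 2 * n * L) ^ 2 = 3 / 2 * n * L := Real.sq_sqrt (by positivity)
  have hsqrt : Real.exp (L / 2) ≤ Real.sqrt (3 / 2 * n * L) := by
    refine Real.le_sqrt_of_sq_le ?_
    rw [hhalf]
    nlinarith
  have hNhalf : Real.exp (L / 4000) ≤ Real.exp (L / 2) := Real.exp_le_exp.2 (by linarith)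
  have hceil := Nat.le_ceil (Real.sqrt (3 / 2 * n * L))
  have hceil' := (Nat.ceil_lt_add_one (Real.sqrt_nonneg (3 / 2 * n * L))).le
  have hN0 := Real.exp_pos (L / 4000)
  refine ⟨hexpL, rfl, hL, hKN, ?_, ?_, ?_, ?_, ?_⟩
  · calc K * Real.exp (L / 4000) ^ 10 ≤ Real.exp (L / 4000) * Real.exp (L / 4000) ^ 10 := by
          gcongr
      _ = Real.exp (L / 4000) ^ 11 := by ring
      _ ≤ Real.exp (L / 2) := by
          rw [hexpN]
          refine Real.exp_le_exp.2 ?_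
          push_cast
          linarith
      _ ≤ _ := hsqrt.trans hceil
  · calc 1.5 * n * L = Real.sqrt (3 / 2 * n * L) ^ 2 := by rw [hsq]; norm_num
      _ ≤ _ := by gcongr
  · calc (⌈Real.sqrt (3 / 2 * n * L)⌉₊ : ℝ) ^ 2 ≤ (Real.sqrt (3 / 2 * n * L) + 1) ^ 2 := by
          gcongr
      _ ≤ 16 / 15 * Real.sqrt (3 / 2 * n * L) ^ 2 := by nlinarith
      _ = _ := by rw [hsq]; ring
  · rw [← div_le_iff₀ hN0]
    exact Nat.le_ceil _
  · have h1 := (Nat.ceil_lt_add_one (show 0 ≤ n / Real.exp (L / 4000) by positivity)).le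
    calc _ ≤ (n / Real.exp (L / 4000) + 1) * Real.exp (L / 4000) := by gcongr
      _ = n + Real.exp (L / 4000) := by field_simp
      _ ≤ _ := by nlinarith

theorem AsymptoticRegime.exists_cliqueFree {K L N ε : ℝ} {n k m : ℕ}
    (hR : AsymptoticRegime K n k m L N) (hK : 10 ^ 10 ≤ K) (hKε : 10 ^ 10 ≤ K * ε)
    (hε : Real.exp 20000 * ε = 1 / 4) :
    ∃ G : SimpleGraph (Fin n), G.CliqueFree 3 ∧
      ∀ I : Finset (Fin n), #I = k → ¬ ∀ u ∈ I, ∀ v ∈ I, u ≠ v → ¬ G.Adj u v := by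
  have hε0 : 0 < ε := pos_of_mul_pos_right (hε ▸ by norm_num) (Real.exp_nonneg 20000)
  have hL := hR.L_ge hK
  have hN := hR.N_ge hK
  have hk := hR.k_ge hK
  have hkN := hR.pow_N_le hK
  have hN0 : 0 < N := by linarith
  have hk0 : (0 : ℝ) < k := by linarith
  have hNpow : N ≤ N ^ 2 := le_self_pow₀ (by linarith) (by norm_num)
  have hN2pow : N ^ 2 ≤ N ^ 10 := pow_le_pow_right₀ (by linarith) (by norm_num)
  have hkL : 10 ^ 10 ≤ k * L := by nlinarith
  have hεk : 10 ≤ ε * k ^ 2 := by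
    have h1 := mul_le_mul_of_nonneg_left hR.le_k hε0.le
    have h2 : 10 ^ 10 * N ^ 10 ≤ K * ε * N ^ 10 := by gcongr
    have h3 : ε * k * 1 ≤ ε * k * k := by gcongr; linarith
    linarith [(by ring : ε * k * k = ε * k ^ 2)]
  obtain ⟨p, hp⟩ : ∃ p : ℝ, p = 0.6 * L / k := ⟨_, rfl⟩
  have hmp := hR.le_m_mul_p hK hp
  have hceil : ∀ x : ℝ, 0 ≤ x → ∃ y : ℕ, x ≤ y ∧ (y : ℝ) ≤ x + 1 := fun x hx =>
    ⟨⌈x⌉₊, Nat.le_ceil x, (Nat.ceil_lt_add_one hx).le⟩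
  obtain ⟨F, hF, hF'⟩ := hceil (1.015 * N) (by positivity)
  obtain ⟨d, hd, hd'⟩ := hceil (1.015 * (m * p)) (by linarith)
  obtain ⟨Λ, hΛ, hΛ'⟩ := hceil (k / N ^ 2) (by positivity)
  obtain ⟨ζ, hζ, hζ'⟩ := hceil (2 * N ^ 2) (by positivity)
  obtain ⟨j₂, hj₂, hj₂'⟩ := hceil (k * L / 8000) (by positivity)
  obtain ⟨J, hJ, hJ'⟩ := hceil (10 * (k * L)) (by positivity)
  obtain ⟨M₀, hM₀, hM₀'⟩ := hceil (ε * k ^ 2) (by positivity)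
  obtain ⟨M, hM, hM'⟩ := hceil (2 * (ε * k ^ 2)) (by positivity)
  obtain ⟨j', hj', hj''⟩ : ∃ j' : ℕ, (j' : ℝ) ≤ k * L / 10 ^ 5 ∧
      k * L / 10 ^ 5 ≤ ((j' + 1 : ℕ) : ℝ) :=
    ⟨⌊k * L / 10 ^ 5⌋₊, Nat.floor_le (by positivity), by
      push_cast; exact (Nat.lt_floor_add_one _).le⟩
  obtain ⟨C, hC⟩ : ∃ C : ℕ, C + 1 = 24000 := ⟨23999, rfl⟩
  have hC' : C ≤ 24000 := by omega
  have hF'' : F ≤ 1.02 * N := by linarith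
  have hF0 : (0 : ℝ) < F := by linarith
  have hΛk : k ≤ Λ * N ^ 2 := by rwa [div_le_iff₀ (by positivity)] at hΛ
  have hΛ0 : 0 < Λ := by
    rw [← Nat.cast_pos (α := ℝ)]
    exact lt_of_lt_of_le (by positivity) hΛ
  have hΛ0' : (0 : ℝ) < Λ := by exact_mod_cast hΛ0
  have hΛ2k : Λ * N ^ 2 ≤ 2 * k := by
    calc Λ * N ^ 2 ≤ (k / N ^ 2 + 1) * N ^ 2 := by gcongr
      _ = k + N ^ 2 := by field_simp
      _ ≤ _ := by linarith
  have hkm : k ≤ m := by exact_mod_cast hR.k_le_m hK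
  have hkn : k ≤ n := by exact_mod_cast hR.k_le_n hK
  have hk0' : 0 < k := by exact_mod_cast hk0
  have hζm : ζ ≤ m := by
    have : (ζ : ℝ) ≤ m := by linarith [hR.k_le_m hK]
    exact_mod_cast this
  obtain ⟨a, b, hFa, hFb, hW⟩ := exists_maps (X := Fin m) (V := Fin n) hk0'
    (by simpa using hkm) (by simpa using hkn) (μ := 0.02) (F := F) (by norm_num)
    (by simpa only [Fintype.card_fin] using hR.fibre_tail_le hK hF)
  refine exists_cliqueFree_of_maps (C := C) (d := d) (J := J)
    (q := F * (ζ + ζ ^ 2 * C)) (p := p) (l := 4) (h := L / 2 - L / 2000) (L := L)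
    (B := 0.505 * (k * L)) (μ := 1 / F)
    (l₀ := 1 / (F * Λ)) (l₁ := 0.02) (l₂ := 1) (l₃ := 20000) hk0'
    (fun x => by exact_mod_cast hFa x) (fun x => by exact_mod_cast hFb x) hW
    (hR.low_pairs_bound hK hε0 hKε hF'' hΛ2k (by linarith) hM₀' hM)
    (hR.centres_bound hK hC' hF'' hζ hζ' hΛk) (by simpa using hζm) le_rfl le_rfl
    (by
      push_cast
      exact hR.fibre_mul_degree_le hK hp hF'' (by linarith))
    (hR.p_nonneg hK hp) (hR.p_le_one hK hp) (by norm_num) (by positivity) (by norm_num)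
    (by norm_num) (by norm_num) ?_ ?_ (hR.p_le_exp hK hp) (by linarith) (by linarith) ?_
    (hR.p_mul_const_ge hK hp) (hR.exponent_bound hK hp hj' hj₂' ?_) ?_ ?_ ?_ ?_ ?_ ?_ ?_
  · exact le_of_eq (by field_simp)
  · exact le_of_eq (by field_simp)
  · simpa only [Fintype.card_fin] using hR.exp_le_m_div_k hK
  · push_cast
    exact hR.exceptional_bound hK hC' hF'' hζ'
  · simpa only [Fintype.card_fin] using hR.main_term_le hK hζ'
  · simpa only [Fintype.card_fin] using hR.codegree_tail_le hK hp hC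
  · simpa only [Fintype.card_fin] using hR.degree_tail_le hK hp hd
  · simpa only [Fintype.card_fin] using hR.packing_tail_le hK hp hj''
  · simpa only [Fintype.card_fin] using hR.edges_tail_le hK hp hJ
  · simpa only [Fintype.card_fin] using
      hR.spread_tail_le hK hp hε0 hKε hF hF'' hΛ0 hΛ2k hM₀
  · simpa only [Fintype.card_fin] using
      hR.low_tail_le hK hp hε hj₂ (by linarith)

end Conclusion

/-- **Main technical theorem (Theorem 3.1 of the paper).**
For every `δ ∈ (0, 1/8)` and all sufficiently large `n` there is a triangle-free graph
on `n` vertices whose independence number is less than `(1+δ)·√((3/2)·n·log n)`. -/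
theorem triangle_free_with_small_independence_number :
    ∀ δ : ℝ, 0 < δ → δ < 1 / 8 →
      ∃ n₀ : ℕ, ∀ n : ℕ, n₀ ≤ n →
        ∃ G : SimpleGraph (Fin n),
          G.CliqueFree 3 ∧
          ∀ s : Finset (Fin n),
            (∀ x ∈ s, ∀ y ∈ s, x ≠ y → ¬ G.Adj x y) →
            (s.card : ℝ) < (1 + δ) * Real.sqrt ((3 / 2) * n * Real.log n) := by
  intro δ hδ _
  obtain ⟨ε, hε⟩ : ∃ ε : ℝ, Real.exp 20000 * ε = 1 / 4 :=
    ⟨1 / 4 / Real.exp 20000, mul_div_cancel₀ _ (Real.exp_ne_zero _)⟩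
  have hε0 : 0 < ε := pos_of_mul_pos_right (hε ▸ by norm_num) (Real.exp_nonneg 20000)
  obtain ⟨K, hK, hKε⟩ : ∃ K : ℝ, 10 ^ 10 ≤ K ∧ 10 ^ 10 / ε ≤ K :=
    ⟨max _ _, le_max_left _ _, le_max_right _ _⟩
  obtain ⟨n₀, hn₀⟩ := Filter.eventually_atTop.1
    (AsymptoticRegime.eventually (K := K) (by linarith))
  refine ⟨n₀, fun n hn => ?_⟩
  have hR := hn₀ n hn
  obtain ⟨G, hG, hind⟩ := hR.exists_cliqueFree hK ((div_le_iff₀ hε0).1 hKε) hε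
  refine ⟨G, hG, fun s hs => ?_⟩
  have hlt : s.card < ⌈Real.sqrt (3 / 2 * n * Real.log n)⌉₊ := by
    by_contra! hle
    obtain ⟨I, hIs, hI⟩ := Finset.exists_subset_card_eq hle
    exact hind I hI fun u hu v hv => hs u (hIs hu) v (hIs hv)
  have hlt' := Nat.lt_ceil.1 hlt
  nlinarith [Real.sqrt_nonneg (3 / 2 * n * Real.log n)]
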